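/- arXiv:2002.00465 — 6 statements merged into one kernel-verified Lean document; each statement's English description precedes it below -/
import Mathlib

section
/- Let β,γ > -1 with max{β,γ} ≥ -1/2, let q ≥ 2, and let (c_n)_{n≥1} be a real sequence with Ω_q(c) := (Σ_{n=1}^∞ |c_n|^q·n^{(max{β,γ}+3/2)(q-2)})^{1/q} < ∞. Then the series Σ_{n=1}^∞ c_n·p_n^{(β,γ)} converges in L_q(I,ω) to some function f ∈ L_q(I,ω), and there exists a constant C, depending only on β, γ, q, a, b and not on (c_n), such that ‖f‖_{L_q(I,ω)} ≤ C·Ω_q(c). -/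
open Real MeasureTheory Set Filter

/-- Normalizing factor `δ'_n(β,γ)` for the orthonormal Jacobi polynomials. -/
noncomputable def jacobiDelta (β γ : ℝ) (n : ℕ) : ℝ :=
  Real.sqrt ((β + γ + 2 * n + 1) * Real.Gamma (β + γ + n + 1) /
    (n.factorial * Real.Gamma (β + n + 1) * Real.Gamma (γ + n + 1)))

/-- The orthonormal Jacobi polynomial `p_n^{(β,γ)}` on `(a,b)`. -/
noncomputable def jacobiP (a b β γ : ℝ) (n : ℕ) (x : ℝ) : ℝ :=
  (-1 : ℝ) ^ n * (b - a) ^ (-(n : ℝ) - (β + γ + 1) / 2) * jacobiDelta β γ n *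
    (x - a) ^ (-β) * (b - x) ^ (-γ) *
    iteratedDeriv n (fun t : ℝ => (t - a) ^ (β + n) * (b - t) ^ (γ + n)) x

/-- Generalized binomial coefficient `binom(x, j) = Γ(x+1)/(j!·Γ(x-j+1))`. -/
noncomputable def genBinom (x : ℝ) (j : ℕ) : ℝ :=
  Real.Gamma (x + 1) / (j.factorial * Real.Gamma (x - j + 1))

/-- The coefficient `C̃_n^k(β,γ)`. -/
noncomputable def Ctilde (β γ : ℝ) (n k : ℕ) : ℝ :=
  ∑ i ∈ Finset.range (k + 1),
    (n.choose i : ℝ) * genBinom ((n : ℝ) + β) (n - i) * genBinom ((n : ℝ) + γ) i *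
      (k.choose i : ℝ) * genBinom ((n : ℝ) - i) (k - i) * (i.factorial : ℝ)

/-- The Euler Beta function `B(x,y) = Γ(x)Γ(y)/Γ(x+y)`. -/
noncomputable def betaB (x y : ℝ) : ℝ := Real.Gamma x * Real.Gamma y / Real.Gamma (x + y)

/-- The matrix coefficients `A^{α,β,γ}_{mn}`. -/
noncomputable def Acoef (α β γ : ℝ) (m n : ℕ) : ℝ :=
  jacobiDelta β γ m * jacobiDelta β γ n *
    ∑ k ∈ Finset.range (n + 1),
      (-1 : ℝ) ^ k * Ctilde β γ n k * betaB (α + β + k + 1) (γ + m + 1) /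
        Real.Gamma ((k : ℝ) + α - m + 1)

/-- The coefficient `c_n = δ'_n·n!·Γ(n+β+1)·Γ(n+γ+1)/4^n`. -/
noncomputable def cCoef (β γ : ℝ) (n : ℕ) : ℝ :=
  jacobiDelta β γ n * n.factorial * Real.Gamma (n + β + 1) * Real.Gamma (n + γ + 1) / 4 ^ n

/-- The weighted `L_p` norm `‖f‖_{L_p(I,ω)}` with `ω(x) = (x-a)^β (b-x)^γ`, `I = (a,b)`. -/
noncomputable def wnorm (a b β γ p : ℝ) (f : ℝ → ℝ) : ℝ :=
  (∫ x in Set.Ioo a b, |f x| ^ p * ((x - a) ^ β * (b - x) ^ γ)) ^ (1 / p)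

/-- Membership in the weighted Lebesgue space `L_p(I,ω)`. -/
def MemWLp (a b β γ p : ℝ) (f : ℝ → ℝ) : Prop :=
  MeasurableSet (Set.Ioo a b) ∧
    IntegrableOn (fun x : ℝ => |f x| ^ p * ((x - a) ^ β * (b - x) ^ γ)) (Set.Ioo a b)

/-- The right-sided Riemann–Liouville fractional integral `I^μ_{b-}`. -/
noncomputable def fracIntR (b μ : ℝ) (f : ℝ → ℝ) (x : ℝ) : ℝ :=
  (1 / Real.Gamma μ) * ∫ t in Set.Ioo x b, f t * (t - x) ^ (μ - 1)

/-- The left-sided Riemann–Liouville fractional integral `I^μ_{a+}`. -/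
noncomputable def fracIntL (a μ : ℝ) (f : ℝ → ℝ) (x : ℝ) : ℝ :=
  (1 / Real.Gamma μ) * ∫ t in Set.Ioo a x, f t * (x - t) ^ (μ - 1)

/-- The right-sided Riemann–Liouville fractional derivative `D^μ_{b-}`. -/
noncomputable def fracDerR (b μ : ℝ) (f : ℝ → ℝ) (x : ℝ) : ℝ :=
  - deriv (fun y : ℝ => fracIntR b (1 - μ) f y) x

/-- Jacobi coefficients `f_n` of a function `f`. -/
noncomputable def jacobiCoef (a b β γ : ℝ) (f : ℝ → ℝ) (n : ℕ) : ℝ :=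
  ∫ x in Set.Ioo a b, f x * jacobiP a b β γ n x * ((x - a) ^ β * (b - x) ^ γ)

/-- Partial sums `S_k f` of the Jacobi series of `f`. -/
noncomputable def jacobiPartial (a b β γ : ℝ) (f : ℝ → ℝ) (k : ℕ) (x : ℝ) : ℝ :=
  ∑ n ∈ Finset.range (k + 1), jacobiCoef a b β γ f n * jacobiP a b β γ n x

open Asymptotics



theorem sum_rpow_neg_le (p : ℝ) (hp0 : 0 < p) (hp1 : p ≤ 1) (n : ℕ) :
    ∑ k ∈ Finset.range n, ((k : ℝ) + 1) ^ (p - 1) ≤ (n : ℝ) ^ p / p := by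
  induction n with
  | zero => simp [Real.zero_rpow hp0.ne']
  | succ n ih =>
    rw [Finset.sum_range_succ]
    have hy : (0 : ℝ) < n + 1 := by positivity
    have key : (1 + (-1 / ((n : ℝ) + 1))) ^ p ≤ 1 + p * (-1 / ((n : ℝ) + 1)) := by
      apply rpow_one_add_le_one_add_mul_self _ hp0.le hp1
      rw [le_div_iff₀ hy]; linarith [(Nat.cast_nonneg n : (0 : ℝ) ≤ n)]
    have e : (n : ℝ) ^ p = ((n : ℝ) + 1) ^ p * (1 + (-1 / ((n : ℝ) + 1))) ^ p := by
      rw [← Real.mul_rpow hy.le]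
      · congr 1; field_simp; ring
      · have : (1 + (-1 / ((n : ℝ) + 1))) = n / (n + 1) := by field_simp; ring
        rw [this]; positivity
    have h2 : (n : ℝ) ^ p ≤ ((n : ℝ) + 1) ^ p - p * ((n : ℝ) + 1) ^ (p - 1) := by
      rw [e, Real.rpow_sub_one hy.ne']
      calc _ ≤ ((n : ℝ) + 1) ^ p * (1 + p * (-1 / ((n : ℝ) + 1))) := by gcongr
        _ = _ := by field_simp; ring
    push_cast
    calc _ ≤ (n : ℝ) ^ p / p + ((n : ℝ) + 1) ^ (p - 1) := by gcongr
      _ ≤ (((n : ℝ) + 1) ^ p - p * ((n : ℝ) + 1) ^ (p - 1)) / p + ((n : ℝ) + 1) ^ (p - 1) := by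
        gcongr
      _ = _ := by field_simp; ring

theorem inv_sqrt_step (x : ℝ) (hx : 1 ≤ x) :
    x ^ (-(3 : ℝ) / 2) ≤ 4 * (x ^ (-(1 : ℝ) / 2) - (x + 1) ^ (-(1 : ℝ) / 2)) := by
  have e1 : x ^ (-(3 : ℝ) / 2) = (√x)⁻¹ / x := by
    rw [Real.sqrt_eq_rpow, ← Real.rpow_neg (by linarith), ← Real.rpow_sub_one (by linarith)]
    norm_num
  have e2 : ∀ y : ℝ, 0 ≤ y → y ^ (-(1 : ℝ) / 2) = (√y)⁻¹ := by
    intro y hy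
    rw [Real.sqrt_eq_rpow, ← Real.rpow_neg hy]; norm_num
  rw [e1, e2 x (by linarith), e2 (x + 1) (by linarith)]
  set s := √x with hs
  set t := √(x + 1) with ht
  have hs2 : s ^ 2 = x := Real.sq_sqrt (by linarith)
  have ht2 : t ^ 2 = x + 1 := Real.sq_sqrt (by linarith)
  have hs0 : 0 < s := Real.sqrt_pos.2 (by linarith)
  have ht0 : 0 < t := Real.sqrt_pos.2 (by linarith)
  have h1 : t ≤ 3 / 2 * s := by
    apply le_of_sq_le_sq _ (by positivity)
    nlinarith
  have h2 : (t - s) * (t + s) = 1 := by nlinarith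
  rw [← hs2]
  have : 4 * (s⁻¹ - t⁻¹) - s⁻¹ / s ^ 2 = (4 * s ^ 2 * (t - s) - t) / (t * s ^ 3) := by
    field_simp
  have h3 : 0 ≤ 4 * s ^ 2 * (t - s) - t := by
    have h4 : (4 * s ^ 2 * (t - s) - t) * (t + s) = 4 * s ^ 2 - t * (t + s) := by
      linear_combination 4 * s ^ 2 * h2
    by_contra hneg
    push Not at hneg
    have : (4 * s ^ 2 * (t - s) - t) * (t + s) < 0 := mul_neg_of_neg_of_pos hneg (by positivity)
    nlinarith
  have h5 : 0 ≤ (4 * s ^ 2 * (t - s) - t) / (t * s ^ 3) := by positivity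
  linarith

theorem sum_tail_le (k N : ℕ) (hk : k ≤ N) :
    ∑ n ∈ Finset.Ico k N, ((n : ℝ) + 1) ^ (-(3 : ℝ) / 2) ≤ 4 * ((k : ℝ) + 1) ^ (-(1 : ℝ) / 2) := by
  have : ∑ n ∈ Finset.Ico k N, ((n : ℝ) + 1) ^ (-(3 : ℝ) / 2) ≤
      4 * (((k : ℝ) + 1) ^ (-(1 : ℝ) / 2) - ((N : ℝ) + 1) ^ (-(1 : ℝ) / 2)) := by
    induction N, hk using Nat.le_induction with
    | base => simp
    | succ N hN ih =>
      rw [Finset.sum_Ico_succ_top hN]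
      have := inv_sqrt_step ((N : ℝ) + 1) (by linarith [(Nat.cast_nonneg N : (0 : ℝ) ≤ N)])
      push_cast
      linarith
  have h2 : 0 ≤ ((N : ℝ) + 1) ^ (-(1 : ℝ) / 2) := by positivity
  linarith

theorem hardy_pt (q : ℝ) (hq : 2 ≤ q) : ∃ A : ℝ, 0 < A ∧ ∀ (x : ℕ → ℝ), (∀ k, 0 ≤ x k) → ∀ n : ℕ,
    (∑ k ∈ Finset.range (n + 1), x k) ^ q ≤
      A * ((n : ℝ) + 1) ^ ((1 : ℝ) / 2) *
        ∑ k ∈ Finset.range (n + 1), x k ^ q * ((k : ℝ) + 1) ^ (q - 3 / 2) := by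
  have hq0 : 0 < q := by linarith
  have hq1 : 0 < q - 1 := by linarith
  refine ⟨(2 * (q - 1)) ^ (q - 1), by positivity, ?_⟩
  intro x hx n
  have hpq : q.HolderConjugate (q / (q - 1)) := Real.HolderConjugate.conjExponent (by linarith)
  have H := Real.inner_le_Lp_mul_Lq_of_nonneg (Finset.range (n + 1)) hpq
    (f := fun k => x k * ((k : ℝ) + 1) ^ (1 - 3 / (2 * q)))
    (g := fun k => ((k : ℝ) + 1) ^ (-(1 - 3 / (2 * q))))
    (fun i _ => mul_nonneg (hx i) (by positivity)) (fun i _ => by positivity)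
  have e0 : ∑ k ∈ Finset.range (n + 1), (x k * ((k : ℝ) + 1) ^ (1 - 3 / (2 * q))) *
      ((k : ℝ) + 1) ^ (-(1 - 3 / (2 * q))) = ∑ k ∈ Finset.range (n + 1), x k := by
    refine Finset.sum_congr rfl fun k _ => ?_
    rw [mul_assoc, ← Real.rpow_add (by positivity)]; simp
  have e1 : ∑ k ∈ Finset.range (n + 1), (x k * ((k : ℝ) + 1) ^ (1 - 3 / (2 * q))) ^ q =
      ∑ k ∈ Finset.range (n + 1), x k ^ q * ((k : ℝ) + 1) ^ (q - 3 / 2) := by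
    refine Finset.sum_congr rfl fun k _ => ?_
    rw [Real.mul_rpow (hx k) (by positivity), ← Real.rpow_mul (by positivity)]
    congr 2; field_simp
  have e2 : ∑ k ∈ Finset.range (n + 1), (((k : ℝ) + 1) ^ (-(1 - 3 / (2 * q)))) ^ (q / (q - 1)) =
      ∑ k ∈ Finset.range (n + 1), ((k : ℝ) + 1) ^ (1 / (2 * (q - 1)) - 1) := by
    refine Finset.sum_congr rfl fun k _ => ?_
    rw [← Real.rpow_mul (by positivity)]
    congr 1; field_simp; ring
  rw [e0, e1, e2] at H
  set S := ∑ k ∈ Finset.range (n + 1), x k ^ q * ((k : ℝ) + 1) ^ (q - 3 / 2) with hS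
  have hS0 : 0 ≤ S := Finset.sum_nonneg fun k _ => mul_nonneg (Real.rpow_nonneg (hx k) _) (by positivity)
  have hT := sum_rpow_neg_le (1 / (2 * (q - 1))) (by positivity)
    (by rw [div_le_one (by positivity)]; linarith) (n + 1)
  set T := ∑ k ∈ Finset.range (n + 1), ((k : ℝ) + 1) ^ (1 / (2 * (q - 1)) - 1) with hT'
  have hT0 : 0 ≤ T := Finset.sum_nonneg fun k _ => by positivity
  calc (∑ k ∈ Finset.range (n + 1), x k) ^ q
      ≤ (S ^ (1 / q) * T ^ (1 / (q / (q - 1)))) ^ q :=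
        Real.rpow_le_rpow (Finset.sum_nonneg fun k _ => hx k) H hq0.le
    _ = S * T ^ (q - 1) := by
        rw [Real.mul_rpow (by positivity) (by positivity), ← Real.rpow_mul hS0, ← Real.rpow_mul hT0]
        congr 1
        · rw [one_div_mul_cancel hq0.ne', Real.rpow_one]
        · congr 1; field_simp
    _ ≤ S * ((2 * (q - 1)) ^ (q - 1) * ((n : ℝ) + 1) ^ ((1 : ℝ) / 2)) := by
        gcongr
        calc T ^ (q - 1) ≤ ((((n + 1 : ℕ)) : ℝ) ^ (1 / (2 * (q - 1))) / (1 / (2 * (q - 1)))) ^ (q - 1) :=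
              Real.rpow_le_rpow hT0 hT hq1.le
          _ = (2 * (q - 1)) ^ (q - 1) * ((n : ℝ) + 1) ^ ((1 : ℝ) / 2) := by
              rw [div_eq_mul_inv, Real.mul_rpow (by positivity) (by positivity),
                ← Real.rpow_mul (by positivity), mul_comm]
              push_cast
              congr 2
              · simp
              · field_simp
    _ = _ := by ring

theorem hardy (q s : ℝ) (hq : 2 ≤ q) (hs : 2 ≤ s) : ∃ A : ℝ, 0 < A ∧ ∀ (x : ℕ → ℝ),
    (∀ k, 0 ≤ x k) → ∀ N : ℕ,
    ∑ n ∈ Finset.range N, (∑ k ∈ Finset.range (n + 1), x k) ^ q * ((n : ℝ) + 1) ^ (-s) ≤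
      A * ∑ k ∈ Finset.range N, x k ^ q * ((k : ℝ) + 1) ^ (q - s) := by
  obtain ⟨A, hA, H⟩ := hardy_pt q hq
  refine ⟨A * 4, by positivity, ?_⟩
  intro x hx N
  calc ∑ n ∈ Finset.range N, (∑ k ∈ Finset.range (n + 1), x k) ^ q * ((n : ℝ) + 1) ^ (-s)
      ≤ ∑ n ∈ Finset.range N, ∑ k ∈ Finset.range (n + 1),
          A * (x k ^ q * ((k : ℝ) + 1) ^ (q - 3 / 2)) * (((k : ℝ) + 1) ^ (2 - s) *
            ((n : ℝ) + 1) ^ (-(3 : ℝ) / 2)) := by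
        refine Finset.sum_le_sum fun n _ => ?_
        calc _ ≤ (A * ((n : ℝ) + 1) ^ ((1 : ℝ) / 2) *
              ∑ k ∈ Finset.range (n + 1), x k ^ q * ((k : ℝ) + 1) ^ (q - 3 / 2)) *
                ((n : ℝ) + 1) ^ (-s) := by
              gcongr; exact H x hx n
          _ = ∑ k ∈ Finset.range (n + 1), A * (x k ^ q * ((k : ℝ) + 1) ^ (q - 3 / 2)) *
              (((n : ℝ) + 1) ^ (2 - s) * ((n : ℝ) + 1) ^ (-(3 : ℝ) / 2)) := by
              rw [← Finset.sum_mul, ← Finset.mul_sum, ← Real.rpow_add (by positivity)]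
              have : ((n : ℝ) + 1) ^ (2 - s + -(3 : ℝ) / 2) =
                  ((n : ℝ) + 1) ^ ((1 : ℝ) / 2) * ((n : ℝ) + 1) ^ (-s) := by
                rw [← Real.rpow_add (by positivity)]; congr 1; ring
              rw [this]; ring
          _ ≤ _ := by
              refine Finset.sum_le_sum fun k hk => ?_
              have hk' : k ≤ n := Nat.lt_succ_iff.1 (Finset.mem_range.1 hk)
              have h1 : ((n : ℝ) + 1) ^ (2 - s) ≤ ((k : ℝ) + 1) ^ (2 - s) := by
                apply Real.rpow_le_rpow_of_nonpos (by positivity) _ (by linarith)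
                have : (k : ℝ) ≤ n := by exact_mod_cast hk'
                linarith
              have h2 := Real.rpow_nonneg (hx k) q
              gcongr
    _ = ∑ k ∈ Finset.range N, ∑ n ∈ Finset.Ico k N,
          A * (x k ^ q * ((k : ℝ) + 1) ^ (q - 3 / 2)) * (((k : ℝ) + 1) ^ (2 - s) *
            ((n : ℝ) + 1) ^ (-(3 : ℝ) / 2)) := by
        simp only [Finset.range_eq_Ico]
        exact (Finset.sum_Ico_Ico_comm 0 N (fun k n =>
          A * (x k ^ q * ((k : ℝ) + 1) ^ (q - 3 / 2)) * (((k : ℝ) + 1) ^ (2 - s) *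
            ((n : ℝ) + 1) ^ (-(3 : ℝ) / 2)))).symm
    _ ≤ ∑ k ∈ Finset.range N, A * (x k ^ q * ((k : ℝ) + 1) ^ (q - 3 / 2)) *
          (((k : ℝ) + 1) ^ (2 - s) * (4 * ((k : ℝ) + 1) ^ (-(1 : ℝ) / 2))) := by
        refine Finset.sum_le_sum fun k hk => ?_
        rw [← Finset.mul_sum, ← Finset.mul_sum]
        have h2 := Real.rpow_nonneg (hx k) q
        have := sum_tail_le k N (Finset.mem_range.1 hk).le
        gcongr
    _ = _ := by
        rw [Finset.mul_sum]
        refine Finset.sum_congr rfl fun k _ => ?_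
        have : ((k : ℝ) + 1) ^ (q - s) = ((k : ℝ) + 1) ^ (q - 3 / 2) * ((k : ℝ) + 1) ^ (2 - s) *
            ((k : ℝ) + 1) ^ (-(1 : ℝ) / 2) := by
          rw [← Real.rpow_add (by positivity), ← Real.rpow_add (by positivity)]; congr 1; ring
        rw [this]; ring

/-- The Hardy–Young step. -/
theorem hardy_young (q M K : ℝ) (hq : 2 ≤ q) (hM : 0 ≤ M) (hK : 0 < K) :
    ∃ A : ℝ, 0 < A ∧ ∀ (c : ℕ → ℝ) (N : ℕ),
    ∑ n ∈ Finset.range N, c n ^ 2 *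
      (K * ∑ k ∈ Finset.range (n + 1), |c k| * ((k : ℝ) + 1) ^ M) ^ (q - 2) ≤
      A * ∑ k ∈ Finset.range N, |c k| ^ q * ((k : ℝ) + 1) ^ ((M + 1) * (q - 2)) := by
  obtain ⟨A, hA, H⟩ := hardy q (2 * (M + 1)) hq (by linarith)
  have hq0 : 0 < q := by linarith
  refine ⟨1 + K ^ q * A, by positivity, ?_⟩
  intro c N
  have hx : ∀ k : ℕ, 0 ≤ |c k| * ((k : ℝ) + 1) ^ M := fun k => by positivity
  have H1 := H (fun k => |c k| * ((k : ℝ) + 1) ^ M) hx N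
  have e1 : ∑ k ∈ Finset.range N, (|c k| * ((k : ℝ) + 1) ^ M) ^ q *
      ((k : ℝ) + 1) ^ (q - 2 * (M + 1)) =
      ∑ k ∈ Finset.range N, |c k| ^ q * ((k : ℝ) + 1) ^ ((M + 1) * (q - 2)) := by
    refine Finset.sum_congr rfl fun k _ => ?_
    rw [Real.mul_rpow (by positivity) (by positivity), ← Real.rpow_mul (by positivity), mul_assoc,
      ← Real.rpow_add (by positivity)]
    congr 2; ring
  rw [e1] at H1
  calc _ ≤ ∑ n ∈ Finset.range N, (|c n| ^ q * ((n : ℝ) + 1) ^ ((M + 1) * (q - 2)) +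
        K ^ q * ((∑ k ∈ Finset.range (n + 1), |c k| * ((k : ℝ) + 1) ^ M) ^ q *
          ((n : ℝ) + 1) ^ (-(2 * (M + 1))))) := by
        refine Finset.sum_le_sum fun n _ => ?_
        set F := ∑ k ∈ Finset.range (n + 1), |c k| * ((k : ℝ) + 1) ^ M
        have hF : 0 ≤ F := Finset.sum_nonneg fun k _ => hx k
        set X := |c n| * ((n : ℝ) + 1) ^ ((M + 1) * (q - 2) / q) with hX
        set Y := (K * F) * ((n : ℝ) + 1) ^ (-(2 * (M + 1)) / q) with hY
        have hX0 : 0 ≤ X := by positivity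
        have hY0 : 0 ≤ Y := by positivity
        have eX : X ^ q = |c n| ^ q * ((n : ℝ) + 1) ^ ((M + 1) * (q - 2)) := by
          rw [hX, Real.mul_rpow (by positivity) (by positivity), ← Real.rpow_mul (by positivity)]
          congr 2; field_simp
        have eY : Y ^ q = K ^ q * (F ^ q * ((n : ℝ) + 1) ^ (-(2 * (M + 1)))) := by
          rw [hY, Real.mul_rpow (by positivity) (by positivity), Real.mul_rpow hK.le hF,
            ← Real.rpow_mul (by positivity), mul_assoc]
          congr 3; field_simp
        have eXY : X ^ (2 : ℝ) * Y ^ (q - 2) = c n ^ 2 * (K * F) ^ (q - 2) := by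
          rw [hX, hY, Real.mul_rpow (by positivity) (by positivity),
            Real.mul_rpow (by positivity) (by positivity), ← Real.rpow_mul (by positivity),
            ← Real.rpow_mul (by positivity)]
          have : ((n : ℝ) + 1) ^ ((M + 1) * (q - 2) / q * 2) *
              ((n : ℝ) + 1) ^ (-(2 * (M + 1)) / q * (q - 2)) = 1 := by
            rw [← Real.rpow_add (by positivity)]
            have : (M + 1) * (q - 2) / q * 2 + -(2 * (M + 1)) / q * (q - 2) = 0 := by
              field_simp; ring
            rw [this, Real.rpow_zero]
          have h2 : |c n| ^ (2 : ℝ) = c n ^ 2 := by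
            rw [Real.rpow_two, sq_abs]
          rw [h2]
          linear_combination c n ^ 2 * (K * F) ^ (q - 2) * this
        rw [← eX, ← eY, ← eXY]
        have hXq : 0 ≤ X ^ q := by positivity
        have hYq : 0 ≤ Y ^ q := by positivity
        have key : ∀ Z : ℝ, 0 ≤ Z → X ≤ Z → Y ≤ Z → X ^ (2 : ℝ) * Y ^ (q - 2) ≤ Z ^ q := by
          intro Z hZ h1 h2
          calc X ^ (2 : ℝ) * Y ^ (q - 2) ≤ Z ^ (2 : ℝ) * Z ^ (q - 2) := by
                apply mul_le_mul (Real.rpow_le_rpow hX0 h1 (by norm_num))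
                  (Real.rpow_le_rpow hY0 h2 (by linarith)) (by positivity) (by positivity)
            _ = Z ^ q := by
                rw [← Real.rpow_add_of_nonneg hZ (by norm_num) (by linarith)]
                congr 1; ring
        rcases le_total X Y with h | h
        · linarith [key Y hY0 h le_rfl]
        · linarith [key X hX0 le_rfl h]
    _ ≤ _ := by
        rw [Finset.sum_add_distrib, ← Finset.mul_sum]
        have := mul_le_mul_of_nonneg_left H1 (by positivity : 0 ≤ K ^ q)
        linarith

/-- pointwise inequality -/
theorem pointwise_ineq (q : ℝ) (hq : 2 ≤ q) (S G D : ℕ → ℝ) (N : ℕ) (hS0 : S 0 = 0)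
    (hSG : ∀ k, |S (k + 1)| ≤ G k)
    (hD : ∀ m, ∑ k ∈ Finset.range (m + 1), D k = G m ^ (q - 2)) (hD0 : ∀ k, 0 ≤ D k) :
    |S N| ^ q ≤ 2 ^ q * ∑ k ∈ Finset.range N, D k * (S N - S k) ^ 2 := by
  rcases Nat.eq_zero_or_pos N with rfl | hN
  · simp [hS0, Real.zero_rpow (by linarith : q ≠ 0)]
  have hGn : ∀ k, 0 ≤ G k := fun k => (abs_nonneg _).trans (hSG k)
  have hex : ∃ m, |S N| ≤ 2 * G m := ⟨N - 1, by
    have := hSG (N - 1)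
    rw [Nat.sub_add_cancel hN] at this
    linarith [hGn (N - 1)]⟩
  classical
  set m := Nat.find hex with hm
  have hm1 : |S N| ≤ 2 * G m := Nat.find_spec hex
  have hm2 : m + 1 ≤ N := by
    have : m ≤ N - 1 := Nat.find_min' hex (by
      have := hSG (N - 1)
      rw [Nat.sub_add_cancel hN] at this
      linarith [hGn (N - 1)])
    omega
  have hk : ∀ k, k ≤ m → (|S N| / 2) ^ 2 ≤ (S N - S k) ^ 2 := by
    intro k hk
    have h1 : |S k| ≤ |S N| / 2 := by
      rcases k with _ | k
      · rw [hS0, abs_zero]; positivity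
      · have h3 := Nat.find_min hex (m := k) (by omega)
        linarith [hSG k]
    rw [← sq_abs (S N - S k)]
    have := abs_sub_abs_le_abs_sub (S N) (S k)
    have h0 := abs_nonneg (S N)
    gcongr
    linarith
  have h2 : G m ^ (q - 2) * (|S N| / 2) ^ 2 ≤ ∑ k ∈ Finset.range N, D k * (S N - S k) ^ 2 := by
    rw [← hD m, Finset.sum_mul]
    calc _ ≤ ∑ k ∈ Finset.range (m + 1), D k * (S N - S k) ^ 2 := by
          refine Finset.sum_le_sum fun k hk' => ?_
          exact mul_le_mul_of_nonneg_left (hk k (Nat.lt_succ_iff.1 (Finset.mem_range.1 hk'))) (hD0 k)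
      _ ≤ _ := by
          apply Finset.sum_le_sum_of_subset_of_nonneg
          · exact Finset.range_subset_range.2 hm2
          · intro k _ _; exact mul_nonneg (hD0 k) (sq_nonneg _)
  have h3 : |S N| ^ q = 2 ^ q * ((|S N| / 2) ^ (q - 2) * (|S N| / 2) ^ 2) := by
    rw [← Real.rpow_two, ← Real.rpow_add_of_nonneg (by positivity) (by linarith) (by norm_num),
      sub_add_cancel, ← Real.mul_rpow (by positivity) (by positivity)]
    congr 1; ring
  rw [h3]
  have h4 : (|S N| / 2) ^ (q - 2) ≤ G m ^ (q - 2) :=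
    Real.rpow_le_rpow (by positivity) (by linarith) (by linarith)
  calc _ ≤ 2 ^ q * (G m ^ (q - 2) * (|S N| / 2) ^ 2) := by gcongr
    _ ≤ _ := by gcongr

theorem core_ineq {X : Type*} [MeasurableSpace X] (μ : Measure X) [IsFiniteMeasure μ]
    (φ : ℕ → X → ℝ) (hφ : ∀ n, AEStronglyMeasurable (φ n) μ) (K M q : ℝ) (hK : 0 < K) (hM : 0 ≤ M)
    (hq : 2 ≤ q) (hb : ∀ n, ∀ᵐ x ∂μ, |φ n x| ≤ K * ((n : ℝ) + 1) ^ M)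
    (horth : ∀ m n, ∫ x, φ m x * φ n x ∂μ = if m = n then 1 else 0) :
    ∃ A : ℝ, 0 < A ∧ ∀ (c : ℕ → ℝ) (N : ℕ),
      ∫ x, |∑ n ∈ Finset.range N, c n * φ n x| ^ q ∂μ ≤
        A * ∑ n ∈ Finset.range N, |c n| ^ q * ((n : ℝ) + 1) ^ ((M + 1) * (q - 2)) := by
  obtain ⟨A, hA, H⟩ := hardy_young q M K hq hM hK
  refine ⟨2 ^ q * A, by positivity, ?_⟩
  intro c N
  set G : ℕ → ℝ := fun n => K * ∑ k ∈ Finset.range (n + 1), |c k| * ((k : ℝ) + 1) ^ M with hG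
  have hGmono : Monotone G := by
    apply monotone_nat_of_le_succ
    intro n
    simp only [hG]
    rw [Finset.sum_range_succ _ (n + 1)]
    gcongr
    have : 0 ≤ |c (n + 1)| * (((n + 1 : ℕ) : ℝ) + 1) ^ M := by positivity
    linarith
  have hG0 : ∀ n, 0 ≤ G n := fun n =>
    mul_nonneg hK.le (Finset.sum_nonneg fun k _ => by positivity)
  set D : ℕ → ℝ := fun n => Nat.casesOn n (G 0 ^ (q - 2))
    (fun k => G (k + 1) ^ (q - 2) - G k ^ (q - 2)) with hD
  have hDs : ∀ m, ∑ k ∈ Finset.range (m + 1), D k = G m ^ (q - 2) := by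
    intro m
    induction m with
    | zero => simp [hD]
    | succ m ih => rw [Finset.sum_range_succ, ih]; simp [hD]
  have hD0 : ∀ k, 0 ≤ D k := by
    intro k
    rcases k with _ | k
    · exact Real.rpow_nonneg (hG0 0) _
    · simp only [hD, sub_nonneg]
      exact Real.rpow_le_rpow (hG0 k) (hGmono (Nat.le_succ k)) (by linarith)
  have hprod : ∀ m n, Integrable (fun x => φ m x * φ n x) μ := by
    intro m n
    refine Integrable.of_bound ((hφ m).mul (hφ n))
      ((K * ((m : ℝ) + 1) ^ M) * (K * ((n : ℝ) + 1) ^ M)) ?_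
    filter_upwards [hb m, hb n] with x h1 h2
    rw [norm_mul]
    exact mul_le_mul h1 h2 (norm_nonneg _) (by positivity)
  have hsq : ∀ k, (fun x => (∑ n ∈ Finset.Ico k N, c n * φ n x) ^ 2) =
      fun x => ∑ i ∈ Finset.Ico k N, ∑ j ∈ Finset.Ico k N, (c i * c j) * (φ i x * φ j x) := by
    intro k
    funext x
    rw [sq, Finset.sum_mul_sum]
    refine Finset.sum_congr rfl fun i _ => Finset.sum_congr rfl fun j _ => by ring
  have hsqi : ∀ k, Integrable (fun x => (∑ n ∈ Finset.Ico k N, c n * φ n x) ^ 2) μ := by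
    intro k
    rw [hsq]
    exact integrable_finsetSum _ fun i _ => integrable_finsetSum _ fun j _ => (hprod i j).const_mul _
  have hsqI : ∀ k, ∫ x, (∑ n ∈ Finset.Ico k N, c n * φ n x) ^ 2 ∂μ =
      ∑ n ∈ Finset.Ico k N, c n ^ 2 := by
    intro k
    rw [hsq, integral_finsetSum _ fun i _ => integrable_finsetSum _ fun j _ => (hprod i j).const_mul _]
    refine Finset.sum_congr rfl fun i hi => ?_
    rw [integral_finsetSum _ fun j _ => (hprod i j).const_mul _]
    simp_rw [integral_const_mul, horth]
    simp only [mul_ite, mul_one, mul_zero]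
    rw [Finset.sum_ite_eq, if_pos hi]; ring
  have hpt : ∀ᵐ x ∂μ, |∑ n ∈ Finset.range N, c n * φ n x| ^ q ≤
      2 ^ q * ∑ k ∈ Finset.range N, D k * (∑ n ∈ Finset.Ico k N, c n * φ n x) ^ 2 := by
    filter_upwards [ae_all_iff.2 hb] with x hx
    have := pointwise_ineq q hq (fun k => ∑ n ∈ Finset.range k, c n * φ n x) G D N (by simp) ?_ hDs hD0
    · refine this.trans_eq ?_
      congr 1
      refine Finset.sum_congr rfl fun k hk => ?_
      rw [Finset.sum_Ico_eq_sub _ (Finset.mem_range.1 hk).le]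
    · intro k
      simp only [hG]
      refine (Finset.abs_sum_le_sum_abs _ _).trans ?_
      rw [Finset.mul_sum]
      refine Finset.sum_le_sum fun i _ => ?_
      rw [abs_mul]
      have := mul_le_mul_of_nonneg_left (hx i) (abs_nonneg (c i))
      linarith
  have hint : Integrable (fun x => 2 ^ q * ∑ k ∈ Finset.range N,
      D k * (∑ n ∈ Finset.Ico k N, c n * φ n x) ^ 2) μ :=
    (integrable_finsetSum _ fun k _ => (hsqi k).const_mul _).const_mul _
  calc _ ≤ ∫ x, 2 ^ q * ∑ k ∈ Finset.range N,
      D k * (∑ n ∈ Finset.Ico k N, c n * φ n x) ^ 2 ∂μ :=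
        integral_mono_of_nonneg (Eventually.of_forall fun x => by positivity) hint hpt
    _ = 2 ^ q * ∑ k ∈ Finset.range N, ∑ n ∈ Finset.Ico k N, D k * c n ^ 2 := by
        rw [integral_const_mul, integral_finsetSum _ fun k _ => (hsqi k).const_mul _]
        simp_rw [integral_const_mul, hsqI, Finset.mul_sum]
    _ = 2 ^ q * ∑ n ∈ Finset.range N, c n ^ 2 * G n ^ (q - 2) := by
        congr 1
        have := Finset.sum_Ico_Ico_comm 0 N (fun k n => D k * c n ^ 2)
        simp only [Finset.range_eq_Ico]
        rw [this]
        refine Finset.sum_congr rfl fun n _ => ?_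
        rw [← Finset.sum_mul, ← Finset.range_eq_Ico, hDs, mul_comm]
    _ ≤ _ := by
        rw [mul_assoc]
        have := H c N
        gcongr

theorem abstract_conv {X : Type*} [MeasurableSpace X] (μ : Measure X) [IsFiniteMeasure μ]
    (φ : ℕ → X → ℝ) (hφ : ∀ n, AEStronglyMeasurable (φ n) μ) (K M q : ℝ) (hK : 0 < K) (hM : 0 ≤ M)
    (hq : 2 ≤ q) (hb : ∀ n, ∀ᵐ x ∂μ, |φ n x| ≤ K * ((n : ℝ) + 1) ^ M)
    (horth : ∀ m n, ∫ x, φ m x * φ n x ∂μ = if m = n then 1 else 0) :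
    ∃ C : ℝ, 0 < C ∧ ∀ (c : ℕ → ℝ),
      Summable (fun n : ℕ => |c n| ^ q * ((n : ℝ) + 1) ^ ((M + 1) * (q - 2))) →
      ∃ f : X → ℝ, Integrable (fun x => |f x| ^ q) μ ∧
        Tendsto (fun N : ℕ => (∫ x, |(∑ n ∈ Finset.range N, c n * φ n x) - f x| ^ q ∂μ) ^ (1 / q))
          atTop (nhds 0) ∧
        (∫ x, |f x| ^ q ∂μ) ^ (1 / q) ≤
          C * (∑' n : ℕ, |c n| ^ q * ((n : ℝ) + 1) ^ ((M + 1) * (q - 2))) ^ (1 / q) := by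
  obtain ⟨A, hA, H⟩ := core_ineq μ φ hφ K M q hK hM hq hb horth
  have hq0 : 0 < q := by linarith
  refine ⟨A ^ (1 / q), by positivity, ?_⟩
  intro c hc
  have hqr : (ENNReal.ofReal q).toReal = q := ENNReal.toReal_ofReal hq0.le
  have hqne : ENNReal.ofReal q ≠ 0 := by simp [hq0]
  have hqtop : ENNReal.ofReal q ≠ ⊤ := ENNReal.ofReal_ne_top
  haveI : Fact (1 ≤ ENNReal.ofReal q) := ⟨by rw [ENNReal.one_le_ofReal]; linarith⟩
  have hmem : ∀ n, MemLp (φ n) (ENNReal.ofReal q) μ := fun n =>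
    MemLp.of_bound (hφ n) (K * ((n : ℝ) + 1) ^ M) (hb n)
  set u : ℕ → Lp ℝ (ENNReal.ofReal q) μ := fun n => c n • (hmem n).toLp (φ n) with hu
  have hnorm : ∀ g : Lp ℝ (ENNReal.ofReal q) μ, ‖g‖ = (∫ x, |g x| ^ q ∂μ) ^ (1 / q) := by
    intro g
    rw [Lp.norm_def, (Lp.memLp g).eLpNorm_eq_integral_rpow_norm hqne hqtop, ENNReal.toReal_ofReal,
      hqr, one_div]
    · simp only [Real.norm_eq_abs]
    · positivity
  have hcoe : ∀ (d : ℕ → ℝ) (s : Finset ℕ), ∀ᵐ x ∂μ,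
      (∑ n ∈ s, d n • (hmem n).toLp (φ n) : Lp ℝ (ENNReal.ofReal q) μ) x = ∑ n ∈ s, d n * φ n x := by
    intro d s
    have h1 := Lp.coeFn_finsetSum (fun n => d n • (hmem n).toLp (φ n)) (s := s)
    have h2 : ∀ᵐ x ∂μ, ∀ n, (d n • (hmem n).toLp (φ n) : Lp ℝ (ENNReal.ofReal q) μ) x = d n * φ n x := by
      rw [ae_all_iff]
      intro n
      filter_upwards [Lp.coeFn_smul (d n) ((hmem n).toLp (φ n)), (hmem n).coeFn_toLp] with x h3 h4
      rw [h3, Pi.smul_apply, h4, smul_eq_mul]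
    filter_upwards [h1, h2] with x h3 h4
    rw [h3]
    simp only [Finset.sum_apply, h4]
  have hfin : ∀ s : Finset ℕ, ‖∑ n ∈ s, u n‖ ≤
      A ^ (1 / q) * (∑ n ∈ s, |c n| ^ q * ((n : ℝ) + 1) ^ ((M + 1) * (q - 2))) ^ (1 / q) := by
    intro s
    obtain ⟨N, hN⟩ := s.exists_nat_subset_range
    set d : ℕ → ℝ := fun n => if n ∈ s then c n else 0 with hd
    have h1 := H d N
    have e1 : ∀ x, ∑ n ∈ Finset.range N, d n * φ n x = ∑ n ∈ s, c n * φ n x := by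
      intro x
      simp only [hd, ite_mul, zero_mul]
      rw [Finset.sum_ite_mem, Finset.inter_eq_right.2 hN]
    have e2 : ∑ n ∈ Finset.range N, |d n| ^ q * ((n : ℝ) + 1) ^ ((M + 1) * (q - 2)) =
        ∑ n ∈ s, |c n| ^ q * ((n : ℝ) + 1) ^ ((M + 1) * (q - 2)) := by
      have : ∀ n, |d n| ^ q * ((n : ℝ) + 1) ^ ((M + 1) * (q - 2)) =
          if n ∈ s then |c n| ^ q * ((n : ℝ) + 1) ^ ((M + 1) * (q - 2)) else 0 := by
        intro n
        simp only [hd]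
        split_ifs
        · rfl
        · rw [abs_zero, Real.zero_rpow hq0.ne', zero_mul]
      simp_rw [this]
      rw [Finset.sum_ite_mem, Finset.inter_eq_right.2 hN]
    rw [e2] at h1
    simp_rw [e1] at h1
    rw [hnorm, ← Real.mul_rpow hA.le (Finset.sum_nonneg fun n _ => by positivity)]
    refine Real.rpow_le_rpow (integral_nonneg fun x => by positivity) ?_ (by positivity)
    refine le_trans (le_of_eq (integral_congr_ae ?_)) h1
    filter_upwards [hcoe c s] with x hx
    rw [hx]
  have hsum : Summable u := by
    rw [summable_iff_vanishing_norm]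
    intro ε hε
    rw [summable_iff_vanishing_norm] at hc
    obtain ⟨s, hs⟩ := hc ((ε / A ^ (1 / q)) ^ q) (by positivity)
    refine ⟨s, fun t ht => ?_⟩
    have h1 := hs t ht
    have h0 : 0 ≤ ∑ n ∈ t, |c n| ^ q * ((n : ℝ) + 1) ^ ((M + 1) * (q - 2)) :=
      Finset.sum_nonneg fun n _ => by positivity
    rw [Real.norm_of_nonneg h0] at h1
    have h2 := Real.rpow_lt_rpow h0 h1 (by positivity : 0 < 1 / q)
    rw [← Real.rpow_mul (by positivity), mul_one_div_cancel hq0.ne', Real.rpow_one,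
      lt_div_iff₀ (by positivity), mul_comm] at h2
    exact (hfin t).trans_lt h2
  obtain ⟨F, hF⟩ := hsum
  have hFt := hF.tendsto_sum_nat
  refine ⟨F, ?_, ?_, ?_⟩
  · have := (Lp.memLp F).integrable_norm_rpow hqne hqtop
    rw [hqr] at this
    simpa only [Real.norm_eq_abs] using this
  · have h1 := tendsto_iff_norm_sub_tendsto_zero.1 hFt
    refine h1.congr fun N => ?_
    rw [hnorm]
    congr 1
    apply integral_congr_ae
    filter_upwards [Lp.coeFn_sub (∑ n ∈ Finset.range N, u n) F, hcoe c (Finset.range N)] with x h2 h3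
    rw [h2, Pi.sub_apply, h3]
  · rw [← hnorm]
    refine le_of_tendsto hFt.norm (Eventually.of_forall fun N => (hfin _).trans ?_)
    gcongr
    exact hc.sum_le_tsum _ fun n _ => by positivity

/-- Two-sided comparison of `Γ(t+n+1)` with `n^t n!`. -/
def GammaCmp (t : ℝ) : Prop := ∃ c C : ℝ, 0 < c ∧ 0 < C ∧ ∀ n : ℕ, 1 ≤ n →
  c * ((n : ℝ) ^ t * n.factorial) ≤ Real.Gamma (t + n + 1) ∧
  Real.Gamma (t + n + 1) ≤ C * ((n : ℝ) ^ t * n.factorial)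

theorem gammaCmp_pos (t : ℝ) (ht : 0 < t) : GammaCmp t := by
  have hlim := Real.GammaSeq_tendsto_Gamma t
  have hG : 0 < Real.Gamma t := Real.Gamma_pos_of_pos ht
  have hprod : ∀ n : ℕ, 0 < ∏ j ∈ Finset.range (n + 1), (t + (j : ℝ)) := fun n =>
    Finset.prod_pos fun j _ => by positivity
  have hGam : ∀ n : ℕ, Real.Gamma (t + n + 1) =
      Real.Gamma t * ∏ j ∈ Finset.range (n + 1), (t + (j : ℝ)) := by
    intro n
    induction n with
    | zero => simp [Real.Gamma_add_one ht.ne', mul_comm]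
    | succ n ih =>
      rw [Finset.prod_range_succ, ← mul_assoc, ← ih]
      have : t + ((n + 1 : ℕ) : ℝ) + 1 = (t + n + 1) + 1 := by push_cast; ring
      rw [this, Real.Gamma_add_one (by positivity)]
      push_cast; ring
  have hinv : Tendsto (fun n => (Real.GammaSeq t n)⁻¹) atTop (nhds (Real.Gamma t)⁻¹) :=
    hlim.inv₀ hG.ne'
  obtain ⟨B1, hB1⟩ := hlim.bddAbove_range
  obtain ⟨B2, hB2⟩ := hinv.bddAbove_range
  have hpos : ∀ n : ℕ, 1 ≤ n → 0 < Real.GammaSeq t n := by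
    intro n hn
    have h0 : (0 : ℝ) < n := by exact_mod_cast hn
    unfold Real.GammaSeq
    have := hprod n
    positivity
  have e : ∀ n : ℕ, 1 ≤ n → Real.Gamma (t + n + 1) =
      Real.Gamma t * (Real.GammaSeq t n)⁻¹ * ((n : ℝ) ^ t * n.factorial) := by
    intro n hn
    have h0 : (0 : ℝ) < n := by exact_mod_cast hn
    rw [hGam]
    unfold Real.GammaSeq
    have := (hprod n).ne'
    have h2 := (Real.rpow_pos_of_pos h0 t).ne'
    field_simp
  have hB1p : 0 < B1 := (hpos 1 le_rfl).trans_le (hB1 ⟨1, rfl⟩)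
  have hB2p : 0 < B2 := (inv_pos.2 (hpos 1 le_rfl)).trans_le (hB2 ⟨1, rfl⟩)
  refine ⟨Real.Gamma t * B1⁻¹, Real.Gamma t * B2, by positivity, by positivity, fun n hn => ?_⟩
  rw [e n hn]
  have h1 : (Real.GammaSeq t n)⁻¹ ≤ B2 := hB2 ⟨n, rfl⟩
  have h2 : B1⁻¹ ≤ (Real.GammaSeq t n)⁻¹ := by
    have h3 : Real.GammaSeq t n ≤ B1 := hB1 ⟨n, rfl⟩
    exact inv_anti₀ (hpos n hn) h3
  constructor <;> gcongr

theorem gammaCmp_step (t : ℝ) (ht : -2 < t) (h : GammaCmp (t + 1)) : GammaCmp t := by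
  obtain ⟨c, C, hc, hC, H⟩ := h
  set m := min (t + 2) 1 with hm
  have hm0 : 0 < m := lt_min (by linarith) one_pos
  have hm1 : m ≤ 1 := min_le_right _ _
  have hm2 : m ≤ t + 2 := min_le_left _ _
  refine ⟨c / (|t| + 2), C / m, by positivity, by positivity, fun n hn => ?_⟩
  obtain ⟨H1, H2⟩ := H n hn
  have h1 : (1 : ℝ) ≤ n := by exact_mod_cast hn
  have h0 : (0 : ℝ) < n := by linarith
  have hlow : m * n ≤ t + n + 1 := by nlinarith
  have hup : t + n + 1 ≤ (|t| + 2) * n := by nlinarith [le_abs_self t, abs_nonneg t]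
  have hp : 0 < t + n + 1 := lt_of_lt_of_le (by positivity) hlow
  have e : Real.Gamma (t + 1 + n + 1) = (t + n + 1) * Real.Gamma (t + n + 1) := by
    rw [← Real.Gamma_add_one hp.ne']; congr 1; ring
  rw [e, Real.rpow_add_one h0.ne'] at H1 H2
  have hG := Real.Gamma_pos_of_pos hp
  set G := Real.Gamma (t + n + 1)
  have hr := Real.rpow_pos_of_pos h0 t
  have hf : (0 : ℝ) < n.factorial := by exact_mod_cast n.factorial_pos
  constructor
  · rw [div_mul_eq_mul_div, div_le_iff₀ (by positivity)]
    have : c * ((n : ℝ) ^ t * n * n.factorial) ≤ (|t| + 2) * n * G :=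
      H1.trans (by gcongr)
    have h3 : (n : ℝ) * (c * ((n : ℝ) ^ t * n.factorial)) ≤ n * (G * (|t| + 2)) := by linarith
    exact le_of_mul_le_mul_left h3 h0
  · rw [div_mul_eq_mul_div, le_div_iff₀ (by positivity)]
    have : m * n * G ≤ C * ((n : ℝ) ^ t * n * n.factorial) :=
      le_trans (by gcongr) H2
    have h3 : (n : ℝ) * (G * m) ≤ n * (C * ((n : ℝ) ^ t * n.factorial)) := by linarith
    exact le_of_mul_le_mul_left h3 h0

theorem gammaCmp (t : ℝ) (ht : -2 < t) : GammaCmp t :=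
  gammaCmp_step t ht (gammaCmp_step (t + 1) (by linarith) (gammaCmp_pos _ (by linarith)))

theorem delta_gamma_bound (β γ : ℝ) (hβ : -1 < β) (hγ : -1 < γ) :
    ∃ C : ℝ, 0 < C ∧ ∀ n : ℕ, 1 ≤ n →
      jacobiDelta β γ n * Real.Gamma (β + n + 1) ≤ C * (n : ℝ) ^ (β + 1 / 2) ∧
      jacobiDelta β γ n * Real.Gamma (γ + n + 1) ≤ C * (n : ℝ) ^ (γ + 1 / 2) := by
  obtain ⟨c1, C1, hc1, hC1, H1⟩ := gammaCmp β (by linarith)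
  obtain ⟨c2, C2, hc2, hC2, H2⟩ := gammaCmp γ (by linarith)
  obtain ⟨c3, C3, hc3, hC3, H3⟩ := gammaCmp (β + γ) (by linarith)
  set A1 := (|β + γ| + 3) * C3 * C1 / c2 with hA1
  set A2 := (|β + γ| + 3) * C3 * C2 / c1 with hA2
  have hA1p : 0 < A1 := by positivity
  have hA2p : 0 < A2 := by positivity
  -- auxiliary claim
  have aux : ∀ (x y : ℝ) (n : ℕ) (Gx Gy Gs k1 K2 K3 : ℝ), 1 ≤ n → 0 < Gx → 0 < Gy → 0 < Gs →
      0 < k1 → 0 < K2 → 0 < K3 → x + y = β + γ →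
      Gx ≤ K2 * ((n : ℝ) ^ x * n.factorial) → k1 * ((n : ℝ) ^ y * n.factorial) ≤ Gy →
      Gs ≤ K3 * ((n : ℝ) ^ (β + γ) * n.factorial) → 0 < β + γ + 2 * n + 1 →
      Real.sqrt ((β + γ + 2 * n + 1) * Gs / (n.factorial * Gx * Gy)) * Gx ≤
        Real.sqrt ((|β + γ| + 3) * K3 * K2 / k1) * (n : ℝ) ^ (x + 1 / 2) := by
    intro x y n Gx Gy Gs k1 K2 K3 hn hGx hGy hGs hk1 hK2 hK3 hxy h1 h2 h3 h4
    have h1n : (1 : ℝ) ≤ n := by exact_mod_cast hn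
    have h0 : (0 : ℝ) < n := by linarith
    have hf : (0 : ℝ) < n.factorial := by exact_mod_cast n.factorial_pos
    have hrx := Real.rpow_pos_of_pos h0 x
    have hry := Real.rpow_pos_of_pos h0 y
    have e1 : Real.sqrt ((β + γ + 2 * n + 1) * Gs / (n.factorial * Gx * Gy)) * Gx =
        Real.sqrt ((β + γ + 2 * n + 1) * Gs * Gx / (n.factorial * Gy)) := by
      rw [← Real.sqrt_sq hGx.le, ← Real.sqrt_mul (by positivity)]
      rw [Real.sqrt_sq hGx.le]
      congr 1; field_simp
    have e2 : (n : ℝ) ^ (x + 1 / 2) = Real.sqrt ((n : ℝ) ^ (2 * x + 1)) := by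
      rw [Real.sqrt_eq_rpow, ← Real.rpow_mul h0.le]; congr 1; ring
    rw [e1, e2, ← Real.sqrt_mul (by positivity)]
    apply Real.sqrt_le_sqrt
    have e3 : (n : ℝ) ^ (2 * x + 1) = n * (n : ℝ) ^ x * (n : ℝ) ^ x := by
      have : 2 * x + 1 = 1 + x + x := by ring
      rw [this, Real.rpow_add h0, Real.rpow_add h0, Real.rpow_one]
    have e4 : (n : ℝ) ^ (β + γ) = (n : ℝ) ^ x * (n : ℝ) ^ y := by
      rw [← Real.rpow_add h0, hxy]
    rw [e3]
    rw [e4] at h3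
    have h5 : β + γ + 2 * n + 1 ≤ (|β + γ| + 3) * n := by
      nlinarith [le_abs_self (β + γ), abs_nonneg (β + γ)]
    rw [div_le_iff₀ (by positivity)]
    calc (β + γ + 2 * n + 1) * Gs * Gx ≤ ((|β + γ| + 3) * n) *
          (K3 * ((n : ℝ) ^ x * (n : ℝ) ^ y * n.factorial)) * (K2 * ((n : ℝ) ^ x * n.factorial)) := by
          gcongr
      _ = (|β + γ| + 3) * K3 * K2 / k1 * (n * (n : ℝ) ^ x * (n : ℝ) ^ x) *
          (n.factorial * (k1 * ((n : ℝ) ^ y * n.factorial))) := by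
          field_simp
      _ ≤ _ := by gcongr
  refine ⟨max (√A1) (√A2), lt_max_of_lt_left (Real.sqrt_pos.2 hA1p), fun n hn => ?_⟩
  have h1n : (1 : ℝ) ≤ n := by exact_mod_cast hn
  have hGb : 0 < Real.Gamma (β + n + 1) := Real.Gamma_pos_of_pos (by linarith)
  have hGg : 0 < Real.Gamma (γ + n + 1) := Real.Gamma_pos_of_pos (by linarith)
  have hGs : 0 < Real.Gamma (β + γ + n + 1) := Real.Gamma_pos_of_pos (by linarith)
  constructor
  · refine (aux β γ n _ _ _ c2 C1 C3 hn hGb hGg hGs hc2 hC1 hC3 rfl (H1 n hn).2 (H2 n hn).1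
      (H3 n hn).2 (by linarith)).trans ?_
    gcongr
    exact le_max_left _ _
  · have := aux γ β n _ _ _ c1 C2 C3 hn hGg hGb hGs hc1 hC2 hC3 (by ring) (H2 n hn).2 (H1 n hn).1
      (H3 n hn).2 (by linarith)
    unfold jacobiDelta
    rw [mul_right_comm (n.factorial : ℝ)]
    refine this.trans ?_
    gcongr
    exact le_max_right _ _

/-- Unnormalized Jacobi polynomials via the raising recursion. -/
noncomputable def JQ (a b : ℝ) : ℕ → ℝ → ℝ → Polynomial ℝ
  | 0, _, _ => 1
  | n + 1, β, γ =>
    (Polynomial.C (β + 1) * (Polynomial.C b - Polynomial.X) -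
      Polynomial.C (γ + 1) * (Polynomial.X - Polynomial.C a)) * JQ a b n (β + 1) (γ + 1) +
    (Polynomial.X - Polynomial.C a) * (Polynomial.C b - Polynomial.X) *
      Polynomial.derivative (JQ a b n (β + 1) (γ + 1))

theorem JQ_succ_eval (a b : ℝ) (n : ℕ) (β γ x : ℝ) : (JQ a b (n + 1) β γ).eval x =
    ((β + 1) * (b - x) - (γ + 1) * (x - a)) * (JQ a b n (β + 1) (γ + 1)).eval x +
      (x - a) * (b - x) * (Polynomial.derivative (JQ a b n (β + 1) (γ + 1))).eval x := by
  simp [JQ]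

theorem JQ_deriv (a b : ℝ) (n : ℕ) : ∀ β γ : ℝ, Polynomial.derivative (JQ a b (n + 1) β γ) =
    Polynomial.C (-((n : ℝ) + 1) * (n + β + γ + 2)) * JQ a b n (β + 1) (γ + 1) := by
  induction n with
  | zero =>
    intro β γ
    simp [JQ]
    rw [Polynomial.C_ofNat]
    ring
  | succ n ih =>
    intro β γ
    have h := ih (β + 1) (γ + 1)
    have hd : Polynomial.derivative (Polynomial.derivative (JQ a b (n + 1) (β + 1) (γ + 1))) =
      Polynomial.C (-((n : ℝ) + 1) * (n + (β + 1) + (γ + 1) + 2)) *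
        Polynomial.derivative (JQ a b n (β + 1 + 1) (γ + 1 + 1)) := by
      rw [h, Polynomial.derivative_C_mul]
    have hr : JQ a b (n + 1) (β + 1) (γ + 1) = (Polynomial.C (β + 1 + 1) * (Polynomial.C b - Polynomial.X) -
      Polynomial.C (γ + 1 + 1) * (Polynomial.X - Polynomial.C a)) * JQ a b n (β + 1 + 1) (γ + 1 + 1) +
    (Polynomial.X - Polynomial.C a) * (Polynomial.C b - Polynomial.X) *
      Polynomial.derivative (JQ a b n (β + 1 + 1) (γ + 1 + 1)) := rfl
    have hl : JQ a b (n + 1 + 1) β γ = (Polynomial.C (β + 1) * (Polynomial.C b - Polynomial.X) -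
      Polynomial.C (γ + 1) * (Polynomial.X - Polynomial.C a)) * JQ a b (n + 1) (β + 1) (γ + 1) +
    (Polynomial.X - Polynomial.C a) * (Polynomial.C b - Polynomial.X) *
      Polynomial.derivative (JQ a b (n + 1) (β + 1) (γ + 1)) := rfl
    rw [hl]
    simp only [Polynomial.derivative_add, Polynomial.derivative_sub, Polynomial.derivative_mul,
      Polynomial.derivative_C, Polynomial.derivative_X]
    rw [hd, h]
    generalize Polynomial.derivative (JQ a b n (β + 1 + 1) (γ + 1 + 1)) = d at *
    generalize JQ a b n (β + 1 + 1) (γ + 1 + 1) = Q at *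
    generalize JQ a b (n + 1) (β + 1) (γ + 1) = R at *
    push_cast
    simp only [map_add, map_mul, map_neg, map_one, Polynomial.C_ofNat] at *
    linear_combination (-((Polynomial.C (n : ℝ)) + 1) * (Polynomial.C (n : ℝ) +
      (Polynomial.C β + 1) + (Polynomial.C γ + 1) + 2)) * (-hr)

theorem JQ_ode (a b : ℝ) (n : ℕ) (β γ x : ℝ) :
    (x - a) * (b - x) * (Polynomial.derivative (Polynomial.derivative (JQ a b (n + 1) β γ))).eval x +
    ((β + 1) * (b - x) - (γ + 1) * (x - a)) * (Polynomial.derivative (JQ a b (n + 1) β γ)).eval x =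
    (-((n : ℝ) + 1) * (n + β + γ + 2)) * (JQ a b (n + 1) β γ).eval x := by
  rw [JQ_succ_eval, JQ_deriv]
  simp only [Polynomial.derivative_C_mul, Polynomial.eval_mul, Polynomial.eval_C]
  ring

theorem JQ_eval_a (a b : ℝ) (n : ℕ) : ∀ β γ : ℝ, -1 < β → (JQ a b n β γ).eval a =
    (b - a) ^ n * (Real.Gamma (β + n + 1) / Real.Gamma (β + 1)) := by
  induction n with
  | zero =>
    intro β γ hβ
    have := (Real.Gamma_pos_of_pos (by linarith : 0 < β + 1)).ne'
    simp [JQ, this]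
  | succ n ih =>
    intro β γ hβ
    rw [JQ_succ_eval, ih (β + 1) (γ + 1) (by linarith)]
    have h1 := (Real.Gamma_pos_of_pos (by linarith : 0 < β + 1)).ne'
    rw [Real.Gamma_add_one (by linarith : β + 1 ≠ 0)]
    have h2 : β + 1 ≠ 0 := by linarith
    have : β + ((n + 1 : ℕ) : ℝ) + 1 = β + 1 + n + 1 := by push_cast; ring
    rw [this]
    field_simp
    ring

theorem JQ_eval_b (a b : ℝ) (n : ℕ) : ∀ β γ : ℝ, -1 < γ → (JQ a b n β γ).eval b =
    (-(b - a)) ^ n * (Real.Gamma (γ + n + 1) / Real.Gamma (γ + 1)) := by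
  induction n with
  | zero =>
    intro β γ hβ
    have := (Real.Gamma_pos_of_pos (by linarith : 0 < γ + 1)).ne'
    simp [JQ, this]
  | succ n ih =>
    intro β γ hβ
    rw [JQ_succ_eval, ih (β + 1) (γ + 1) (by linarith)]
    have h1 := (Real.Gamma_pos_of_pos (by linarith : 0 < γ + 1)).ne'
    rw [Real.Gamma_add_one (by linarith : γ + 1 ≠ 0)]
    have h2 : γ + 1 ≠ 0 := by linarith
    have : γ + ((n + 1 : ℕ) : ℝ) + 1 = γ + 1 + n + 1 := by push_cast; ring
    rw [this]
    field_simp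
    ring

/-- Sup bound for the unnormalized polynomials. -/
theorem JQ_sup (a b β γ : ℝ) (hab : a < b) (hβ : -1 < β) (hγ : -1 < γ) (n : ℕ)
    (hmax : -(1 : ℝ) / 2 ≤ max β γ) (x : ℝ) (hx : x ∈ Icc a b) :
    (-(1 : ℝ) / 2 ≤ β ∧ |(JQ a b (n + 1) β γ).eval x| ≤ |(JQ a b (n + 1) β γ).eval a|) ∨
    (-(1 : ℝ) / 2 ≤ γ ∧ |(JQ a b (n + 1) β γ).eval x| ≤ |(JQ a b (n + 1) β γ).eval b|) := by
  set Q := JQ a b (n + 1) β γ with hQ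
  set Λ : ℝ := ((n : ℝ) + 1) * (n + β + γ + 2) with hΛ
  have hn : (0 : ℝ) ≤ n := Nat.cast_nonneg n
  have hΛ0 : 0 < Λ := mul_pos (by linarith) (by linarith)
  set E : ℝ → ℝ := fun x => Λ * Q.eval x ^ 2 + (x - a) * (b - x) * Q.derivative.eval x ^ 2 with hE
  have hEd : ∀ x, HasDerivAt E
      ((-(2 * β + 1) * (b - x) + (2 * γ + 1) * (x - a)) * Q.derivative.eval x ^ 2) x := by
    intro x
    have h1 := Q.hasDerivAt x
    have h2 := Q.derivative.hasDerivAt x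
    have h3 : HasDerivAt (fun x : ℝ => x - a) 1 x := (hasDerivAt_id x).sub_const a
    have h4 : HasDerivAt (fun x : ℝ => b - x) (-1) x := (hasDerivAt_id x).const_sub b
    have h5 := ((h1.pow 2).const_mul Λ).add ((h3.mul h4).mul (h2.pow 2))
    refine h5.congr_deriv ?_
    have ode := JQ_ode a b n β γ x
    rw [← hQ] at ode
    simp only [Pi.mul_apply, Nat.cast_ofNat, Pi.pow_apply]
    linear_combination -2 * Q.derivative.eval x * (-ode)
  have hEc : Continuous E := continuous_iff_continuousAt.2 fun x => (hEd x).continuousAt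
  have hEx : Λ * Q.eval x ^ 2 ≤ E x := by
    simp only [hE]
    have : 0 ≤ (x - a) * (b - x) := mul_nonneg (by linarith [hx.1]) (by linarith [hx.2])
    have := mul_nonneg this (sq_nonneg (Q.derivative.eval x))
    linarith
  have hEa : E a = Λ * Q.eval a ^ 2 := by simp [hE]
  have hEb : E b = Λ * Q.eval b ^ 2 := by simp [hE]
  have left : (∀ y ∈ Icc a x, -(2 * β + 1) * (b - y) + (2 * γ + 1) * (y - a) ≤ 0) →
      |Q.eval x| ≤ |Q.eval a| := by
    intro h
    have hanti : AntitoneOn E (Icc a x) := by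
      apply antitoneOn_of_deriv_nonpos (convex_Icc a x) hEc.continuousOn
        (fun y _ => (hEd y).differentiableAt.differentiableWithinAt)
      intro y hy
      rw [(hEd y).deriv]
      exact mul_nonpos_of_nonpos_of_nonneg (h y (interior_subset hy)) (sq_nonneg _)
    have h1 := hanti (left_mem_Icc.2 hx.1) (right_mem_Icc.2 hx.1) hx.1
    apply sq_le_sq.1
    rw [hEa] at h1
    exact le_of_mul_le_mul_left (hEx.trans h1) hΛ0
  have right : (∀ y ∈ Icc x b, 0 ≤ -(2 * β + 1) * (b - y) + (2 * γ + 1) * (y - a)) →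
      |Q.eval x| ≤ |Q.eval b| := by
    intro h
    have hmono : MonotoneOn E (Icc x b) := by
      apply monotoneOn_of_deriv_nonneg (convex_Icc x b) hEc.continuousOn
        (fun y _ => (hEd y).differentiableAt.differentiableWithinAt)
      intro y hy
      rw [(hEd y).deriv]
      exact mul_nonneg (h y (interior_subset hy)) (sq_nonneg _)
    have h1 := hmono (left_mem_Icc.2 hx.2) (right_mem_Icc.2 hx.2) hx.2
    apply sq_le_sq.1
    rw [hEb] at h1
    exact le_of_mul_le_mul_left (hEx.trans h1) hΛ0
  obtain ⟨hx1, hx2⟩ := hx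
  by_cases h1 : -(1 : ℝ) / 2 ≤ β
  · by_cases h2 : -(1 : ℝ) / 2 ≤ γ
    · rcases le_total (-(2 * β + 1) * (b - x) + (2 * γ + 1) * (x - a)) 0 with h3 | h3
      · refine Or.inl ⟨h1, left fun y hy => ?_⟩
        nlinarith [hy.1, hy.2, mul_nonneg (by linarith : 0 ≤ 2 * β + 1 + (2 * γ + 1)) (by linarith [hy.2] : 0 ≤ x - y)]
      · refine Or.inr ⟨h2, right fun y hy => ?_⟩
        nlinarith [hy.1, hy.2, mul_nonneg (by linarith : 0 ≤ 2 * β + 1 + (2 * γ + 1)) (by linarith [hy.1] : 0 ≤ y - x)]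
    · refine Or.inl ⟨h1, left fun y hy => ?_⟩
      push Not at h2
      have := mul_nonneg (by linarith : 0 ≤ 2 * β + 1) (by linarith [hy.2] : 0 ≤ b - y)
      have := mul_nonneg (by linarith : 0 ≤ -(2 * γ + 1)) (by linarith [hy.1] : 0 ≤ y - a)
      linarith
  · have h2 : -(1 : ℝ) / 2 ≤ γ := by
      rcases le_max_iff.1 hmax with h | h
      · exact absurd h h1
      · exact h
    refine Or.inr ⟨h2, right fun y hy => ?_⟩
    push Not at h1
    have := mul_nonneg (by linarith : 0 ≤ -(2 * β + 1)) (by linarith [hy.2] : 0 ≤ b - y)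
    have := mul_nonneg (by linarith : 0 ≤ (2 * γ + 1)) (by linarith [hy.1] : 0 ≤ y - a)
    linarith

theorem raise_hasDerivAt (a b β γ x : ℝ) (hx : x ∈ Ioo a b) (n : ℕ) :
    HasDerivAt (fun t => (t - a) ^ (β + 1) * (b - t) ^ (γ + 1) * (JQ a b n (β + 1) (γ + 1)).eval t)
      ((x - a) ^ β * (b - x) ^ γ * (JQ a b (n + 1) β γ).eval x) x := by
  have ha : 0 < x - a := by linarith [hx.1]
  have hb : 0 < b - x := by linarith [hx.2]
  have h3 : HasDerivAt (fun x : ℝ => x - a) 1 x := (hasDerivAt_id x).sub_const a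
  have h4 : HasDerivAt (fun x : ℝ => b - x) (-1) x := (hasDerivAt_id x).const_sub b
  have h5 := h3.rpow_const (p := β + 1) (Or.inl ha.ne')
  have h6 := h4.rpow_const (p := γ + 1) (Or.inl hb.ne')
  have h7 := (h5.mul h6).mul ((JQ a b n (β + 1) (γ + 1)).hasDerivAt x)
  refine h7.congr_deriv ?_
  rw [JQ_succ_eval]
  simp only [add_sub_cancel_right, Pi.mul_apply]
  rw [Real.rpow_add_one ha.ne', Real.rpow_add_one hb.ne']
  ring

theorem iteratedDeriv_JQ (a b : ℝ) (n : ℕ) : ∀ (β γ x : ℝ), x ∈ Ioo a b →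
    iteratedDeriv n (fun t : ℝ => (t - a) ^ (β + n) * (b - t) ^ (γ + n)) x =
      (x - a) ^ β * (b - x) ^ γ * (JQ a b n β γ).eval x := by
  induction n with
  | zero => intro β γ x hx; simp [JQ]
  | succ n ih =>
    intro β γ x hx
    rw [iteratedDeriv_succ]
    have e : (fun t : ℝ => (t - a) ^ (β + (n + 1 : ℕ)) * (b - t) ^ (γ + (n + 1 : ℕ))) =
        fun t : ℝ => (t - a) ^ (β + 1 + n) * (b - t) ^ (γ + 1 + n) := by
      funext t; push_cast
      rw [add_right_comm β, add_right_comm γ, add_assoc β, add_assoc γ]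
    rw [e]
    rw [← (raise_hasDerivAt a b β γ x hx n).deriv]
    apply Filter.EventuallyEq.deriv_eq
    filter_upwards [isOpen_Ioo.mem_nhds hx] with y hy
    exact ih (β + 1) (γ + 1) y hy

theorem beta_real (β γ : ℝ) (hβ : -1 < β) (hγ : -1 < γ) :
    IntervalIntegrable (fun x : ℝ => x ^ β * (1 - x) ^ γ) volume 0 1 ∧
    ∫ x in (0 : ℝ)..1, x ^ β * (1 - x) ^ γ =
      Real.Gamma (β + 1) * Real.Gamma (γ + 1) / Real.Gamma (β + γ + 2) := by
  have hc := Complex.betaIntegral_convergent (u := ((β + 1 : ℝ) : ℂ)) (v := ((γ + 1 : ℝ) : ℂ))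
    (by rw [Complex.ofReal_re]; linarith) (by rw [Complex.ofReal_re]; linarith)
  have e : ∀ x ∈ Ioc (0 : ℝ) 1, (x : ℂ) ^ (((β + 1 : ℝ) : ℂ) - 1) *
      (1 - (x : ℂ)) ^ (((γ + 1 : ℝ) : ℂ) - 1) = ((x ^ β * (1 - x) ^ γ : ℝ) : ℂ) := by
    intro x hx
    have h1 : (((β + 1 : ℝ) : ℂ) - 1) = (β : ℂ) := by push_cast; ring
    have h2 : (((γ + 1 : ℝ) : ℂ) - 1) = (γ : ℂ) := by push_cast; ring
    have h3 : (1 - (x : ℂ)) = ((1 - x : ℝ) : ℂ) := by push_cast; ring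
    rw [h1, h2, h3, Complex.ofReal_mul, Complex.ofReal_cpow hx.1.le,
      Complex.ofReal_cpow (by linarith [hx.2])]
  have hint : IntervalIntegrable (fun x : ℝ => ((x ^ β * (1 - x) ^ γ : ℝ) : ℂ)) volume 0 1 := by
    refine hc.congr ?_
    rw [uIoc_of_le zero_le_one]
    exact fun x hx => e x hx
  constructor
  · rw [intervalIntegrable_iff] at hint ⊢
    have := hint.re
    simpa [IntegrableOn] using this
  · have hB : Complex.betaIntegral ((β + 1 : ℝ) : ℂ) ((γ + 1 : ℝ) : ℂ) =
        ((∫ x in (0 : ℝ)..1, x ^ β * (1 - x) ^ γ : ℝ) : ℂ) := by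
      unfold Complex.betaIntegral
      rw [← intervalIntegral.integral_ofReal]
      apply intervalIntegral.integral_congr_ae
      rw [uIoc_of_le zero_le_one]
      exact Eventually.of_forall fun x hx => e x hx
    have h := ProbabilityTheory.beta_eq_betaIntegralReal (β + 1) (γ + 1) (by linarith) (by linarith)
    rw [hB, Complex.ofReal_re] at h
    rw [← h, ProbabilityTheory.beta]
    congr 2; ring

theorem beta_ab (a b β γ : ℝ) (hab : a < b) (hβ : -1 < β) (hγ : -1 < γ) :
    IntegrableOn (fun x : ℝ => (x - a) ^ β * (b - x) ^ γ) (Ioo a b) ∧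
    ∫ x in Ioo a b, (x - a) ^ β * (b - x) ^ γ =
      (b - a) ^ (β + γ + 1) *
        (Real.Gamma (β + 1) * Real.Gamma (γ + 1) / Real.Gamma (β + γ + 2)) := by
  obtain ⟨h1, h2⟩ := beta_real β γ hβ hγ
  have hL : 0 < b - a := by linarith
  have e : ∀ x ∈ Ioo a b, (x - a) ^ β * (b - x) ^ γ =
      (b - a) ^ (β + γ) * (((b - a)⁻¹ * (x - a)) ^ β * (1 - (b - a)⁻¹ * (x - a)) ^ γ) := by
    intro x hx
    have h3 : 0 < x - a := by linarith [hx.1]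
    have h4 : 0 < b - x := by linarith [hx.2]
    have h5 : 1 - (b - a)⁻¹ * (x - a) = (b - a)⁻¹ * (b - x) := by field_simp; ring
    rw [h5, Real.mul_rpow (by positivity) h3.le, Real.mul_rpow (by positivity) h4.le,
      Real.inv_rpow hL.le, Real.inv_rpow hL.le, Real.rpow_add hL]
    have := (Real.rpow_pos_of_pos hL β).ne'
    have := (Real.rpow_pos_of_pos hL γ).ne'
    field_simp
  have hi : IntegrableOn (fun x : ℝ => ((b - a)⁻¹ * (x - a)) ^ β * (1 - (b - a)⁻¹ * (x - a)) ^ γ)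
      (Ioo a b) := by
    have h3 := h1.comp_mul_left (c := (b - a)⁻¹)
    have h4 := h3.comp_sub_right a
    rw [intervalIntegrable_iff_integrableOn_Ioo_of_le] at h4
    · simpa using h4
    · simp; linarith
  constructor
  · refine (IntegrableOn.congr_fun (hi.const_mul ((b - a) ^ (β + γ))) ?_ measurableSet_Ioo)
    exact fun x hx => (e x hx).symm
  · rw [setIntegral_congr_fun measurableSet_Ioo (fun x hx => e x hx), integral_const_mul,
      ← integral_Ioc_eq_integral_Ioo, ← intervalIntegral.integral_of_le hab.le]
    rw [intervalIntegral.integral_comp_sub_right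
      (fun y => ((b - a)⁻¹ * y) ^ β * (1 - (b - a)⁻¹ * y) ^ γ) a]
    rw [intervalIntegral.integral_comp_mul_left (fun y => y ^ β * (1 - y) ^ γ)
      (inv_ne_zero hL.ne')]
    rw [sub_self, mul_zero, inv_mul_cancel₀ hL.ne', h2, inv_inv, smul_eq_mul, ← mul_assoc,
      ← Real.rpow_add_one hL.ne']

theorem poly_w_integrable (a b β γ : ℝ) (hab : a < b) (hβ : -1 < β) (hγ : -1 < γ)
    (P : Polynomial ℝ) :
    IntegrableOn (fun x : ℝ => P.eval x * ((x - a) ^ β * (b - x) ^ γ)) (Ioo a b) := by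
  have h := (beta_ab a b β γ hab hβ hγ).1
  obtain ⟨B, hB⟩ := (isCompact_Icc (a := a) (b := b)).exists_bound_of_continuousOn
    P.continuous.continuousOn
  refine Integrable.bdd_mul h P.continuous.aestronglyMeasurable (c := B) ?_
  filter_upwards [ae_restrict_mem measurableSet_Ioo] with x hx
  exact hB x (Ioo_subset_Icc_self hx)

/-- Weighted integral of a product. -/
noncomputable def JI (a b β γ : ℝ) (P : Polynomial ℝ) : ℝ :=
  ∫ x in Ioo a b, P.eval x * ((x - a) ^ β * (b - x) ^ γ)

theorem JI_parts (a b β γ : ℝ) (hab : a < b) (hβ : -1 < β) (hγ : -1 < γ) (P : Polynomial ℝ) (n : ℕ) :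
    JI a b β γ (P * JQ a b (n + 1) β γ) =
      -JI a b (β + 1) (γ + 1) (P.derivative * JQ a b n (β + 1) (γ + 1)) := by
  have i1 := poly_w_integrable a b β γ hab hβ hγ (P * JQ a b (n + 1) β γ)
  have i2 := poly_w_integrable a b (β + 1) (γ + 1) hab (by linarith) (by linarith)
    (P.derivative * JQ a b n (β + 1) (γ + 1))
  rw [eq_neg_iff_add_eq_zero]
  unfold JI
  rw [← integral_add i1 i2]
  have key := intervalIntegral.integral_eq_sub_of_hasDerivAt_of_le (a := a) (b := b)
    (f := fun t => P.eval t * ((t - a) ^ (β + 1) * (b - t) ^ (γ + 1) *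
      (JQ a b n (β + 1) (γ + 1)).eval t))
    (f' := fun x => (P * JQ a b (n + 1) β γ).eval x * ((x - a) ^ β * (b - x) ^ γ) +
      (P.derivative * JQ a b n (β + 1) (γ + 1)).eval x * ((x - a) ^ (β + 1) * (b - x) ^ (γ + 1)))
    hab.le ?_ ?_ ?_
  · rw [intervalIntegral.integral_of_le hab.le, integral_Ioc_eq_integral_Ioo] at key
    rw [key]
    simp [Real.zero_rpow (by linarith : β + 1 ≠ 0), Real.zero_rpow (by linarith : γ + 1 ≠ 0)]
  · refine Continuous.continuousOn ?_
    refine P.continuous.mul ((Continuous.mul ?_ ?_).mul (JQ a b n (β + 1) (γ + 1)).continuous)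
    · exact (continuous_id.sub continuous_const).rpow_const fun x => Or.inr (by linarith)
    · exact (continuous_const.sub continuous_id).rpow_const fun x => Or.inr (by linarith)
  · intro x hx
    refine ((P.hasDerivAt x).mul (raise_hasDerivAt a b β γ x hx n)).congr_deriv ?_
    simp only [Polynomial.eval_mul]
    ring
  · rw [intervalIntegrable_iff_integrableOn_Ioo_of_le hab.le]
    exact i1.add i2

theorem JI_rec (a b β γ : ℝ) (hab : a < b) (hβ : -1 < β) (hγ : -1 < γ) (m n : ℕ) :
    JI a b β γ (JQ a b (m + 1) β γ * JQ a b (n + 1) β γ) = (((m : ℝ) + 1) * (m + β + γ + 2)) *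
      JI a b (β + 1) (γ + 1) (JQ a b m (β + 1) (γ + 1) * JQ a b n (β + 1) (γ + 1)) := by
  rw [JI_parts a b β γ hab hβ hγ, JQ_deriv]
  unfold JI
  rw [← integral_const_mul, ← integral_neg]
  congr 1
  funext x
  simp only [Polynomial.eval_mul, Polynomial.eval_C]
  ring

theorem JI_orth (a b : ℝ) (hab : a < b) (m : ℕ) : ∀ (n : ℕ) (β γ : ℝ), -1 < β → -1 < γ → m ≠ n →
    JI a b β γ (JQ a b m β γ * JQ a b n β γ) = 0 := by
  induction m with
  | zero =>
    intro n β γ hβ hγ hmn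
    obtain ⟨n, rfl⟩ := Nat.exists_eq_succ_of_ne_zero hmn.symm
    rw [Nat.succ_eq_add_one, JI_parts a b β γ hab hβ hγ]
    simp [JQ, JI]
  | succ m ih =>
    intro n β γ hβ hγ hmn
    rcases n with _ | n
    · rw [mul_comm, JI_parts a b β γ hab hβ hγ]
      simp [JQ, JI]
    · rw [JI_rec a b β γ hab hβ hγ, ih n (β + 1) (γ + 1) (by linarith) (by linarith) (by omega),
        mul_zero]

theorem JI_norm (a b : ℝ) (hab : a < b) (n : ℕ) : ∀ (β γ : ℝ), -1 < β → -1 < γ →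
    0 < β + γ + n + 1 →
    JI a b β γ (JQ a b n β γ * JQ a b n β γ) = (b - a) ^ (2 * (n : ℝ) + β + γ + 1) *
      (n.factorial * Real.Gamma (β + n + 1) * Real.Gamma (γ + n + 1) /
        ((β + γ + 2 * n + 1) * Real.Gamma (β + γ + n + 1))) := by
  induction n with
  | zero =>
    intro β γ hβ hγ h
    have h' : 0 < β + γ + 1 := by simpa using h
    have := (beta_ab a b β γ hab hβ hγ).2
    have e : β + γ + 2 = (β + γ + 1) + 1 := by ring
    rw [e, Real.Gamma_add_one h'.ne'] at this
    simpa [JQ, JI] using this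
  | succ n ih =>
    intro β γ hβ hγ h
    have hn : (0 : ℝ) ≤ n := Nat.cast_nonneg n
    rw [JI_rec a b β γ hab hβ hγ, ih (β + 1) (γ + 1) (by linarith) (by linarith) (by linarith)]
    have e1 : β + 1 + (γ + 1) + (n : ℝ) + 1 = (β + γ + n + 2) + 1 := by ring
    have h2 : β + γ + n + 2 ≠ 0 := by
      push_cast at h; linarith
    rw [e1, Real.Gamma_add_one h2]
    push_cast [Nat.factorial_succ]
    have e2 : β + γ + ((n : ℝ) + 1) + 1 = β + γ + n + 2 := by ring
    have e3 : β + ((n : ℝ) + 1) + 1 = β + 1 + n + 1 := by ring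
    have e4 : γ + ((n : ℝ) + 1) + 1 = γ + 1 + n + 1 := by ring
    have e5 : 2 * ((n : ℝ) + 1) + β + γ + 1 = 2 * n + (β + 1) + (γ + 1) + 1 := by ring
    have e6 : β + γ + 2 * ((n : ℝ) + 1) + 1 = β + 1 + (γ + 1) + 2 * n + 1 := by ring
    rw [e2, e3, e4, e5, e6]
    have h3 : β + 1 + (γ + 1) + 2 * (n : ℝ) + 1 ≠ 0 := by linarith
    have h4 := (Real.Gamma_pos_of_pos (s := β + γ + n + 2) (by push_cast at h; linarith)).ne'
    have h5 : (n : ℝ) + β + γ + 2 = β + γ + n + 2 := by ring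
    rw [h5]
    field_simp

/-- Normalizing constant. -/
noncomputable def JK (a b β γ : ℝ) (n : ℕ) : ℝ :=
  (-1 : ℝ) ^ n * (b - a) ^ (-(n : ℝ) - (β + γ + 1) / 2) * jacobiDelta β γ n

theorem jacobiP_eq (a b β γ : ℝ) (n : ℕ) (x : ℝ) (hx : x ∈ Ioo a b) :
    jacobiP a b β γ n x = JK a b β γ n * (JQ a b n β γ).eval x := by
  have h3 : 0 < x - a := by linarith [hx.1]
  have h4 : 0 < b - x := by linarith [hx.2]
  unfold jacobiP JK
  rw [iteratedDeriv_JQ a b n β γ x hx, Real.rpow_neg h3.le, Real.rpow_neg h4.le]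
  have := (Real.rpow_pos_of_pos h3 β).ne'
  have := (Real.rpow_pos_of_pos h4 γ).ne'
  field_simp

theorem JK_abs (a b β γ : ℝ) (hab : a < b) (n : ℕ) : |JK a b β γ n| * (b - a) ^ n =
    (b - a) ^ (-(β + γ + 1) / 2) * jacobiDelta β γ n := by
  have hL : 0 < b - a := by linarith
  have hδ : 0 ≤ jacobiDelta β γ n := Real.sqrt_nonneg _
  unfold JK
  rw [abs_mul, abs_mul, abs_pow, abs_neg, abs_one, one_pow, one_mul,
    abs_of_pos (Real.rpow_pos_of_pos hL _), abs_of_nonneg hδ]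
  rw [mul_right_comm, ← Real.rpow_natCast, ← Real.rpow_add hL]
  congr 2; ring

theorem JK_sup (a b β γ : ℝ) (hab : a < b) (hβ : -1 < β) (hγ : -1 < γ)
    (hmax : -(1 : ℝ) / 2 ≤ max β γ) : ∃ K : ℝ, 0 < K ∧ ∀ (n : ℕ) (x : ℝ), x ∈ Ioo a b →
      |JK a b β γ (n + 1) * (JQ a b (n + 1) β γ).eval x| ≤ K * ((n : ℝ) + 1) ^ (max β γ + 1 / 2) := by
  obtain ⟨C, hC, H⟩ := delta_gamma_bound β γ hβ hγ
  have hL : 0 < b - a := by linarith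
  have hb := Real.Gamma_pos_of_pos (by linarith : 0 < β + 1)
  have hg := Real.Gamma_pos_of_pos (by linarith : 0 < γ + 1)
  have hLp := Real.rpow_pos_of_pos hL (-(β + γ + 1) / 2)
  set A := (b - a) ^ (-(β + γ + 1) / 2) * C with hA
  have hAp : 0 < A := by positivity
  refine ⟨A / Real.Gamma (β + 1) + A / Real.Gamma (γ + 1), by positivity, fun n x hx => ?_⟩
  have hn1 : (1 : ℝ) ≤ (n : ℝ) + 1 := by linarith [(Nat.cast_nonneg n : (0 : ℝ) ≤ n)]
  obtain ⟨H1, H2⟩ := H (n + 1) (by omega)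
  have hc : ((n + 1 : ℕ) : ℝ) = (n : ℝ) + 1 := by push_cast; ring
  have hpow : 0 < ((n : ℝ) + 1) ^ (max β γ + 1 / 2) := by positivity
  have habs := JK_abs a b β γ hab (n + 1)
  rw [abs_mul]
  rcases JQ_sup a b β γ hab hβ hγ n hmax x (Ioo_subset_Icc_self hx) with ⟨_, h⟩ | ⟨_, h⟩
  · have hG : 0 < Real.Gamma (β + (n + 1 : ℕ) + 1) := Real.Gamma_pos_of_pos (by rw [hc]; linarith)
    rw [JQ_eval_a a b (n + 1) β γ hβ, abs_mul, abs_pow, abs_of_pos hL, abs_of_pos (div_pos hG hb)] at h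
    calc _ ≤ |JK a b β γ (n + 1)| * ((b - a) ^ (n + 1) *
            (Real.Gamma (β + (n + 1 : ℕ) + 1) / Real.Gamma (β + 1))) := by gcongr
      _ = (b - a) ^ (-(β + γ + 1) / 2) * (jacobiDelta β γ (n + 1) *
            Real.Gamma (β + (n + 1 : ℕ) + 1)) / Real.Gamma (β + 1) := by
          rw [← mul_assoc, habs]; ring
      _ ≤ (b - a) ^ (-(β + γ + 1) / 2) * (C * ((n + 1 : ℕ) : ℝ) ^ (β + 1 / 2)) / Real.Gamma (β + 1) := by
          gcongr
      _ ≤ (b - a) ^ (-(β + γ + 1) / 2) * (C * ((n : ℝ) + 1) ^ (max β γ + 1 / 2)) / Real.Gamma (β + 1) := by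
          rw [hc]
          gcongr
          exact le_max_left _ _
      _ = A / Real.Gamma (β + 1) * ((n : ℝ) + 1) ^ (max β γ + 1 / 2) := by rw [hA]; ring
      _ ≤ _ := by
          gcongr
          linarith [div_pos hAp hg]
  · have hG : 0 < Real.Gamma (γ + (n + 1 : ℕ) + 1) := Real.Gamma_pos_of_pos (by rw [hc]; linarith)
    rw [JQ_eval_b a b (n + 1) β γ hγ, abs_mul, abs_pow, abs_neg, abs_of_pos hL,
      abs_of_pos (div_pos hG hg)] at h
    calc _ ≤ |JK a b β γ (n + 1)| * ((b - a) ^ (n + 1) *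
            (Real.Gamma (γ + (n + 1 : ℕ) + 1) / Real.Gamma (γ + 1))) := by gcongr
      _ = (b - a) ^ (-(β + γ + 1) / 2) * (jacobiDelta β γ (n + 1) *
            Real.Gamma (γ + (n + 1 : ℕ) + 1)) / Real.Gamma (γ + 1) := by
          rw [← mul_assoc, habs]; ring
      _ ≤ (b - a) ^ (-(β + γ + 1) / 2) * (C * ((n + 1 : ℕ) : ℝ) ^ (γ + 1 / 2)) / Real.Gamma (γ + 1) := by
          gcongr
      _ ≤ (b - a) ^ (-(β + γ + 1) / 2) * (C * ((n : ℝ) + 1) ^ (max β γ + 1 / 2)) / Real.Gamma (γ + 1) := by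
          rw [hc]
          gcongr
          exact le_max_right _ _
      _ = A / Real.Gamma (γ + 1) * ((n : ℝ) + 1) ^ (max β γ + 1 / 2) := by rw [hA]; ring
      _ ≤ _ := by
          gcongr
          linarith [div_pos hAp hb]

theorem JK_orth (a b β γ : ℝ) (hab : a < b) (hβ : -1 < β) (hγ : -1 < γ) (m n : ℕ) :
    ∫ x in Ioo a b, ((JK a b β γ (m + 1) * (JQ a b (m + 1) β γ).eval x) *
      (JK a b β γ (n + 1) * (JQ a b (n + 1) β γ).eval x)) * ((x - a) ^ β * (b - x) ^ γ) =
      if m = n then 1 else 0 := by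
  have hL : 0 < b - a := by linarith
  have e : ∫ x in Ioo a b, ((JK a b β γ (m + 1) * (JQ a b (m + 1) β γ).eval x) *
      (JK a b β γ (n + 1) * (JQ a b (n + 1) β γ).eval x)) * ((x - a) ^ β * (b - x) ^ γ) =
      (JK a b β γ (m + 1) * JK a b β γ (n + 1)) *
        JI a b β γ (JQ a b (m + 1) β γ * JQ a b (n + 1) β γ) := by
    unfold JI
    rw [← integral_const_mul]
    congr 1
    funext x
    rw [Polynomial.eval_mul]; ring
  rw [e]
  split_ifs with h
  · subst h
    have hm : (0 : ℝ) ≤ m := Nat.cast_nonneg m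
    have hc : ((m + 1 : ℕ) : ℝ) = (m : ℝ) + 1 := by push_cast; ring
    have hs : 0 < β + γ + (m + 1 : ℕ) + 1 := by rw [hc]; linarith
    rw [JI_norm a b hab (m + 1) β γ hβ hγ hs]
    have g1 := Real.Gamma_pos_of_pos hs
    have g2 := Real.Gamma_pos_of_pos (s := β + (m + 1 : ℕ) + 1) (by rw [hc]; linarith)
    have g3 := Real.Gamma_pos_of_pos (s := γ + (m + 1 : ℕ) + 1) (by rw [hc]; linarith)
    have g4 : 0 < β + γ + 2 * (m + 1 : ℕ) + 1 := by rw [hc]; linarith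
    have hf : (0 : ℝ) < (m + 1).factorial := by exact_mod_cast (m + 1).factorial_pos
    have hd : jacobiDelta β γ (m + 1) * jacobiDelta β γ (m + 1) =
        ((β + γ + 2 * (m + 1 : ℕ) + 1) * Real.Gamma (β + γ + (m + 1 : ℕ) + 1) /
    ((m + 1).factorial * Real.Gamma (β + (m + 1 : ℕ) + 1) * Real.Gamma (γ + (m + 1 : ℕ) + 1))) := by
      unfold jacobiDelta
      exact Real.mul_self_sqrt (by positivity)
    have hp : (b - a) ^ (-((m + 1 : ℕ) : ℝ) - (β + γ + 1) / 2) *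
        (b - a) ^ (-((m + 1 : ℕ) : ℝ) - (β + γ + 1) / 2) *
        (b - a) ^ (2 * ((m + 1 : ℕ) : ℝ) + β + γ + 1) = 1 := by
      rw [← Real.rpow_add hL, ← Real.rpow_add hL]
      convert Real.rpow_zero (b - a) using 2
      ring
    have h1 : ((-1 : ℝ) ^ (m + 1)) * ((-1 : ℝ) ^ (m + 1)) = 1 := by
      rw [← mul_pow]; norm_num
    unfold JK
    calc _ = (((-1 : ℝ) ^ (m + 1)) * ((-1 : ℝ) ^ (m + 1))) *
        ((b - a) ^ (-((m + 1 : ℕ) : ℝ) - (β + γ + 1) / 2) *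
        (b - a) ^ (-((m + 1 : ℕ) : ℝ) - (β + γ + 1) / 2) *
        (b - a) ^ (2 * ((m + 1 : ℕ) : ℝ) + β + γ + 1)) *
        (jacobiDelta β γ (m + 1) * jacobiDelta β γ (m + 1)) *
        ((m + 1).factorial * Real.Gamma (β + (m + 1 : ℕ) + 1) * Real.Gamma (γ + (m + 1 : ℕ) + 1) /
        ((β + γ + 2 * (m + 1 : ℕ) + 1) * Real.Gamma (β + γ + (m + 1 : ℕ) + 1))) := by ring
      _ = 1 := by
        rw [h1, hp, hd]
        have := g1.ne'
        have := g2.ne'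
        have := g3.ne'
        have := g4.ne'
        have := hf.ne'
        rw [one_mul, one_mul]
        rw [div_mul_div_comm]
        rw [div_eq_one_iff_eq (by positivity)]
        ring
  · rw [JI_orth a b hab (m + 1) (n + 1) β γ hβ hγ (by omega), mul_zero]

/-- The weighted measure. -/
noncomputable def wmeas (a b β γ : ℝ) : Measure ℝ :=
  (volume.restrict (Ioo a b)).withDensity
    (fun x => ((((x - a) ^ β * (b - x) ^ γ).toNNReal : NNReal) : ENNReal))

theorem w_meas (a b β γ : ℝ) : Measurable (fun x : ℝ => ((x - a) ^ β * (b - x) ^ γ).toNNReal) := by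
  apply Measurable.real_toNNReal
  fun_prop

theorem w_smul (a b β γ : ℝ) (g : ℝ → ℝ) (x : ℝ) (hx : x ∈ Ioo a b) :
    ((x - a) ^ β * (b - x) ^ γ).toNNReal • g x = g x * ((x - a) ^ β * (b - x) ^ γ) := by
  have h3 : 0 < x - a := by linarith [hx.1]
  have h4 : 0 < b - x := by linarith [hx.2]
  rw [NNReal.smul_def, Real.coe_toNNReal _ (by positivity), smul_eq_mul, mul_comm]

theorem wmeas_integral (a b β γ : ℝ) (g : ℝ → ℝ) :
    ∫ x, g x ∂(wmeas a b β γ) = ∫ x in Ioo a b, g x * ((x - a) ^ β * (b - x) ^ γ) := by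
  unfold wmeas
  rw [integral_withDensity_eq_integral_smul (w_meas a b β γ)]
  exact setIntegral_congr_fun measurableSet_Ioo fun x hx => w_smul a b β γ g x hx

theorem wmeas_integrable (a b β γ : ℝ) (g : ℝ → ℝ) :
    Integrable g (wmeas a b β γ) ↔
      IntegrableOn (fun x => g x * ((x - a) ^ β * (b - x) ^ γ)) (Ioo a b) := by
  unfold wmeas
  rw [integrable_withDensity_iff_integrable_smul (w_meas a b β γ)]
  exact integrableOn_congr_fun (fun x hx => w_smul a b β γ g x hx) measurableSet_Ioo

theorem wmeas_ae (a b β γ : ℝ) : ∀ᵐ x ∂(wmeas a b β γ), x ∈ Ioo a b :=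
  (withDensity_absolutelyContinuous _ _).ae_le (ae_restrict_mem measurableSet_Ioo)

theorem wmeas_finite (a b β γ : ℝ) (hab : a < b) (hβ : -1 < β) (hγ : -1 < γ) :
    IsFiniteMeasure (wmeas a b β γ) := by
  have h : Integrable (fun _ : ℝ => (1 : ℝ)) (wmeas a b β γ) := by
    rw [wmeas_integrable]
    simpa using (beta_ab a b β γ hab hβ hγ).1
  rw [integrable_const_iff] at h
  simpa using h


theorem stmt2 (a b β γ q : ℝ) (hab : a < b) (hβ : -1 < β) (hγ : -1 < γ)
    (hmax : -(1 : ℝ) / 2 ≤ max β γ) (hq : 2 ≤ q) :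
    ∃ C : ℝ, 0 < C ∧ ∀ c : ℕ → ℝ,
      Summable (fun n : ℕ => |c (n + 1)| ^ q * ((n : ℝ) + 1) ^ ((max β γ + 3 / 2) * (q - 2))) →
      ∃ f : ℝ → ℝ, MemWLp a b β γ q f ∧
        Tendsto (fun N : ℕ => wnorm a b β γ q
            (fun x => (∑ n ∈ Finset.range N, c (n + 1) * jacobiP a b β γ (n + 1) x) - f x))
          atTop (nhds 0) ∧
        wnorm a b β γ q f ≤
          C * (∑' n : ℕ, |c (n + 1)| ^ q *
            ((n : ℝ) + 1) ^ ((max β γ + 3 / 2) * (q - 2))) ^ (1 / q) := by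
  have hfin : IsFiniteMeasure (wmeas a b β γ) := wmeas_finite a b β γ hab hβ hγ
  obtain ⟨K, hK, hsup⟩ := JK_sup a b β γ hab hβ hγ hmax
  obtain ⟨C, hC, H⟩ := abstract_conv (wmeas a b β γ)
    (fun n x => JK a b β γ (n + 1) * (JQ a b (n + 1) β γ).eval x)
    (fun n => ((JQ a b (n + 1) β γ).continuous.const_mul _ |>.aestronglyMeasurable))
    K (max β γ + 1 / 2) q hK (by linarith) hq
    (fun n => (wmeas_ae a b β γ).mono fun x hx => hsup n x hx)
    (fun m n => by rw [wmeas_integral]; exact JK_orth a b β γ hab hβ hγ m n)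
  have eM : max β γ + 1 / 2 + 1 = max β γ + 3 / 2 := by ring
  rw [eM] at H
  refine ⟨C, hC, fun c hc => ?_⟩
  obtain ⟨f, h1, h2, h3⟩ := H (fun n => c (n + 1)) hc
  refine ⟨f, ⟨measurableSet_Ioo, (wmeas_integrable a b β γ _).1 h1⟩, ?_, ?_⟩
  · refine h2.congr fun N => ?_
    unfold wnorm
    rw [wmeas_integral]
    congr 1
    refine setIntegral_congr_fun measurableSet_Ioo fun x hx => ?_
    simp only [jacobiP_eq a b β γ _ x hx]
  · unfold wnorm
    rw [wmeas_integral] at h3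
    exact h3
end

section
/- Let β,γ > -1 and α ∈ (-1,0). There exists a constant C > 0, depending only on α, β, γ, such that for all integers m ≥ 1 and 0 ≤ k ≤ m-1: I_{mk} ≤ C·m^{-2α-γ-3/2}. -/
open Real MeasureTheory Set Filter

open Asymptotics


/-- `I_{mk} = δ'_m·Γ(β+m+1)·(Π_{i=1}^{m-k}(m-k-α-i))/Γ(α+β+k+γ+m+2)`. -/
noncomputable def Imk (α β γ : ℝ) (m k : ℕ) : ℝ :=
  jacobiDelta β γ m * Real.Gamma (β + m + 1) *
    (∏ i ∈ Finset.Icc 1 (m - k), ((m : ℝ) - k - α - i)) /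
    Real.Gamma (α + β + k + γ + m + 2)

lemma aux_pos (c : ℝ) (hc : 0 < c) :
    Tendsto (fun n : ℕ => Real.Gamma ((n:ℝ) + 1 + c) / (n.factorial * (n:ℝ) ^ c)) atTop (nhds 1) := by
  have h1 := Real.GammaSeq_tendsto_Gamma c
  have hG : Real.Gamma c ≠ 0 := (Real.Gamma_pos_of_pos hc).ne'
  have h2 := (h1.inv₀ hG).const_mul (Real.Gamma c)
  rw [mul_inv_cancel₀ hG] at h2
  refine h2.congr fun n => ?_
  have h3 : ∀ N : ℕ, Real.Gamma ((N:ℝ) + c) = Real.Gamma c * ∏ j ∈ Finset.range N, (c + j) := by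
    intro N
    induction N with
    | zero => simp
    | succ N ih =>
      rw [Finset.prod_range_succ, ← mul_assoc, ← ih, show ((N+1:ℕ):ℝ) + c = ((N:ℝ) + c) + 1 by push_cast; ring,
        Real.Gamma_add_one (by positivity)]
      ring
  have h4 := h3 (n+1)
  push_cast at h4
  rw [h4, Real.GammaSeq, inv_div, mul_comm ((n:ℝ)^c), mul_div_assoc]

lemma aux_all (N : ℕ) : ∀ c : ℝ, 0 < c + N →
    Tendsto (fun n : ℕ => Real.Gamma ((n:ℝ) + 1 + c) / (n.factorial * (n:ℝ) ^ c)) atTop (nhds 1) := by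
  induction N with
  | zero => intro c hc; exact aux_pos c (by simpa using hc)
  | succ N ih =>
    intro c hc
    have h := ih (c+1) (by push_cast at hc; linarith)
    have h2 : Tendsto (fun n : ℕ => 1 + (1 + c) * ((n:ℝ))⁻¹) atTop (nhds 1) := by
      have := (tendsto_inv_atTop_nhds_zero_nat (𝕜 := ℝ)).const_mul (1 + c)
      simpa using this.const_add 1
    have h3 := h.div h2 one_ne_zero
    rw [div_one] at h3
    refine h3.congr' ?_
    have hev : ∀ᶠ n : ℕ in atTop, |c| + 1 < (n:ℝ) :=
      (tendsto_natCast_atTop_atTop (R := ℝ)).eventually_gt_atTop _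
    filter_upwards [hev] with n hn
    have hn0 : 0 < (n:ℝ) := by linarith [abs_nonneg c]
    have hnc : 0 < (n:ℝ) + 1 + c := by linarith [neg_abs_le c]
    have hp : 0 < (n:ℝ)^c := Real.rpow_pos_of_pos hn0 c
    have hf : 0 < (n.factorial : ℝ) := by positivity
    simp only [Pi.div_apply]
    rw [← add_assoc, Real.Gamma_add_one hnc.ne', Real.rpow_add_one hn0.ne']
    have h5 : 1 + (1 + c) * ((n:ℝ))⁻¹ = (n + 1 + c) / n := by field_simp; ring
    rw [h5]
    field_simp

lemma aux (c : ℝ) :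
    Tendsto (fun n : ℕ => Real.Gamma ((n:ℝ) + 1 + c) / (n.factorial * (n:ℝ) ^ c)) atTop (nhds 1) := by
  obtain ⟨N, hN⟩ := exists_nat_gt (-c)
  exact aux_all N c (by linarith)

lemma my_prod_eq (α : ℝ) (j : ℕ) :
    ∏ i ∈ Finset.Icc 1 j, ((j : ℝ) - α - i) = ∏ i ∈ Finset.range j, ((i:ℝ) - α) := by
  rw [← Finset.prod_range_reflect, ← Finset.Ico_succ_right_eq_Icc, Finset.prod_Ico_eq_prod_range]
  refine Finset.prod_congr (by simp) fun i hi => ?_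
  have : i < j := by simpa using hi
  have h1 : ((j - 1 - i : ℕ) : ℝ) = j - 1 - i := by
    rw [Nat.sub_sub, Nat.cast_sub (by omega)]; push_cast; ring
  rw [h1]; push_cast; ring

lemma prod_gamma (α : ℝ) (hα : α < 0) (N : ℕ) :
    Real.Gamma ((N:ℝ) - α) = Real.Gamma (-α) * ∏ j ∈ Finset.range N, ((j:ℝ) - α) := by
  induction N with
  | zero => simp
  | succ N ih =>
    have : (N:ℝ) - α ≠ 0 := by have : (0:ℝ) ≤ N := by positivity
                               linarith
    rw [Finset.prod_range_succ, ← mul_assoc, ← ih, show ((N+1:ℕ):ℝ) - α = ((N:ℝ) - α) + 1 by push_cast; ring,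
      Real.Gamma_add_one this]
    ring

lemma Imk_eq (α β γ : ℝ) (m k : ℕ) (h : k ≤ m) : Imk α β γ m k = 
    jacobiDelta β γ m * Real.Gamma (β + m + 1) *
    (∏ i ∈ Finset.range (m - k), ((i:ℝ) - α)) / Real.Gamma (α + β + k + γ + m + 2) := by
  rw [← my_prod_eq, Imk, Nat.cast_sub h]

lemma Imk_le (α β γ : ℝ) (hβ : -1 < β) (hγ : -1 < γ) (hα : -1 < α) (hα0 : α < 0) (m k : ℕ)
    (hk : k < m) : Imk α β γ m k ≤ Imk α β γ m 0 := by
  induction k with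
  | zero => exact le_rfl
  | succ k ih =>
    refine le_trans ?_ (ih (by omega))
    rw [Imk_eq _ _ _ _ _ hk.le, Imk_eq _ _ _ _ _ (by omega)]
    obtain ⟨j, rfl⟩ : ∃ j, m = k + 2 + j := ⟨m - (k+2), by omega⟩
    have e1 : k + 2 + j - (k+1) = j + 1 := by omega
    have e2 : k + 2 + j - k = (j + 1) + 1 := by omega
    rw [e1, e2, Finset.prod_range_succ _ (j+1)]
    have hx : 1 < α + β + k + γ + (k + 2 + j : ℕ) + 2 := by
      have : (0:ℝ) ≤ k := by positivity
      have : (0:ℝ) ≤ j := by positivity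
      push_cast; linarith
    rw [show α + β + (k + 1 : ℕ) + γ + (k + 2 + j : ℕ) + 2 = 
      (α + β + k + γ + (k + 2 + j : ℕ) + 2) + 1 by push_cast; ring, Real.Gamma_add_one (s := α + β + k + γ + (k + 2 + j : ℕ) + 2) (by linarith)]
    set x := α + β + k + γ + (k + 2 + j : ℕ) + 2
    have hG : 0 < Real.Gamma x := Real.Gamma_pos_of_pos (by linarith)
    have hD : 0 ≤ jacobiDelta β γ (k + 2 + j) := Real.sqrt_nonneg _
    have hB : 0 < Real.Gamma (β + (k + 2 + j : ℕ) + 1) := Real.Gamma_pos_of_pos (by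
      have : (0:ℝ) ≤ (k+2+j:ℕ) := by positivity
      linarith)
    have hP : 0 ≤ ∏ i ∈ Finset.range (j+1), ((i:ℝ) - α) := Finset.prod_nonneg fun i _ => by
      have : (0:ℝ) ≤ i := by positivity
      linarith
    have hl : 1 ≤ (((j + 1 : ℕ) : ℝ) - α) := by
      have : (0:ℝ) ≤ j := by positivity
      push_cast; linarith
    rw [← mul_assoc]
    have hT := mul_nonneg (mul_nonneg hD hB.le) hP
    exact div_le_div₀ (mul_nonneg hT (by linarith)) (le_mul_of_one_le_right hT hl) hG
      (le_mul_of_one_le_left hG.le hx.le)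

lemma Imk_zero_bound (α β γ : ℝ) (hβ : -1 < β) (hγ : -1 < γ) (hα : -1 < α) (hα0 : α < 0) :
    ∃ C : ℝ, 0 < C ∧ ∀ m : ℕ, 1 ≤ m → Imk α β γ m 0 ≤ C * (m : ℝ) ^ (-2 * α - γ - 3 / 2) := by
  have hlin : Tendsto (fun n : ℕ => 2 + (β + γ + 1) * ((n:ℝ))⁻¹) atTop (nhds 2) := by
    have := (tendsto_inv_atTop_nhds_zero_nat (𝕜 := ℝ)).const_mul (β + γ + 1)
    simpa using this.const_add 2
  have hs := ((hlin.mul (aux (β + γ))).div ((aux β).mul (aux γ)) (by norm_num)).sqrt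
  have hF := ((hs.mul (aux β)).mul ((aux (-α - 1)).div_const (Real.Gamma (-α)))).div
    (aux (α + β + γ + 1)) one_ne_zero
  obtain ⟨C, hC⟩ := hF.bddAbove_range
  refine ⟨max C 1, by positivity, fun m hm => ?_⟩
  have hCm := (hC ⟨m, rfl⟩).trans (le_max_left C 1)
  have hm0 : 0 < (m:ℝ) := by exact_mod_cast hm
  refine le_trans (le_of_eq ?_) (mul_le_mul_of_nonneg_right hCm (Real.rpow_nonneg hm0.le _))
  simp only [Pi.div_apply]
  rw [Imk_eq _ _ _ _ _ (Nat.zero_le _), jacobiDelta, Nat.sub_zero]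
  have hP := prod_gamma α hα0 m
  rw [show β + (m:ℝ) + 1 = m + 1 + β by ring, show γ + (m:ℝ) + 1 = m + 1 + γ by ring,
    show β + γ + (m:ℝ) + 1 = m + 1 + (β + γ) by ring,
    show α + β + (0:ℕ) + γ + (m:ℝ) + 2 = m + 1 + (α + β + γ + 1) by push_cast; ring,
    show (m:ℝ) + 1 + (-α - 1) = m - α by ring, hP]
  have hGa : Real.Gamma (-α) ≠ 0 := (Real.Gamma_pos_of_pos (by linarith)).ne'
  have hGb : Real.Gamma (m + 1 + β) ≠ 0 := (Real.Gamma_pos_of_pos (by linarith)).ne'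
  have hGg : Real.Gamma (m + 1 + γ) ≠ 0 := (Real.Gamma_pos_of_pos (by linarith)).ne'
  have hm1 : (1:ℝ) ≤ m := by exact_mod_cast hm
  have hGd : Real.Gamma (m + 1 + (α + β + γ + 1)) ≠ 0 := (Real.Gamma_pos_of_pos (by linarith)).ne'
  have hf : 0 < (m.factorial : ℝ) := by positivity
  have hb : 0 < (m:ℝ)^β := Real.rpow_pos_of_pos hm0 _
  have hg : 0 < (m:ℝ)^γ := Real.rpow_pos_of_pos hm0 _
  have ha : 0 < (m:ℝ)^α := Real.rpow_pos_of_pos hm0 _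
  have hsq : 0 < √(m:ℝ) := Real.sqrt_pos.2 hm0
  have harg : (β + γ + 2 * m + 1) * Real.Gamma (m + 1 + (β + γ)) /
      (m.factorial * Real.Gamma (m + 1 + β) * Real.Gamma (m + 1 + γ)) =
      ((2 + (β + γ + 1) * (m:ℝ)⁻¹) * (Real.Gamma (m + 1 + (β + γ)) / (m.factorial * (m:ℝ)^(β + γ))) /
      (Real.Gamma (m + 1 + β) / (m.factorial * (m:ℝ)^β) * 
        (Real.Gamma (m + 1 + γ) / (m.factorial * (m:ℝ)^γ)))) * (m / (m.factorial : ℝ)^2) := by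
    rw [Real.rpow_add hm0]
    field_simp
    ring
  rw [harg, Real.sqrt_mul' _ (by positivity), Real.sqrt_div hm0.le, Real.sqrt_sq hf.le]
  have e1 : (m:ℝ)^(-2 * α - γ - 3 / 2) = √(m:ℝ) / ((m:ℝ)^α * (m:ℝ)^α * (m:ℝ)^γ * m * m) := by
    rw [eq_div_iff (by positivity), Real.sqrt_eq_rpow]
    nth_rewrite 5 [← Real.rpow_one (m:ℝ)]
    nth_rewrite 6 [← Real.rpow_one (m:ℝ)]
    simp only [← Real.rpow_add hm0]
    congr 1; ring
  have e2 : (m:ℝ)^(-α - 1) = 1 / ((m:ℝ)^α * m) := by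
    rw [Real.rpow_sub_one hm0.ne', Real.rpow_neg hm0.le]; field_simp
  have e3 : (m:ℝ)^(α + β + γ + 1) = (m:ℝ)^α * (m:ℝ)^β * (m:ℝ)^γ * m := by
    rw [Real.rpow_add_one hm0.ne', Real.rpow_add hm0, Real.rpow_add hm0]
  rw [e1, e2, e3]
  generalize √((2 + (β + γ + 1) * (m:ℝ)⁻¹) * _ / _) = S
  field_simp

theorem stmt3 (α β γ : ℝ) (hβ : -1 < β) (hγ : -1 < γ) (hα : α ∈ Set.Ioo (-1 : ℝ) 0) :
    ∃ C : ℝ, 0 < C ∧ ∀ m k : ℕ, 1 ≤ m → k ≤ m - 1 →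
      Imk α β γ m k ≤ C * (m : ℝ) ^ (-2 * α - γ - 3 / 2) := by
  obtain ⟨C, hC, h⟩ := Imk_zero_bound α β γ hβ hγ hα.1 hα.2
  exact ⟨C, hC, fun m k hm hk =>
    (Imk_le α β γ hβ hγ hα.1 hα.2 m k (by omega)).trans (h m hm)⟩
end

section
/- Let β,γ > -1 and α ∈ (-1,0). There exists a constant C > 0, depending only on α, β, γ, such that for all integers m ≥ 1 and 0 ≤ k ≤ m-1: I_{mk} ≤ C·e^{2k}·m^{2ξ-2α-γ-5/2-2k}, where ξ is the Euler–Mascheroni constant. -/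
open Real MeasureTheory Set Filter

open Asymptotics


theorem aux_gprod (y : ℝ) (hy : 0 < y) (n : ℕ) :
    Real.Gamma (y + n) = Real.Gamma y * ∏ j ∈ Finset.range n, (y + j) := by
  induction n with
  | zero => simp
  | succ n ih =>
    rw [Finset.prod_range_succ, ← mul_assoc, ← ih]
    push_cast
    rw [← add_assoc, Real.Gamma_add_one (by positivity)]
    ring

theorem aux_bdd (u : ℕ → ℝ) (l : ℝ) (hu : Tendsto u atTop (nhds l)) :
    ∃ C : ℝ, 0 < C ∧ ∀ n, u n ≤ C := by
  obtain ⟨C, hC⟩ := hu.bddAbove_range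
  refine ⟨max C 1, by positivity, fun n => le_trans (hC ⟨n, rfl⟩) (le_max_left _ _)⟩

theorem aux_gam1 (y : ℝ) (hy : 0 < y) : ∃ c C : ℝ, 0 < c ∧ 0 < C ∧ ∀ m : ℕ, 1 ≤ m →
    c * (m.factorial * (m : ℝ) ^ y) ≤ Real.Gamma (y + m + 1) ∧
    Real.Gamma (y + m + 1) ≤ C * (m.factorial * (m : ℝ) ^ y) := by
  have hG := Real.Gamma_pos_of_pos hy
  have h1 := Real.GammaSeq_tendsto_Gamma y
  obtain ⟨A, hA, hA'⟩ := aux_bdd _ _ h1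
  obtain ⟨B, hB, hB'⟩ := aux_bdd _ _ (h1.inv₀ hG.ne')
  refine ⟨Real.Gamma y / A, Real.Gamma y * B, by positivity, by positivity, fun m hm => ?_⟩
  have hm' : (0:ℝ) < m := by exact_mod_cast hm
  have hP : 0 < ∏ j ∈ Finset.range (m+1), (y + j) :=
    Finset.prod_pos (fun j _ => by positivity)
  have e : Real.Gamma (y + m + 1) = Real.Gamma y * ∏ j ∈ Finset.range (m+1), (y + j) := by
    rw [← aux_gprod y hy]; push_cast; ring_nf
  have a1 := hA' m
  have b1 := hB' m
  simp only [Real.GammaSeq] at a1 b1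
  rw [e]
  set P := ∏ j ∈ Finset.range (m+1), (y + j)
  have hN : 0 < (m.factorial : ℝ) * (m : ℝ) ^ y := by positivity
  have a2 : (m.factorial : ℝ) * (m : ℝ) ^ y ≤ A * P := by
    rw [div_le_iff₀ hP] at a1; linarith
  have b2 : P ≤ B * (m.factorial * (m : ℝ) ^ y) := by
    rw [inv_div, div_le_iff₀ (by positivity)] at b1; linarith
  constructor
  · rw [div_mul_eq_mul_div, div_le_iff₀ hA]
    nlinarith
  · nlinarith

theorem aux_gam (x : ℝ) (hx : -2 < x) : ∃ c C : ℝ, 0 < c ∧ 0 < C ∧ ∀ m : ℕ, 1 ≤ m →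
    c * (m.factorial * (m : ℝ) ^ x) ≤ Real.Gamma (x + m + 1) ∧
    Real.Gamma (x + m + 1) ≤ C * (m.factorial * (m : ℝ) ^ x) := by
  obtain ⟨c, C, hc, hC, h⟩ := aux_gam1 (x + 2) (by linarith)
  have hk : 0 < min 1 (x + 2) := lt_min one_pos (by linarith)
  refine ⟨c / ((x + 3) * (x + 4)), C / min 1 (x+2),
    div_pos hc (mul_pos (by linarith) (by linarith)), by positivity, fun m hm => ?_⟩
  have hm1 : (1:ℝ) ≤ m := by exact_mod_cast hm
  have hm' : (0:ℝ) < m := by linarith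
  obtain ⟨h1, h2⟩ := h m hm
  have e : Real.Gamma (x + 2 + m + 1) = (x + m + 2) * ((x + m + 1) * Real.Gamma (x + m + 1)) := by
    rw [← Real.Gamma_add_one (by linarith), show x + 2 + m + 1 = (x + m + 2) + 1 by ring,
      Real.Gamma_add_one (by linarith)]
    ring_nf
  have hG : 0 < Real.Gamma (x + m + 1) := Real.Gamma_pos_of_pos (by linarith)
  rw [e, Real.rpow_add hm', Real.rpow_two] at h1 h2
  set G := Real.Gamma (x + m + 1)
  set N := (m.factorial : ℝ) * (m : ℝ) ^ x with hN
  have hNp : 0 < N := by positivity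
  rw [show (m.factorial : ℝ) * ((m : ℝ) ^ x * m ^ 2) = N * m ^ 2 by rw [hN]; ring] at h1 h2
  have k1 : (x + m + 2) * (x + m + 1) ≤ ((x+3)*(x+4)) * m^2 := by
    have : x + m + 2 ≤ (x + 3) * m := by nlinarith
    have : x + m + 1 ≤ (x + 4) * m := by nlinarith
    calc _ ≤ ((x + 3) * m) * ((x + 4) * m) := by
            apply mul_le_mul <;> nlinarith
      _ = _ := by ring
  have k2 : min 1 (x+2) * m^2 ≤ (x + m + 2) * (x + m + 1) := by
    have a : min 1 (x+2) * m ≤ x + m + 1 := by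
      rcases le_total 1 (x+2) with h | h
      · rw [min_eq_left h]; linarith
      · rw [min_eq_right h]; nlinarith
    have b : m ≤ x + m + 2 := by linarith
    calc _ = m * (min 1 (x+2) * m) := by ring
      _ ≤ _ := by apply mul_le_mul b a <;> first | positivity | linarith
  have hm2 : (0:ℝ) < m^2 := by positivity
  constructor
  · rw [div_mul_eq_mul_div, div_le_iff₀ (mul_pos (by linarith) (by linarith))]
    refine le_of_mul_le_mul_right ?_ hm2
    nlinarith [mul_le_mul_of_nonneg_left k1 hG.le]
  · rw [div_mul_eq_mul_div, le_div_iff₀ hk]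
    refine le_of_mul_le_mul_right ?_ hm2
    nlinarith [mul_le_mul_of_nonneg_left k2 hG.le]

theorem aux_fact (m : ℕ) : ∀ k : ℕ, k ≤ m →
    (m : ℝ) ^ k * (m - k).factorial ≤ Real.exp k * m.factorial := by
  have key : ∀ r : ℕ, ((r:ℝ)+1) ^ r ≤ Real.exp r * r.factorial := by
    intro r
    induction r with
    | zero => simp
    | succ r ih =>
      have hr : (0:ℝ) < (r:ℝ) + 1 := by positivity
      have h1 : (1 + 1/((r:ℝ)+1)) ≤ Real.exp (1/((r:ℝ)+1)) := by
        have := Real.add_one_le_exp (1/((r:ℝ)+1)); linarith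
      have h2 : (1 + 1/((r:ℝ)+1))^(r+1) ≤ Real.exp 1 := by
        calc _ ≤ (Real.exp (1/((r:ℝ)+1)))^(r+1) := by gcongr
          _ = _ := by
            rw [← Real.exp_nat_mul]; congr 1; push_cast; field_simp
      have e : ((r:ℝ)+1+1)^(r+1) = (((r:ℝ)+1)^r * ((r:ℝ)+1)) * (1 + 1/((r:ℝ)+1))^(r+1) := by
        rw [← pow_succ, ← mul_pow]; congr 1; field_simp
      push_cast
      rw [e, Nat.factorial_succ, Real.exp_add]
      push_cast
      calc _ ≤ ((Real.exp r * r.factorial) * ((r:ℝ)+1)) * Real.exp 1 := by gcongr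
        _ = _ := by ring
  -- induct on `m` for each fixed `k`
  have main : ∀ r k : ℕ, ((r + k : ℕ) : ℝ) ^ k * r.factorial ≤ Real.exp k * (r + k).factorial := by
    intro r k
    have h0 : ((k:ℝ)) ^ k ≤ Real.exp k * k.factorial := by
      calc ((k:ℝ))^k ≤ ((k:ℝ)+1)^k := by gcongr; linarith
        _ ≤ _ := key k
    induction r with
    | zero => simpa using h0
    | succ r ih =>
      have hA : (((r + 1 + k : ℕ) : ℝ)) ^ k * ((r:ℝ) + 1) ≤ ((r + k : ℕ) : ℝ)^k * ((r:ℝ)+1+k) := by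
        -- (1 - k/(n+1)) ≤ (1 - 1/(n+1))^k
        have hn : (0:ℝ) < (r:ℝ) + k + 1 := by positivity
        have hb := one_add_mul_le_pow (a := -(1/((r:ℝ)+k+1))) (by
          have : 1/((r:ℝ)+k+1) ≤ 1 := by
            rw [div_le_one hn]; have : (0:ℝ) ≤ r + k := by positivity
            linarith
          linarith) k
        have e1 : 1 + -(1/((r:ℝ)+k+1)) = ((r:ℝ)+k)/((r:ℝ)+k+1) := by field_simp; ring
        have e2 : 1 + (k:ℝ) * -(1/((r:ℝ)+k+1)) = ((r:ℝ)+1)/((r:ℝ)+k+1) := by field_simp; ring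
        rw [e1, e2, div_pow, div_le_div_iff₀ hn (by positivity)] at hb
        push_cast
        rw [show (r:ℝ)+1+k = r+k+1 by ring]
        linarith
      rw [show r + 1 + k = (r + k) + 1 by ring, Nat.factorial_succ, Nat.factorial_succ]
      rw [show r + 1 + k = (r + k) + 1 by ring] at hA
      push_cast at hA ih ⊢
      calc _ = (((r:ℝ) + k + 1) ^ k * ((r:ℝ) + 1)) * r.factorial := by ring
        _ ≤ (((r:ℝ) + k)^k * ((r:ℝ)+1+k)) * r.factorial := by gcongr
        _ = (((r:ℝ) + k)^k * r.factorial) * ((r:ℝ)+1+k) := by ring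
        _ ≤ (Real.exp k * (r + k).factorial) * ((r:ℝ)+1+k) := by gcongr
        _ = _ := by ring
  intro k hk
  have := main (m - k) k
  rwa [Nat.sub_add_cancel hk] at this

theorem aux_prod (a : ℝ) (ha : 0 < a) (r k : ℕ) :
    ((r + 1 + k : ℕ) : ℝ) ^ k * (∏ j ∈ Finset.range (r+1), (a + j)) ≤
      Real.exp (2 * k) * ∏ j ∈ Finset.range (r + 1 + k), (a + j) := by
  have hpos : ∀ n : ℕ, 0 < ∏ j ∈ Finset.range n, (a + j) :=
    fun n => Finset.prod_pos (fun j _ => by positivity)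
  have h1 : (∏ j ∈ Finset.range (r+1), (a + j)) * ((r+k).factorial : ℝ) ≤
      (∏ j ∈ Finset.range (r+1+k), (a + j)) * (r.factorial : ℝ) := by
    induction k with
    | zero => simp
    | succ k ih =>
      rw [← add_assoc, ← add_assoc, Finset.prod_range_succ _ (r+1+k), Nat.factorial_succ]
      have h := hpos (r+1+k)
      push_cast
      calc _ = ((∏ j ∈ Finset.range (r+1), (a + j)) * ((r+k).factorial : ℝ)) * (r+k+1) := by ring
        _ ≤ ((∏ j ∈ Finset.range (r+1+k), (a + j)) * (r.factorial : ℝ)) * (a + (r+1+k)) := by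
          apply mul_le_mul ih (by linarith) (by positivity) (by positivity)
        _ = _ := by ring
  have h2 := aux_fact (r + 1 + k) k (by omega)
  rw [show r + 1 + k - k = r + 1 by omega, show r + 1 + k = (r + k) + 1 by ring,
    Nat.factorial_succ, Nat.factorial_succ] at h2
  have h3 : (((r + k) + 1 : ℕ) : ℝ) ≤ (r + 1) * Real.exp k := by
    have : (k:ℝ) + 1 ≤ Real.exp k := Real.add_one_le_exp _
    push_cast
    have hr : (0:ℝ) ≤ r * k := by positivity
    nlinarith
  have h4 : (((r + k) + 1 : ℕ) : ℝ)^k * r.factorial ≤ Real.exp (2*k) * (r+k).factorial := by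
    have hr : (0:ℝ) < (r:ℝ) + 1 := by positivity
    refine le_of_mul_le_mul_right ?_ hr
    calc _ = (((r + k) + 1 : ℕ) : ℝ)^k * (((r+1) * r.factorial : ℕ) : ℝ) := by push_cast; ring
      _ ≤ _ := h2
      _ = Real.exp k * (r+k).factorial * (((r + k) + 1 : ℕ) : ℝ) := by push_cast; ring
      _ ≤ Real.exp k * (r+k).factorial * ((r + 1) * Real.exp k) := by gcongr
      _ = _ := by rw [two_mul, Real.exp_add]; ring
  rw [show r + 1 + k = (r + k) + 1 by ring] at h1 ⊢
  have hf : (0:ℝ) < (r+k).factorial := by positivity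
  refine le_of_mul_le_mul_right ?_ hf
  have := hpos (r+k+1)
  calc _ = (((r + k) + 1 : ℕ) : ℝ)^k *
        ((∏ j ∈ Finset.range (r+1), (a + j)) * ((r+k).factorial : ℝ)) := by ring
    _ ≤ (((r + k) + 1 : ℕ) : ℝ)^k *
        ((∏ j ∈ Finset.range (r+k+1), (a + j)) * (r.factorial : ℝ)) := by gcongr
    _ = ((((r + k) + 1 : ℕ) : ℝ)^k * r.factorial) * (∏ j ∈ Finset.range (r+k+1), (a + j)) := by
        ring
    _ ≤ (Real.exp (2*k) * (r+k).factorial) * (∏ j ∈ Finset.range (r+k+1), (a + j)) := by gcongr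
    _ = _ := by ring

theorem aux_shift (s : ℝ) (hs : -1 < s) : ∃ c : ℝ, 0 < c ∧ ∀ m k : ℕ, 1 ≤ m →
    c * ((m:ℝ)^k * Real.Gamma (s + m)) ≤ Real.Gamma (s + m + k) := by
  have hc : 0 < min 1 (s+1) := lt_min one_pos (by linarith)
  refine ⟨min 1 (s+1), hc, fun m k hm => ?_⟩
  have hm1 : (1:ℝ) ≤ m := by exact_mod_cast hm
  have hG : 0 < Real.Gamma (s + m) := Real.Gamma_pos_of_pos (by linarith)
  have h1 : min 1 (s+1) * m ≤ s + m := by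
    rcases le_total 1 (s+1) with h | h
    · rw [min_eq_left h]; linarith
    · rw [min_eq_right h]; nlinarith
  induction k with
  | zero =>
    simp
    have : min 1 (s+1) ≤ 1 := min_le_left _ _
    nlinarith
  | succ k ih =>
    push_cast
    rw [← add_assoc, Real.Gamma_add_one (by
      have : (0:ℝ) ≤ k := by positivity
      linarith)]
    rcases Nat.eq_zero_or_pos k with h | h
    · subst h
      simp
      nlinarith
    · have hk : (1:ℝ) ≤ k := by exact_mod_cast h
      have hp : 0 < min 1 (s+1) * ((m:ℝ)^k * Real.Gamma (s + m)) := by positivity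
      calc _ = m * (min 1 (s+1) * ((m:ℝ)^k * Real.Gamma (s + m))) := by ring
        _ ≤ _ := by apply mul_le_mul (by linarith) ih hp.le (by linarith)

theorem aux_delta (β γ : ℝ) (hβ : -1 < β) (hγ : -1 < γ) : ∃ C : ℝ, 0 < C ∧ ∀ m : ℕ, 1 ≤ m →
    jacobiDelta β γ m ≤ C * ((m:ℝ) ^ (1/2 : ℝ) / m.factorial) := by
  obtain ⟨_, C1, _, hC1, h1⟩ := aux_gam (β + γ) (by linarith)
  obtain ⟨c2, _, hc2, _, h2⟩ := aux_gam β (by linarith)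
  obtain ⟨c3, _, hc3, _, h3⟩ := aux_gam γ (by linarith)
  set K := |β + γ + 1| + 2 with hK
  have hKp : 0 < K := by positivity
  refine ⟨√(K * C1 / (c2 * c3)), by positivity, fun m hm => ?_⟩
  have hm1 : (1:ℝ) ≤ m := by exact_mod_cast hm
  have hm' : (0:ℝ) < m := by linarith
  have hF : (0:ℝ) < m.factorial := by positivity
  unfold jacobiDelta
  rw [← Real.sqrt_eq_rpow, mul_div_assoc', ← Real.sqrt_mul (by positivity)]
  rw [le_div_iff₀ hF, ← Real.sqrt_sq hF.le, ← Real.sqrt_mul' _ (by positivity)]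
  apply Real.sqrt_le_sqrt
  rw [Real.sqrt_sq hF.le]
  have p1 := (h1 m hm).2
  have p2 := (h2 m hm).1
  have p3 := (h3 m hm).1
  have q : β + γ + 2 * m + 1 ≤ K * m := by
    have := le_abs_self (β + γ + 1)
    have := abs_nonneg (β + γ + 1)
    nlinarith
  have hg2 : 0 < Real.Gamma (β + m + 1) := Real.Gamma_pos_of_pos (by linarith)
  have hg : 0 < Real.Gamma (β + γ + m + 1) := Real.Gamma_pos_of_pos (by linarith)
  calc _ ≤ (K * m) * (C1 * (m.factorial * (m:ℝ)^(β+γ))) /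
        (m.factorial * (c2 * (m.factorial * (m:ℝ)^β)) * (c3 * (m.factorial * (m:ℝ)^γ)))
          * (m.factorial : ℝ)^2 := by gcongr
    _ = _ := by
      rw [Real.rpow_add hm']
      have := Real.rpow_pos_of_pos hm' β
      have := Real.rpow_pos_of_pos hm' γ
      field_simp


theorem stmt4 (α β γ : ℝ) (hβ : -1 < β) (hγ : -1 < γ) (hα : α ∈ Set.Ioo (-1 : ℝ) 0) :
    ∃ C : ℝ, 0 < C ∧ ∀ m k : ℕ, 1 ≤ m → k ≤ m - 1 →
      Imk α β γ m k ≤ C * Real.exp (2 * k) *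
        (m : ℝ) ^ (2 * Real.eulerMascheroniConstant - 2 * α - γ - 5 / 2 - 2 * k) := by
  obtain ⟨hα1, hα0⟩ := hα
  obtain ⟨D, hD, hδ⟩ := aux_delta β γ hβ hγ
  obtain ⟨_, B, _, hB, hb⟩ := aux_gam β (by linarith)
  obtain ⟨_, A, _, hA, ha⟩ := aux_gam (-α - 1) (by linarith)
  obtain ⟨c, _, hc, _, hs⟩ := aux_gam (α + β + γ + 1) (by linarith)
  obtain ⟨d, hd, hsh⟩ := aux_shift (α + β + γ + 2) (by linarith)
  have hGa : 0 < Real.Gamma (-α) := Real.Gamma_pos_of_pos (by linarith)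
  refine ⟨D * B * (A / Real.Gamma (-α)) / (d * c), by positivity, fun m k hm hk => ?_⟩
  have hm1 : (1:ℝ) ≤ m := by exact_mod_cast hm
  have hm' : (0:ℝ) < m := by linarith
  have hF : (0:ℝ) < m.factorial := by positivity
  have hξ := Real.one_half_lt_eulerMascheroniConstant
  obtain ⟨r, rfl⟩ : ∃ r, m = r + 1 + k := ⟨m - 1 - k, by omega⟩
  have eP : (∏ i ∈ Finset.Icc 1 (r + 1 + k - k), (((r + 1 + k : ℕ) : ℝ) - k - α - i)) =
      ∏ j ∈ Finset.range (r + 1), (-α + j) := by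
    rw [Nat.add_sub_cancel]
    refine Finset.prod_bij' (fun i _ => r + 1 - i) (fun j _ => r + 1 - j) ?_ ?_ ?_ ?_ ?_
    · intro i hi; simp at hi ⊢; omega
    · intro i hi; simp at hi ⊢; omega
    · intro i hi; simp at hi ⊢; omega
    · intro i hi; simp at hi ⊢; omega
    · intro i hi
      rw [Finset.mem_Icc] at hi
      rw [Nat.cast_sub hi.2]; push_cast; ring
  have hP := aux_prod (-α) (by linarith) r k
  have hPm : (∏ j ∈ Finset.range (r + 1 + k), (-α + j)) =
      Real.Gamma (-α + (r + 1 + k : ℕ)) / Real.Gamma (-α) := by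
    rw [aux_gprod _ (by linarith)]; field_simp
  have hPpos : 0 < ∏ j ∈ Finset.range (r + 1), (-α + (j:ℝ)) :=
    Finset.prod_pos (fun j _ => by have : (0:ℝ) ≤ j := by positivity
                                   linarith)
  unfold Imk
  rw [eP]
  rw [hPm] at hP
  set m := r + 1 + k with hmdef
  have p1 := hδ m hm
  have p2 := (hb m hm).2
  have p3 := (ha m hm).2
  have p4 := (hs m hm).1
  have p5 := hsh m k hm
  rw [show -α - 1 + (m:ℝ) + 1 = -α + m by ring] at p3
  rw [show α + β + γ + 1 + (m:ℝ) + 1 = α + β + γ + 2 + m by ring] at p4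
  rw [show α + β + k + γ + m + 2 = α + β + γ + 2 + m + k by ring]
  set P := ∏ j ∈ Finset.range (r + 1), (-α + (j:ℝ))
  have hmk : (0:ℝ) < (m:ℝ)^k := by positivity
  have p6 : P ≤ Real.exp (2*k) * ((A * (m.factorial * (m:ℝ)^(-α-1))) / Real.Gamma (-α)) / (m:ℝ)^k := by
    rw [le_div_iff₀ hmk]
    calc _ = (m:ℝ)^k * P := by ring
      _ ≤ _ := hP
      _ ≤ _ := by gcongr
  have p7 : d * ((m:ℝ)^k * (c * (m.factorial * (m:ℝ)^(α+β+γ+1)))) ≤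
      Real.Gamma (α + β + γ + 2 + m + k) := le_trans (by gcongr) p5
  have hGb : 0 < Real.Gamma (β + m + 1) := Real.Gamma_pos_of_pos (by linarith)
  calc _ ≤ (D * ((m:ℝ) ^ (1/2 : ℝ) / m.factorial)) * (B * (m.factorial * (m:ℝ)^β)) *
        (Real.exp (2*k) * ((A * (m.factorial * (m:ℝ)^(-α-1))) / Real.Gamma (-α)) / (m:ℝ)^k) /
        (d * ((m:ℝ)^k * (c * (m.factorial * (m:ℝ)^(α+β+γ+1))))) := by gcongr
    _ = D * B * (A / Real.Gamma (-α)) / (d * c) * Real.exp (2*k) *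
        ((m:ℝ)^(1/2:ℝ) * (m:ℝ)^β * (m:ℝ)^(-α-1) / ((m:ℝ)^k * (m:ℝ)^k * (m:ℝ)^(α+β+γ+1))) := by
      have := Real.rpow_pos_of_pos hm' (α+β+γ+1)
      field_simp
    _ = D * B * (A / Real.Gamma (-α)) / (d * c) * Real.exp (2*k) *
        (m:ℝ)^(-2 * α - γ - 3/2 - 2 * k) := by
      rw [← Real.rpow_natCast, ← Real.rpow_add hm', ← Real.rpow_add hm', ← Real.rpow_add hm',
        ← Real.rpow_add hm', ← Real.rpow_sub hm']
      congr 2; ring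
    _ ≤ _ := by
      refine mul_le_mul_of_nonneg_left ?_ (by positivity)
      exact Real.rpow_le_rpow_of_exponent_le hm1 (by linarith)
end

section
/- Let γ > -1. For every positive integer η there exists N such that for all integers k > N: d_{k+1}(η) < d_k(η), i.e. the sequence (d_k(η))_k is eventually strictly decreasing. -/
open Real MeasureTheory Set Filter

open Asymptotics


/-- `d_k(η) = η^k·Σ_{i=0}^k 2^i/(i!·(k-i)!·Γ(γ+i+1))`. -/
noncomputable def dSeq (γ : ℝ) (η : ℕ) (k : ℕ) : ℝ :=
  (η : ℝ) ^ k * ∑ i ∈ Finset.range (k + 1),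
    (2 : ℝ) ^ i / (i.factorial * (k - i).factorial * Real.Gamma (γ + i + 1))

lemma aux_S (γ : ℝ) (hγ : -1 < γ) (k : ℕ) :
    ((k : ℝ) + 1) * ∑ i ∈ Finset.range (k + 1 + 1),
      (2 : ℝ) ^ i / (i.factorial * (k + 1 - i).factorial * Real.Gamma (γ + i + 1)) ≤
    (1 + 2 / (γ + 1)) * ∑ i ∈ Finset.range (k + 1),
      (2 : ℝ) ^ i / (i.factorial * (k - i).factorial * Real.Gamma (γ + i + 1)) := by
  have hg : ∀ i : ℕ, 0 < Real.Gamma (γ + i + 1) := fun i =>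
    Real.Gamma_pos_of_pos (by have : (0 : ℝ) ≤ i := Nat.cast_nonneg i
                              linarith)
  have h1 : ((k : ℝ) + 1) * ∑ i ∈ Finset.range (k + 1 + 1),
      (2 : ℝ) ^ i / (i.factorial * (k + 1 - i).factorial * Real.Gamma (γ + i + 1)) =
      ∑ i ∈ Finset.range (k + 1 + 1), (i : ℝ) *
        ((2 : ℝ) ^ i / (i.factorial * (k + 1 - i).factorial * Real.Gamma (γ + i + 1))) +
      ∑ i ∈ Finset.range (k + 1 + 1), ((k : ℝ) + 1 - i) *
        ((2 : ℝ) ^ i / (i.factorial * (k + 1 - i).factorial * Real.Gamma (γ + i + 1))) := by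
    rw [Finset.mul_sum, ← Finset.sum_add_distrib]
    refine Finset.sum_congr rfl fun i _ => ?_
    ring
  rw [h1, Finset.sum_range_succ', Finset.sum_range_succ (fun i : ℕ => ((k : ℝ) + 1 - i) *
        ((2 : ℝ) ^ i / (i.factorial * (k + 1 - i).factorial * Real.Gamma (γ + i + 1))))]
  have e1 : ((0 : ℕ) : ℝ) = 0 := Nat.cast_zero
  have e2 : (k : ℝ) + 1 - ((k + 1 : ℕ) : ℝ) = 0 := by push_cast; ring
  rw [e1, e2, zero_mul, zero_mul, add_zero, add_zero, ← Finset.sum_add_distrib, Finset.mul_sum]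
  refine Finset.sum_le_sum fun i hi => ?_
  have hi' : i ≤ k := by simpa [Nat.lt_succ_iff] using hi
  obtain ⟨j, rfl⟩ := Nat.exists_eq_add_of_le hi'
  have f1 : i + j + 1 - (i + 1) = j := by omega
  have f2 : i + j + 1 - i = j + 1 := by omega
  have f3 : i + j - i = j := by omega
  rw [f1, f2, f3, Nat.factorial_succ, Nat.factorial_succ]
  have hi0 : (0 : ℝ) ≤ i := Nat.cast_nonneg i
  have hj0 : (0 : ℝ) ≤ j := Nat.cast_nonneg j
  have hp : 0 < γ + i + 1 := by linarith
  have hG : Real.Gamma (γ + ((i + 1 : ℕ) : ℝ) + 1) = (γ + i + 1) * Real.Gamma (γ + i + 1) := by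
    rw [← Real.Gamma_add_one hp.ne']
    congr 1
    push_cast; ring
  rw [hG]
  have hgi := hg i
  have hfi : (0 : ℝ) < i.factorial := by exact_mod_cast i.factorial_pos
  have hfj : (0 : ℝ) < j.factorial := by exact_mod_cast j.factorial_pos
  set G := Real.Gamma (γ + i + 1)
  have hT : 0 < (2 : ℝ) ^ i / (i.factorial * j.factorial * G) := by positivity
  have a1 : ((i + 1 : ℕ) : ℝ) * ((2 : ℝ) ^ (i + 1) /
      (((i + 1) * i.factorial : ℕ) * j.factorial * ((γ + i + 1) * G))) =
      2 / (γ + i + 1) * ((2 : ℝ) ^ i / (i.factorial * j.factorial * G)) := by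
    push_cast
    field_simp
    ring
  have a2 : (((i + j : ℕ) : ℝ) + 1 - i) * ((2 : ℝ) ^ i /
      (i.factorial * ((j + 1) * j.factorial : ℕ) * G)) =
      ((2 : ℝ) ^ i / (i.factorial * j.factorial * G)) := by
    push_cast
    have : (i : ℝ) + j + 1 - i = j + 1 := by ring
    rw [this]
    field_simp
  rw [a1, a2]
  have hle : 2 / (γ + i + 1) ≤ 2 / (γ + 1) := by
    apply div_le_div_of_nonneg_left <;> linarith
  nlinarith [mul_le_mul_of_nonneg_right hle hT.le]

theorem stmt5 (γ : ℝ) (hγ : -1 < γ) :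
    ∀ η : ℕ, 0 < η → ∃ N : ℕ, ∀ k : ℕ, N < k → dSeq γ η (k + 1) < dSeq γ η k := by
  intro η hη
  obtain ⟨N, hN⟩ := exists_nat_gt ((η : ℝ) * (1 + 2 / (γ + 1)))
  refine ⟨N, fun k hk => ?_⟩
  have h := aux_S γ hγ k
  have hη' : (0 : ℝ) < η := by exact_mod_cast hη
  have hkN : (N : ℝ) < k := by exact_mod_cast hk
  unfold dSeq
  have hS : 0 < ∑ i ∈ Finset.range (k + 1),
      (2 : ℝ) ^ i / (i.factorial * (k - i).factorial * Real.Gamma (γ + i + 1)) := by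
    refine Finset.sum_pos (fun i _ => ?_) ⟨0, by simp⟩
    have : (0 : ℝ) ≤ i := Nat.cast_nonneg i
    have hg : 0 < Real.Gamma (γ + i + 1) := Real.Gamma_pos_of_pos (by linarith)
    positivity
  set S := ∑ i ∈ Finset.range (k + 1),
      (2 : ℝ) ^ i / (i.factorial * (k - i).factorial * Real.Gamma (γ + i + 1))
  set S' := ∑ i ∈ Finset.range (k + 1 + 1),
      (2 : ℝ) ^ i / (i.factorial * (k + 1 - i).factorial * Real.Gamma (γ + i + 1))
  rw [pow_succ, mul_assoc]
  refine mul_lt_mul_of_pos_left ?_ (pow_pos hη' k)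
  have hk1 : (0 : ℝ) < (k : ℝ) + 1 := by positivity
  refine lt_of_mul_lt_mul_left ?_ hk1.le
  calc ((k : ℝ) + 1) * (η * S') = η * (((k : ℝ) + 1) * S') := by ring
    _ ≤ η * ((1 + 2 / (γ + 1)) * S) := mul_le_mul_of_nonneg_left h hη'.le
    _ = (η * (1 + 2 / (γ + 1))) * S := by ring
    _ < ((k : ℝ) + 1) * S := mul_lt_mul_of_pos_right (by linarith) hS
end

section
/- Suppose β,γ ∈ [-1/2,1/2], α ∈ (-1,0), and (f_n)_{n≥0} is a real sequence such that Σ_{n=0}^∞ |f_n|·c_n < ∞. Then there exists a constant C > 0 such that for all integers m ≥ 1: Σ_{n=0}^∞ |f_n·A^{α,γ,β}_{mn}| ≤ C·m^{-2α-γ-3/2}. -/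
open Real MeasureTheory Set Filter

open Asymptotics

lemma aux_seq_bdd (u : ℕ → ℝ) (l : ℝ) (hl : 0 < l) (hu : ∀ n, 1 ≤ n → 0 < u n)
    (h : Tendsto u atTop (nhds l)) :
    ∃ c C : ℝ, 0 < c ∧ 0 < C ∧ ∀ n, 1 ≤ n → c ≤ u n ∧ u n ≤ C := by
  have key : ∀ (v : ℕ → ℝ) (l' : ℝ), Tendsto v atTop (nhds l') →
      ∃ C : ℝ, 0 < C ∧ ∀ n, v n ≤ C := by
    intro v l' hv
    obtain ⟨B, hB⟩ := hv.bddAbove_range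
    exact ⟨max B 1, lt_max_of_lt_right one_pos,
      fun n => (hB (Set.mem_range_self n)).trans (le_max_left _ _)⟩
  obtain ⟨C, hC, h1⟩ := key u l h
  obtain ⟨D, hD, h2⟩ := key (fun n => (u n)⁻¹) l⁻¹ (h.inv₀ hl.ne')
  refine ⟨D⁻¹, C, inv_pos.2 hD, hC, fun n hn => ⟨?_, h1 n⟩⟩
  exact inv_le_of_inv_le₀ (hu n hn) (h2 n)

lemma aux_Gamma_prod (s : ℝ) (hs : 0 < s) (n : ℕ) :
    Real.Gamma (s + n + 1) = (∏ j ∈ Finset.range (n + 1), (s + j)) * Real.Gamma s := by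
  induction n with
  | zero => simp [Real.Gamma_add_one hs.ne']
  | succ n ih =>
    rw [Finset.prod_range_succ, Real.Gamma_add_one (s := s + ((n + 1 : ℕ) : ℝ)) (by positivity)]
    push_cast
    rw [← add_assoc, ih]; ring

lemma aux_G (a : ℝ) (ha : -2 < a) :
    ∃ c C : ℝ, 0 < c ∧ 0 < C ∧ ∀ m : ℕ, 1 ≤ m →
      c * ((m : ℝ) ^ a * m.factorial) ≤ Real.Gamma (m + 1 + a) ∧
      Real.Gamma (m + 1 + a) ≤ C * ((m : ℝ) ^ a * m.factorial) := by
  have hs : 0 < a + 2 := by linarith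
  have hpos : ∀ m : ℕ, 1 ≤ m → 0 < Real.Gamma (m + 1 + a) := by
    intro m hm
    have : (1 : ℝ) ≤ m := by exact_mod_cast hm
    exact Real.Gamma_pos_of_pos (by linarith)
  have hG := Real.Gamma_pos_of_pos hs
  have heq : ∀ m : ℕ, 1 ≤ m → Real.Gamma (m + 1 + a) / ((m : ℝ) ^ a * m.factorial) =
      Real.Gamma (a + 2) / Real.GammaSeq (a + 2) m *
        (((m : ℝ) / (m + (1 + a))) * ((m : ℝ) / (m + (2 + a)))) := by
    intro m hm
    have h1 : (1 : ℝ) ≤ m := by exact_mod_cast hm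
    have h0 : (0 : ℝ) < m := by linarith
    have e1 := aux_Gamma_prod (a + 2) hs m
    have e2 : Real.Gamma (a + 2 + m + 1) = (m + (2 + a)) * ((m + (1 + a)) * Real.Gamma (m + 1 + a)) := by
      have : a + 2 + m + 1 = (m + 1 + a + 1) + 1 := by ring
      rw [this, Real.Gamma_add_one (s := m + 1 + a + 1) (by linarith), Real.Gamma_add_one (s := m + 1 + a) (by linarith)]
      ring
    have hP : 0 < ∏ j ∈ Finset.range (m + 1), (a + 2 + (j : ℝ)) :=
      Finset.prod_pos fun j _ => by positivity
    have hx : (0 : ℝ) < m + (1 + a) := by linarith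
    have hy : (0 : ℝ) < m + (2 + a) := by linarith
    unfold Real.GammaSeq
    have e3 : (m : ℝ) ^ (a + 2) = (m : ℝ) ^ a * (m : ℝ) ^ 2 := by
      rw [Real.rpow_add h0]; norm_num
    rw [e3]
    have hr : 0 < (m : ℝ) ^ a := Real.rpow_pos_of_pos h0 a
    have hf : (0 : ℝ) < m.factorial := by exact_mod_cast m.factorial_pos
    rw [e2] at e1
    generalize (∏ j ∈ Finset.range (m + 1), (a + 2 + (j : ℝ))) = P at *
    have : Real.Gamma (m + 1 + a) = P * Real.Gamma (a + 2) / ((m + (2 + a)) * (m + (1 + a))) := by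
      rw [eq_div_iff (by positivity)]; linarith
    rw [this]
    field_simp
  have hlim : ∀ b : ℝ, Tendsto (fun m : ℕ => (m : ℝ) / (m + b)) atTop (nhds 1) := fun b => by
    simpa using tendsto_natCast_div_add_atTop b
  have ht : Tendsto (fun m : ℕ => Real.Gamma (m + 1 + a) / ((m : ℝ) ^ a * m.factorial))
      atTop (nhds 1) := by
    have h1 : Tendsto (fun m : ℕ => Real.Gamma (a + 2) / Real.GammaSeq (a + 2) m *
        (((m : ℝ) / (m + (1 + a))) * ((m : ℝ) / (m + (2 + a))))) atTop
        (nhds (Real.Gamma (a + 2) / Real.Gamma (a + 2) * (1 * 1))) :=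
      (tendsto_const_nhds.div (Real.GammaSeq_tendsto_Gamma (a + 2)) hG.ne').mul
        ((hlim _).mul (hlim _))
    rw [div_self hG.ne'] at h1
    simp only [mul_one] at h1
    refine h1.congr' ?_
    filter_upwards [eventually_ge_atTop 1] with m hm
    exact (heq m hm).symm
  have hd : ∀ m : ℕ, 1 ≤ m → 0 < (m : ℝ) ^ a * m.factorial := by
    intro m hm
    have : (0 : ℝ) < m := by exact_mod_cast hm
    positivity
  obtain ⟨c, C, hc, hC, h⟩ := aux_seq_bdd _ 1 one_pos
    (fun m hm => div_pos (hpos m hm) (hd m hm)) ht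
  refine ⟨c, C, hc, hC, fun m hm => ?_⟩
  obtain ⟨h1, h2⟩ := h m hm
  exact ⟨(le_div_iff₀ (hd m hm)).1 h1, (div_le_iff₀ (hd m hm)).1 h2⟩

lemma aux_delta_V (α β γ : ℝ) (hβ : β ∈ Set.Icc (-(1 : ℝ) / 2) (1 / 2))
    (hγ : γ ∈ Set.Icc (-(1 : ℝ) / 2) (1 / 2)) (hα : α ∈ Set.Ioo (-1 : ℝ) 0) :
    ∃ C : ℝ, 0 < C ∧ ∀ m : ℕ, 1 ≤ m →
      jacobiDelta γ β m * (Real.Gamma (β + m + 1) * Real.Gamma (m - α) /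
        Real.Gamma (α + γ + β + m + 2)) ≤ C * (m : ℝ) ^ (-2 * α - γ - 3 / 2) := by
  obtain ⟨hβ1, hβ2⟩ := hβ
  obtain ⟨hγ1, hγ2⟩ := hγ
  obtain ⟨hα1, hα2⟩ := hα
  obtain ⟨c1, C1, hc1, hC1, h1⟩ := aux_G (γ + β) (by linarith)
  obtain ⟨c2, C2, hc2, hC2, h2⟩ := aux_G β (by linarith)
  obtain ⟨c3, C3, hc3, hC3, h3⟩ := aux_G γ (by linarith)
  obtain ⟨c4, C4, hc4, hC4, h4⟩ := aux_G (-1 - α) (by linarith)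
  obtain ⟨c5, C5, hc5, hC5, h5⟩ := aux_G (α + γ + β + 1) (by linarith)
  refine ⟨Real.sqrt (4 * C1 / (c2 * c3)) * (C2 * C4 / c5), by positivity, fun m hm => ?_⟩
  have hm1 : (1 : ℝ) ≤ m := by exact_mod_cast hm
  have hm0 : (0 : ℝ) < m := by linarith
  have hF : (0 : ℝ) < m.factorial := by exact_mod_cast m.factorial_pos
  obtain ⟨-, h1⟩ := h1 m hm
  obtain ⟨h2', h2⟩ := h2 m hm
  obtain ⟨h3, -⟩ := h3 m hm
  obtain ⟨-, h4⟩ := h4 m hm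
  obtain ⟨h5, -⟩ := h5 m hm
  rw [show (m : ℝ) + 1 + (γ + β) = γ + β + m + 1 by ring] at h1
  rw [show (m : ℝ) + 1 + β = β + m + 1 by ring] at h2 h2'
  rw [show (m : ℝ) + 1 + γ = γ + m + 1 by ring] at h3
  rw [show (m : ℝ) + 1 + (-1 - α) = m - α by ring] at h4
  rw [show (m : ℝ) + 1 + (α + γ + β + 1) = α + γ + β + m + 2 by ring] at h5
  set F : ℝ := (m.factorial : ℝ) with hFd
  have p1 := Real.rpow_pos_of_pos hm0 β
  have p2 := Real.rpow_pos_of_pos hm0 γ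
  have p3 := Real.rpow_pos_of_pos hm0 (-1 - α)
  have p4 := Real.rpow_pos_of_pos hm0 (α + γ + β + 1)
  have g1 : 0 < Real.Gamma (γ + β + m + 1) := Real.Gamma_pos_of_pos (by linarith)
  have g2 : 0 < Real.Gamma (β + m + 1) := Real.Gamma_pos_of_pos (by linarith)
  have g3 : 0 < Real.Gamma (γ + m + 1) := Real.Gamma_pos_of_pos (by linarith)
  have g4 : 0 < Real.Gamma (m - α) := Real.Gamma_pos_of_pos (by linarith)
  have g5 : 0 < Real.Gamma (α + γ + β + m + 2) := Real.Gamma_pos_of_pos (by linarith)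
  have hδ : jacobiDelta γ β m ≤ Real.sqrt (4 * C1 / (c2 * c3)) * ((m : ℝ) ^ (1 / 2 : ℝ) / F) := by
    have e : (m : ℝ) ^ (1 / 2 : ℝ) / F = Real.sqrt (m / F ^ 2) := by
      rw [Real.sqrt_div hm0.le, Real.sqrt_sq hF.le, Real.sqrt_eq_rpow]
    rw [e, ← Real.sqrt_mul (by positivity)]
    unfold jacobiDelta
    apply Real.sqrt_le_sqrt
    calc _ ≤ (4 * m) * (C1 * ((m : ℝ) ^ (γ + β) * F)) /
          (F * (c3 * ((m : ℝ) ^ γ * F)) * (c2 * ((m : ℝ) ^ β * F))) := by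
            gcongr
            linarith
      _ = _ := by
        rw [Real.rpow_add hm0]
        field_simp
  have hV : Real.Gamma (β + m + 1) * Real.Gamma (m - α) / Real.Gamma (α + γ + β + m + 2) ≤
      C2 * C4 / c5 * (F * (m : ℝ) ^ (-2 * α - γ - 2)) := by
    have e : (m : ℝ) ^ (-2 * α - γ - 2) = (m : ℝ) ^ β * (m : ℝ) ^ (-1 - α) /
        (m : ℝ) ^ (α + γ + β + 1) := by
      rw [← Real.rpow_add hm0, ← Real.rpow_sub hm0]; congr 1; ring
    calc _ ≤ (C2 * ((m : ℝ) ^ β * F)) * (C4 * ((m : ℝ) ^ (-1 - α) * F)) /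
        (c5 * ((m : ℝ) ^ (α + γ + β + 1) * F)) := by gcongr
      _ = _ := by rw [e]; field_simp
  have e : (m : ℝ) ^ (-2 * α - γ - 3 / 2) = (m : ℝ) ^ (1 / 2 : ℝ) * (m : ℝ) ^ (-2 * α - γ - 2) := by
    rw [← Real.rpow_add hm0]; congr 1; ring
  calc _ ≤ (Real.sqrt (4 * C1 / (c2 * c3)) * ((m : ℝ) ^ (1 / 2 : ℝ) / F)) *
        (C2 * C4 / c5 * (F * (m : ℝ) ^ (-2 * α - γ - 2))) := by gcongr
    _ = _ := by rw [e]; field_simp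

lemma aux_eta (α : ℝ) (hα : α ∈ Set.Ioo (-1 : ℝ) 0) (z : ℤ) :
    min (-α) (1 + α) ≤ |z + α| := by
  obtain ⟨h1, h2⟩ := hα
  rcases le_or_gt z 0 with h | h
  · have : (z : ℝ) ≤ 0 := by exact_mod_cast h
    exact (min_le_left _ _).trans (le_abs.2 (Or.inr (by linarith)))
  · have : (1 : ℝ) ≤ z := by exact_mod_cast h
    exact (min_le_right _ _).trans (le_abs.2 (Or.inl (by linarith)))

lemma aux_refl (α : ℝ) (hα : α ∈ Set.Ioo (-1 : ℝ) 0) (m : ℕ) :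
    |(Real.Gamma (α - m + 1))⁻¹| ≤ Real.Gamma (m - α) := by
  obtain ⟨h1, h2⟩ := hα
  have hg : 0 < Real.Gamma (m - α) := Real.Gamma_pos_of_pos (by
    have : (0 : ℝ) ≤ m := m.cast_nonneg
    linarith)
  have h := Real.Gamma_mul_Gamma_one_sub (m - α)
  rw [show 1 - ((m : ℝ) - α) = α - m + 1 by ring] at h
  have h' : (Real.Gamma (α - m + 1))⁻¹ = Real.Gamma (m - α) * (Real.sin (π * (m - α)) / π) := by
    rcases eq_or_ne (Real.Gamma (α - m + 1)) 0 with h0 | h0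
    · rw [h0] at h ⊢
      have : Real.sin (π * (m - α)) = 0 := by
        by_contra hs
        have : π / Real.sin (π * (m - α)) ≠ 0 := div_ne_zero Real.pi_ne_zero hs
        exact this (by rw [← h]; simp)
      simp [this]
    · have hs : Real.sin (π * (m - α)) ≠ 0 := by
        intro hs
        rw [hs, div_zero] at h
        exact (mul_ne_zero hg.ne' h0) h
      have hp := Real.pi_ne_zero
      generalize Real.sin (π * (m - α)) = S at *
      field_simp at h ⊢
      linarith
  rw [h', abs_mul, abs_of_pos hg]
  apply mul_le_of_le_one_right hg.le
  rw [abs_div, abs_of_pos Real.pi_pos, div_le_one Real.pi_pos]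
  exact (Real.abs_sin_le_one _).trans (by linarith [Real.pi_gt_three])

lemma aux_U (α β γ : ℝ) (hβ : β ∈ Set.Icc (-(1 : ℝ) / 2) (1 / 2))
    (hγ : γ ∈ Set.Icc (-(1 : ℝ) / 2) (1 / 2)) (hα : α ∈ Set.Ioo (-1 : ℝ) 0) :
    ∃ C K : ℝ, 0 < C ∧ 1 ≤ K ∧ ∀ m : ℕ, 1 ≤ m → ∀ k : ℕ,
      |betaB (α + γ + k + 1) (β + m + 1) / Real.Gamma ((k : ℝ) + α - m + 1)| ≤
        C * K ^ k * (Real.Gamma (β + m + 1) * Real.Gamma (m - α) /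
          Real.Gamma (α + γ + β + m + 2)) := by
  have hα' := hα
  obtain ⟨hβ1, hβ2⟩ := hβ
  obtain ⟨hγ1, hγ2⟩ := hγ
  obtain ⟨hα1, hα2⟩ := hα
  set η := min (-α) (1 + α) with hη
  have hη0 : 0 < η := lt_min (by linarith) (by linarith)
  have hη1 : η ≤ 1 := (min_le_left _ _).trans (by linarith)
  have hK : 1 ≤ η⁻¹ := (one_le_inv₀ hη0).2 hη1
  refine ⟨max |Real.Gamma (α + γ + 1)| |Real.Gamma (α + γ + 2)|, η⁻¹,
    lt_max_of_lt_right (abs_pos.2 (Real.Gamma_pos_of_pos (by linarith)).ne'), hK, ?_⟩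
  intro m hm
  have hm1 : (1 : ℝ) ≤ m := by exact_mod_cast hm
  have g2 : 0 < Real.Gamma (β + m + 1) := Real.Gamma_pos_of_pos (by linarith)
  have g4 : 0 < Real.Gamma (m - α) := Real.Gamma_pos_of_pos (by linarith)
  have g5 : 0 < Real.Gamma (α + γ + β + m + 2) := Real.Gamma_pos_of_pos (by linarith)
  have hr := aux_refl α hα' m
  set M := max |Real.Gamma (α + γ + 1)| |Real.Gamma (α + γ + 2)| with hM
  have hstep : ∀ k : ℕ, |(Real.Gamma (((k + 1 : ℕ) : ℝ) + α - m + 1))⁻¹| ≤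
      η⁻¹ * |(Real.Gamma ((k : ℝ) + α - m + 1))⁻¹| := by
    intro k
    have he := aux_eta α hα' ((k : ℤ) - m + 1)
    push_cast at he
    rw [show (k : ℝ) - m + 1 + α = k + α - m + 1 by ring] at he
    have hne : (k : ℝ) + α - m + 1 ≠ 0 := by
      intro h0
      rw [h0, abs_zero] at he
      linarith
    have : (((k + 1 : ℕ) : ℝ) + α - m + 1) = (k + α - m + 1) + 1 := by push_cast; ring
    rw [this, Real.Gamma_add_one hne, mul_inv, abs_mul, abs_inv (_ + _)]
    gcongr
  intro k
  have hM0 : 0 ≤ M := (abs_nonneg _).trans (le_max_left _ _)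
  have main : ∀ k : ℕ, |betaB (α + γ + ((k + 1 : ℕ) : ℝ) + 1) (β + m + 1) /
      Real.Gamma (((k + 1 : ℕ) : ℝ) + α - m + 1)| ≤
        M * η⁻¹ ^ (k + 1) * (Real.Gamma (β + m + 1) * Real.Gamma (m - α) /
          Real.Gamma (α + γ + β + m + 2)) := by
    intro k
    induction k with
    | zero =>
      have hs := (hstep 0).trans (mul_le_mul_of_nonneg_left (b := |(Real.Gamma ((0 : ℕ) + α - m + 1))⁻¹|) (c := Real.Gamma (m - α)) (by simpa using hr) (by positivity))
      rw [div_eq_mul_inv, abs_mul]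
      have hb : |betaB (α + γ + ((0 + 1 : ℕ) : ℝ) + 1) (β + m + 1)| ≤
          M * Real.Gamma (β + m + 1) / Real.Gamma (α + γ + β + m + 2) := by
        unfold betaB
        rw [show α + γ + ((0 + 1 : ℕ) : ℝ) + 1 = α + γ + 2 by push_cast; ring,
          show α + γ + 2 + (β + m + 1) = (α + γ + β + m + 2) + 1 by ring,
          Real.Gamma_add_one (s := α + γ + β + m + 2) (by linarith), abs_div, abs_mul, abs_of_pos g2, abs_mul,
          abs_of_pos g5]
        apply div_le_div₀ (by positivity) (by gcongr; exact le_max_right _ _) g5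
        apply le_mul_of_one_le_left g5.le
        rw [abs_of_pos (by linarith)]; linarith
      calc _ ≤ (M * Real.Gamma (β + m + 1) / Real.Gamma (α + γ + β + m + 2)) *
            (η⁻¹ * Real.Gamma (m - α)) := by gcongr
        _ = _ := by ring
    | succ k ih =>
      rw [div_eq_mul_inv, abs_mul] at ih ⊢
      have hb : |betaB (α + γ + ((k + 1 + 1 : ℕ) : ℝ) + 1) (β + m + 1)| ≤
          |betaB (α + γ + ((k + 1 : ℕ) : ℝ) + 1) (β + m + 1)| := by
        unfold betaB
        have hk : (0 : ℝ) ≤ k := k.cast_nonneg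
        have ex : α + γ + ((k + 1 + 1 : ℕ) : ℝ) + 1 = (α + γ + ((k + 1 : ℕ) : ℝ) + 1) + 1 := by
          push_cast; ring
        have hx : 0 < α + γ + ((k + 1 : ℕ) : ℝ) + 1 := by push_cast; linarith
        rw [ex]
        generalize α + γ + ((k + 1 : ℕ) : ℝ) + 1 = x at *
        have hy : 0 < β + m + 1 := by linarith
        have hg1 := Real.Gamma_pos_of_pos hx
        have hg2 := Real.Gamma_pos_of_pos (add_pos hx hy)
        rw [show x + 1 + (β + m + 1) = (x + (β + m + 1)) + 1 by ring,
          Real.Gamma_add_one hx.ne', Real.Gamma_add_one (s := x + (β + m + 1)) (by positivity)]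
        rw [abs_of_pos (by positivity), abs_of_pos (by positivity), div_le_div_iff₀ (by positivity) (by positivity)]
        have : x * (Real.Gamma x * Real.Gamma (β + m + 1) * Real.Gamma (x + (β + m + 1))) ≤
          (x + (β + m + 1)) * (Real.Gamma x * Real.Gamma (β + m + 1) * Real.Gamma (x + (β + m + 1))) := by
          gcongr; linarith
        linarith
      calc _ ≤ _ * (η⁻¹ * |(Real.Gamma (((k + 1 : ℕ) : ℝ) + α - m + 1))⁻¹|) :=
            mul_le_mul hb (hstep (k + 1)) (abs_nonneg _) (abs_nonneg _)
        _ = η⁻¹ * (|betaB (α + γ + ((k + 1 : ℕ) : ℝ) + 1) (β + m + 1)| *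
            |(Real.Gamma (((k + 1 : ℕ) : ℝ) + α - m + 1))⁻¹|) := by ring
        _ ≤ η⁻¹ * _ := mul_le_mul_of_nonneg_left ih (by positivity)
        _ = _ := by ring
  rcases k with _ | k
  · rw [div_eq_mul_inv, abs_mul]
    have hb : |betaB (α + γ + ((0 : ℕ) : ℝ) + 1) (β + m + 1)| ≤
          M * Real.Gamma (β + m + 1) / Real.Gamma (α + γ + β + m + 2) := by
      unfold betaB
      rw [show α + γ + ((0 : ℕ) : ℝ) + 1 = α + γ + 1 by push_cast; ring,
        show α + γ + 1 + (β + m + 1) = (α + γ + β + m + 2) by ring,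
        abs_div, abs_mul, abs_of_pos g2, abs_of_pos g5]
      gcongr; exact le_max_left _ _
    calc _ ≤ (M * Real.Gamma (β + m + 1) / Real.Gamma (α + γ + β + m + 2)) *
            (Real.Gamma (m - α)) := by
            apply mul_le_mul hb _ (abs_nonneg _) (by positivity)
            simpa using hr
      _ = _ := by ring
  · exact main k

lemma aux_Gamma_lb (γ : ℝ) (hγ : γ ∈ Set.Icc (-(1 : ℝ) / 2) (1 / 2)) (i : ℕ) :
    Real.Gamma (γ + 1) / 2 ≤ Real.Gamma (γ + i + 1) := by
  obtain ⟨h1, h2⟩ := hγ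
  have hg : 0 < Real.Gamma (γ + 1) := Real.Gamma_pos_of_pos (by linarith)
  rcases i with _ | i
  · simp; linarith
  · induction i with
    | zero =>
      rw [show γ + ((0 + 1 : ℕ) : ℝ) + 1 = (γ + 1) + 1 by push_cast; ring,
        Real.Gamma_add_one (s := γ + 1) (by linarith)]
      nlinarith
    | succ i ih =>
      have hi : (0 : ℝ) ≤ i := i.cast_nonneg
      rw [show γ + ((i + 1 + 1 : ℕ) : ℝ) + 1 = (γ + ((i + 1 : ℕ) : ℝ) + 1) + 1 by push_cast; ring,
        Real.Gamma_add_one (s := γ + ((i + 1 : ℕ) : ℝ) + 1) (by push_cast; linarith)]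
      refine ih.trans (le_mul_of_one_le_left ?_ ?_)
      · linarith
      · push_cast; linarith

lemma aux_C (β γ : ℝ) (hβ : β ∈ Set.Icc (-(1 : ℝ) / 2) (1 / 2))
    (hγ : γ ∈ Set.Icc (-(1 : ℝ) / 2) (1 / 2)) :
    ∃ C : ℝ, 0 < C ∧ ∀ n k : ℕ, k ≤ n → |Ctilde γ β n k| ≤
      C * ((n + 1) * 4 ^ n * (Real.Gamma (n + β + 1) * Real.Gamma (n + γ + 1))) := by
  have lb := aux_Gamma_lb β hβ
  have lg := aux_Gamma_lb γ hγ
  obtain ⟨hβ1, hβ2⟩ := hβ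
  obtain ⟨hγ1, hγ2⟩ := hγ
  have hb : 0 < Real.Gamma (β + 1) / 2 := half_pos (Real.Gamma_pos_of_pos (by linarith))
  have hg : 0 < Real.Gamma (γ + 1) / 2 := half_pos (Real.Gamma_pos_of_pos (by linarith))
  set cb := Real.Gamma (β + 1) / 2
  set cg := Real.Gamma (γ + 1) / 2
  refine ⟨1 / (cb * cg), by positivity, fun n k hk => ?_⟩
  have hn : (0 : ℝ) ≤ n := n.cast_nonneg
  have gb : 0 < Real.Gamma (n + β + 1) := Real.Gamma_pos_of_pos (by linarith)
  have gg : 0 < Real.Gamma (n + γ + 1) := Real.Gamma_pos_of_pos (by linarith)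
  unfold Ctilde
  refine (Finset.abs_sum_le_sum_abs _ _).trans ?_
  have hterm : ∀ i ∈ Finset.range (k + 1),
      |(n.choose i : ℝ) * genBinom ((n : ℝ) + γ) (n - i) * genBinom ((n : ℝ) + β) i *
      (k.choose i : ℝ) * genBinom ((n : ℝ) - i) (k - i) * (i.factorial : ℝ)| ≤
      1 / (cb * cg) * (4 ^ n * (Real.Gamma (n + β + 1) * Real.Gamma (n + γ + 1))) := by
    intro i hi
    have hik : i ≤ k := by simpa [Nat.lt_succ_iff] using hi
    have hin : i ≤ n := hik.trans hk
    unfold genBinom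
    rw [Nat.cast_sub hin, Nat.cast_sub hik]
    have e1 : (n : ℝ) + γ - (n - i) + 1 = γ + i + 1 := by ring
    have e2 : (n : ℝ) + β - i + 1 = β + ((n - i : ℕ) : ℝ) + 1 := by
      rw [Nat.cast_sub hin]; ring
    have e3 : Real.Gamma ((n : ℝ) - i + 1) = ((n - i).factorial : ℝ) := by
      rw [← Nat.cast_sub hin, Real.Gamma_nat_eq_factorial]
    have e4 : Real.Gamma ((n : ℝ) - i - (k - i) + 1) = ((n - k).factorial : ℝ) := by
      rw [← Real.Gamma_nat_eq_factorial, Nat.cast_sub hk]; congr 1; ring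
    rw [e1, e2, e3, e4]
    have b1 := lg i
    have b2 := lb (n - i)
    have q1 : 0 < Real.Gamma (γ + i + 1) := hg.trans_le b1
    have q2 : 0 < Real.Gamma (β + ((n - i : ℕ) : ℝ) + 1) := hb.trans_le b2
    have f1 : (0 : ℝ) < (n - i).factorial := by exact_mod_cast Nat.factorial_pos _
    have f2 : (0 : ℝ) < i.factorial := by exact_mod_cast Nat.factorial_pos _
    have f3 : (1 : ℝ) ≤ (k - i).factorial := by exact_mod_cast Nat.factorial_pos _
    have f4 : (1 : ℝ) ≤ (n - k).factorial := by exact_mod_cast Nat.factorial_pos _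
    have c1 : (n.choose i : ℝ) ≤ 2 ^ n := by exact_mod_cast Nat.choose_le_two_pow n i
    have c2 : (k.choose i : ℝ) ≤ 2 ^ n := by
      exact_mod_cast (Nat.choose_le_two_pow k i).trans (Nat.pow_le_pow_right (by norm_num) hk)
    have f34 : (1 : ℝ) ≤ (k - i).factorial * (n - k).factorial := one_le_mul_of_one_le_of_one_le f3 f4
    rw [abs_of_nonneg (by positivity)]
    calc _ ≤ (2 : ℝ) ^ n * (Real.Gamma (n + γ + 1) / ((n - i).factorial * cg)) *
          (Real.Gamma (n + β + 1) / (i.factorial * cb)) * 2 ^ n *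
          ((n - i).factorial / 1) * i.factorial := by gcongr
      _ = _ := by
        rw [show (4 : ℝ) ^ n = 2 ^ n * 2 ^ n by rw [← mul_pow]; norm_num]
        field_simp
  refine (Finset.sum_le_card_nsmul _ _ _ hterm).trans ?_
  rw [Finset.card_range, nsmul_eq_mul]
  have : ((k + 1 : ℕ) : ℝ) ≤ n + 1 := by exact_mod_cast Nat.succ_le_succ hk
  calc _ ≤ ((n : ℝ) + 1) * (1 / (cb * cg) * (4 ^ n * (Real.Gamma (n + β + 1) * Real.Gamma (n + γ + 1)))) := by
        gcongr
    _ = _ := by ring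

lemma aux_fact_s6 (K : ℝ) (hK : 1 ≤ K) : ∃ C : ℝ, 0 < C ∧ ∀ n : ℕ,
    ((n : ℝ) + 1) ^ 2 * 4 ^ n * K ^ n ≤ C * (n.factorial / 4 ^ n) := by
  have h := FloorSemiring.tendsto_pow_div_factorial_atTop (64 * K)
  obtain ⟨B, hB⟩ := h.bddAbove_range
  refine ⟨max B 1, lt_max_of_lt_right one_pos, fun n => ?_⟩
  have h1 : (64 * K) ^ n / n.factorial ≤ max B 1 :=
    (hB (Set.mem_range_self n)).trans (le_max_left _ _)
  have hf : (0 : ℝ) < n.factorial := by exact_mod_cast Nat.factorial_pos _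
  rw [div_le_iff₀ hf] at h1
  rw [← mul_div_assoc, le_div_iff₀ (by positivity)]
  refine le_trans ?_ h1
  have h2 : (n : ℝ) + 1 ≤ 2 ^ n := by exact_mod_cast Nat.lt_two_pow_self
  calc _ ≤ ((2 : ℝ) ^ n) ^ 2 * 4 ^ n * K ^ n * 4 ^ n := by gcongr
    _ = _ := by
      rw [← pow_mul, mul_comm n 2, pow_mul, ← mul_pow, ← mul_pow, ← mul_pow]; congr 1; ring

lemma aux_A (α β γ : ℝ) (hβ : β ∈ Set.Icc (-(1 : ℝ) / 2) (1 / 2))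
    (hγ : γ ∈ Set.Icc (-(1 : ℝ) / 2) (1 / 2)) (hα : α ∈ Set.Ioo (-1 : ℝ) 0) :
    ∃ C : ℝ, 0 < C ∧ ∀ m : ℕ, 1 ≤ m → ∀ n : ℕ,
      |Acoef α γ β m n| ≤ C * (m : ℝ) ^ (-2 * α - γ - 3 / 2) * cCoef β γ n := by
  obtain ⟨C1, hC1, h1⟩ := aux_delta_V α β γ hβ hγ hα
  obtain ⟨C2, K, hC2, hK, h2⟩ := aux_U α β γ hβ hγ hα
  obtain ⟨C3, hC3, h3⟩ := aux_C β γ hβ hγ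
  obtain ⟨C4, hC4, h4⟩ := aux_fact_s6 K hK
  refine ⟨C1 * C2 * C3 * C4, by positivity, fun m hm n => ?_⟩
  specialize h1 m hm
  specialize h2 m hm
  specialize h3 n
  specialize h4 n
  obtain ⟨hβ1, hβ2⟩ := hβ
  obtain ⟨hγ1, hγ2⟩ := hγ
  obtain ⟨hα1, hα2⟩ := hα
  have hm1 : (1 : ℝ) ≤ m := by exact_mod_cast hm
  have hn : (0 : ℝ) ≤ n := n.cast_nonneg
  have gb : 0 < Real.Gamma (n + β + 1) := Real.Gamma_pos_of_pos (by linarith)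
  have gg : 0 < Real.Gamma (n + γ + 1) := Real.Gamma_pos_of_pos (by linarith)
  have g2 : 0 < Real.Gamma (β + m + 1) := Real.Gamma_pos_of_pos (by linarith)
  have g4 : 0 < Real.Gamma (m - α) := Real.Gamma_pos_of_pos (by linarith)
  have g5 : 0 < Real.Gamma (α + γ + β + m + 2) := Real.Gamma_pos_of_pos (by linarith)
  have d0 : ∀ j, 0 ≤ jacobiDelta γ β j := fun j => Real.sqrt_nonneg _
  have hsymm : jacobiDelta β γ n = jacobiDelta γ β n := by
    unfold jacobiDelta
    congr 1
    rw [add_comm β γ]; ring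
  unfold Acoef cCoef
  rw [hsymm, abs_mul, abs_mul, abs_of_nonneg (d0 m), abs_of_nonneg (d0 n)]
  set V := Real.Gamma (β + m + 1) * Real.Gamma (m - α) / Real.Gamma (α + γ + β + m + 2) with hV
  have hV0 : 0 < V := by positivity
  set G := Real.Gamma (n + β + 1) * Real.Gamma (n + γ + 1) with hG
  have hG0 : 0 < G := by positivity
  have hsum : |∑ k ∈ Finset.range (n + 1),
      (-1 : ℝ) ^ k * Ctilde γ β n k * betaB (α + γ + k + 1) (β + m + 1) /
        Real.Gamma ((k : ℝ) + α - m + 1)| ≤ C3 * C2 * G * V * (C4 * (n.factorial / 4 ^ n)) := by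
    refine (Finset.abs_sum_le_sum_abs _ _).trans ?_
    have hterm : ∀ k ∈ Finset.range (n + 1),
        |(-1 : ℝ) ^ k * Ctilde γ β n k * betaB (α + γ + k + 1) (β + m + 1) /
        Real.Gamma ((k : ℝ) + α - m + 1)| ≤
        (C3 * ((n + 1) * 4 ^ n * G)) * (C2 * K ^ n * V) := by
      intro k hk
      have hkn : k ≤ n := by simpa [Nat.lt_succ_iff] using hk
      rw [mul_div_assoc, abs_mul, abs_mul, abs_pow, abs_neg, abs_one, one_pow, one_mul]
      refine mul_le_mul (h3 k hkn) ((h2 k).trans ?_) (abs_nonneg _) (by positivity)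
      gcongr
    refine (Finset.sum_le_card_nsmul _ _ _ hterm).trans ?_
    rw [Finset.card_range, nsmul_eq_mul]
    push_cast
    calc _ = C3 * C2 * G * V * (((n : ℝ) + 1) ^ 2 * 4 ^ n * K ^ n) := by ring
      _ ≤ _ := by gcongr
  have dn := d0 n
  have dm := d0 m
  calc _ ≤ jacobiDelta γ β m * jacobiDelta γ β n * (C3 * C2 * G * V * (C4 * (n.factorial / 4 ^ n))) := by
        gcongr
    _ = (jacobiDelta γ β m * V) * (jacobiDelta γ β n * (C3 * C2 * G * (C4 * (n.factorial / 4 ^ n)))) := by ring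
    _ ≤ (C1 * (m : ℝ) ^ (-2 * α - γ - 3 / 2)) * (jacobiDelta γ β n * (C3 * C2 * G * (C4 * (n.factorial / 4 ^ n)))) := by
        gcongr
    _ = _ := by rw [hG]; ring

theorem stmt6 (α β γ : ℝ) (hβ : β ∈ Set.Icc (-(1 : ℝ) / 2) (1 / 2))
    (hγ : γ ∈ Set.Icc (-(1 : ℝ) / 2) (1 / 2)) (hα : α ∈ Set.Ioo (-1 : ℝ) 0)
    (f : ℕ → ℝ) (hf : Summable fun n : ℕ => |f n| * cCoef β γ n) :
    ∃ C : ℝ, 0 < C ∧ ∀ m : ℕ, 1 ≤ m →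
      Summable (fun n : ℕ => |f n * Acoef α γ β m n|) ∧
      (∑' n : ℕ, |f n * Acoef α γ β m n|) ≤ C * (m : ℝ) ^ (-2 * α - γ - 3 / 2) := by
  obtain ⟨C, hC, h⟩ := aux_A α β γ hβ hγ hα
  refine ⟨C * |∑' n, |f n| * cCoef β γ n| + 1, by positivity, fun m hm => ?_⟩
  have hm0 : (0 : ℝ) < m := by exact_mod_cast hm
  set P := (m : ℝ) ^ (-2 * α - γ - 3 / 2)
  have hP : 0 < P := Real.rpow_pos_of_pos hm0 _
  have hle : ∀ n, |f n * Acoef α γ β m n| ≤ C * P * (|f n| * cCoef β γ n) := by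
    intro n
    rw [abs_mul]
    calc _ ≤ |f n| * (C * P * cCoef β γ n) := by gcongr; exact h m hm n
      _ = _ := by ring
  have hs := hf.mul_left (C * P)
  have hS : Summable (fun n : ℕ => |f n * Acoef α γ β m n|) :=
    Summable.of_nonneg_of_le (fun _ => abs_nonneg _) hle hs
  refine ⟨hS, (hS.tsum_le_tsum hle hs).trans ?_⟩
  rw [tsum_mul_left]
  have := le_abs_self (∑' n, |f n| * cCoef β γ n)
  calc _ ≤ C * P * |∑' n, |f n| * cCoef β γ n| := by gcongr
    _ ≤ _ := by nlinarith
end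

section
/- For all real x > 1 and δ ∈ ℝ with x+δ > 1: Γ(x+δ)/Γ(x) < e^{-δ}·(1+δ/x)^{x+δ-1/2}·x^{ξ+δ-1/2}, where ξ is the Euler–Mascheroni constant; consequently, for each fixed δ, Γ(x+δ)/Γ(x) = O(x^{ξ+δ-1/2}) as x → ∞. -/
open Real MeasureTheory Set Filter

open Asymptotics


open Topology

noncomputable def gB (y : ℝ) : ℝ := (y + 1/2) * (log (y+1) - log y) - 1
noncomputable def muB (x : ℝ) : ℝ := log (Gamma x) - (x - 1/2) * log x + x
noncomputable def sB (n : ℕ) : ℝ := log (n.factorial) - (n + 1/2) * log n + n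
noncomputable def DB (y : ℝ) : ℝ := log (y+1) - log y - (1/2) * (y⁻¹ + (y+1)⁻¹)
noncomputable def RB (y : ℝ) : ℝ := DB y + (1/12) * ((y^2)⁻¹ - ((y+1)^2)⁻¹)

lemma logq_tendsto : Tendsto (fun y : ℝ => log (y+1) - log y) atTop (𝓝 0) := by
  have h1 : Tendsto (fun y : ℝ => log (1 + y⁻¹)) atTop (𝓝 0) := by
    have h2 : Tendsto (fun y : ℝ => 1 + y⁻¹) atTop (𝓝 (1 + 0)) :=
      tendsto_const_nhds.add tendsto_inv_atTop_zero
    have := (Real.continuousAt_log (x := 1 + 0) (by norm_num)).tendsto.comp h2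
    simpa [Function.comp_def] using this
  refine h1.congr' ?_
  filter_upwards [eventually_gt_atTop 0] with y hy
  rw [← log_div (by positivity) hy.ne']
  congr 1
  field_simp

lemma DB_tendsto : Tendsto DB atTop (𝓝 0) := by
  have h1 : Tendsto (fun y : ℝ => y⁻¹) atTop (𝓝 0) := tendsto_inv_atTop_zero
  have h2 : Tendsto (fun y : ℝ => (y+1)⁻¹) atTop (𝓝 0) :=
    tendsto_inv_atTop_zero.comp (tendsto_atTop_add_const_right _ _ tendsto_id)
  have := logq_tendsto.sub ((h1.add h2).const_mul (1/2))
  have e : DB = fun x => log (x + 1) - log x - (1/2) * (x⁻¹ + (x + 1)⁻¹) := rfl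
  rw [e]
  simpa using this

lemma RB_tendsto : Tendsto RB atTop (𝓝 0) := by
  have h1 : Tendsto (fun y : ℝ => y⁻¹) atTop (𝓝 0) := tendsto_inv_atTop_zero
  have h2 : Tendsto (fun y : ℝ => (y+1)⁻¹) atTop (𝓝 0) :=
    tendsto_inv_atTop_zero.comp (tendsto_atTop_add_const_right _ _ tendsto_id)
  have := DB_tendsto.add (((h1.pow 2).sub (h2.pow 2)).const_mul (1/12))
  have e : RB = fun y => DB y + (1/12) * ((y^2)⁻¹ - ((y+1)^2)⁻¹) := rfl
  rw [e]
  simpa [inv_pow] using this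

lemma logq_hasDeriv {y : ℝ} (hy : 0 < y) :
    HasDerivAt (fun y : ℝ => log (y+1) - log y) ((y+1)⁻¹ - y⁻¹) y := by
  have h1 : HasDerivAt (fun y : ℝ => log (y+1)) ((y+1)⁻¹) y := by
    simpa using (((hasDerivAt_id y).add_const 1).log (by simp; positivity))
  exact h1.sub (Real.hasDerivAt_log hy.ne')

lemma inv1_hasDeriv {y : ℝ} (hy : 0 < y) :
    HasDerivAt (fun y : ℝ => (y+1)⁻¹) (-((y+1)^2)⁻¹) y := by
  have := ((hasDerivAt_id y).add_const 1).inv (by simp; positivity)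
  refine this.congr_deriv ?_
  simp [neg_div]

lemma DB_hasDeriv {y : ℝ} (hy : 0 < y) :
    HasDerivAt DB (1/(2*y^2*(y+1)^2)) y := by
  have := (logq_hasDeriv hy).sub (((hasDerivAt_inv hy.ne').add (inv1_hasDeriv hy)).const_mul (1/2))
  refine this.congr_deriv ?_
  field_simp
  ring

lemma RB_hasDeriv {y : ℝ} (hy : 0 < y) :
    HasDerivAt RB (-1/(6*y^3*(y+1)^3)) y := by
  have a := ((hasDerivAt_inv hy.ne').pow 2)
  have b := ((inv1_hasDeriv hy).pow 2)
  have := (DB_hasDeriv hy).add ((a.sub b).const_mul (1/12))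
  have h2 : RB = (DB + fun y => (1/12) * (((fun y:ℝ => y⁻¹) ^ 2) y - ((fun y:ℝ => (y+1)⁻¹)^2) y)) := by
    funext z; simp [RB]
  rw [h2]
  refine this.congr_deriv ?_
  norm_num
  field_simp
  ring

lemma gB_hasDeriv {y : ℝ} (hy : 0 < y) : HasDerivAt gB (DB y) y := by
  have := (((hasDerivAt_id y).add_const (1/2)).mul (logq_hasDeriv hy)).sub_const 1
  refine this.congr_deriv ?_
  simp only [DB, id]
  field_simp
  ring

lemma DB_mono : StrictMonoOn DB (Ioi 0) := by
  refine strictMonoOn_of_hasDerivWithinAt_pos (convex_Ioi 0)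
    (fun y hy => (DB_hasDeriv hy).continuousAt.continuousWithinAt)
    (f' := fun y => 1/(2*y^2*(y+1)^2)) ?_ ?_ <;> rw [interior_Ioi]
  · exact fun y hy => (DB_hasDeriv hy).hasDerivWithinAt
  · intro y hy
    have : 0 < y := hy
    positivity

lemma RB_anti : AntitoneOn RB (Ioi 0) := by
  refine antitoneOn_of_hasDerivWithinAt_nonpos (convex_Ioi 0)
    (fun y hy => (RB_hasDeriv hy).continuousAt.continuousWithinAt)
    (f' := fun y => -1/(6*y^3*(y+1)^3)) ?_ ?_ <;> rw [interior_Ioi]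
  · exact fun y hy => (RB_hasDeriv hy).hasDerivWithinAt
  · intro y hy
    have : 0 < y := hy
    exact div_nonpos_of_nonpos_of_nonneg (by norm_num) (by positivity)

lemma DB_neg {y : ℝ} (hy : 0 < y) : DB y < 0 := by
  have h1 : DB y < DB (y+1) := DB_mono hy (by show 0 < y + 1; positivity) (by linarith)
  have h2 : DB (y+1) ≤ 0 := by
    refine ge_of_tendsto DB_tendsto ?_
    filter_upwards [eventually_ge_atTop (y+1)] with z hz
    exact DB_mono.monotoneOn (by show 0 < y + 1; positivity) (by show 0 < z; linarith) hz
  linarith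

lemma RB_nonneg {y : ℝ} (hy : 0 < y) : 0 ≤ RB y := by
  refine le_of_tendsto RB_tendsto ?_
  filter_upwards [eventually_ge_atTop y] with z hz
  exact RB_anti hy (by show 0 < z; linarith) hz

lemma gB_anti : StrictAntiOn gB (Ioi 0) := by
  refine strictAntiOn_of_hasDerivWithinAt_neg (convex_Ioi 0)
    (fun y hy => (gB_hasDeriv hy).continuousAt.continuousWithinAt)
    (f' := DB) ?_ ?_ <;> rw [interior_Ioi]
  · exact fun y hy => (gB_hasDeriv hy).hasDerivWithinAt
  · exact fun y hy => DB_neg hy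

lemma rB_mono : MonotoneOn (fun y => gB y - (1/12) * (y⁻¹ - (y+1)⁻¹)) (Ioi 0) := by
  have hd : ∀ y : ℝ, 0 < y → HasDerivAt (fun y => gB y - (1/12) * (y⁻¹ - (y+1)⁻¹)) (RB y) y := by
    intro y hy
    have := (gB_hasDeriv hy).sub (((hasDerivAt_inv hy.ne').sub (inv1_hasDeriv hy)).const_mul (1/12))
    refine this.congr_deriv ?_
    rw [RB]; ring
  refine monotoneOn_of_hasDerivWithinAt_nonneg (convex_Ioi 0)
    (fun y hy => (hd y hy).continuousAt.continuousWithinAt)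
    (f' := RB) ?_ ?_ <;> rw [interior_Ioi]
  · exact fun y hy => (hd y hy).hasDerivWithinAt
  · exact fun y hy => RB_nonneg hy

lemma gB_convex : ConvexOn ℝ (Ioi 0) gB := by
  refine convexOn_of_hasDerivWithinAt2_nonneg (convex_Ioi 0)
    (fun y hy => (gB_hasDeriv hy).continuousAt.continuousWithinAt)
    (f' := DB) (f'' := fun y => 1/(2*y^2*(y+1)^2)) ?_ ?_ ?_ <;> rw [interior_Ioi]
  · exact fun y hy => (gB_hasDeriv hy).hasDerivWithinAt
  · exact fun y hy => (DB_hasDeriv hy).hasDerivWithinAt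
  · intro y hy
    have : 0 < y := hy
    positivity

lemma sum_gB (x : ℝ) (n : ℕ) : ∑ k ∈ Finset.range n, gB (x + k) =
    (x + n - 1/2) * log (x + n) - (x - 1/2) * log x
      - ∑ k ∈ Finset.range n, log (x + k) - n := by
  induction n with
  | zero => simp
  | succ n ih =>
    rw [Finset.sum_range_succ, Finset.sum_range_succ, ih, gB]
    push_cast
    rw [← add_assoc]
    ring

lemma mu_tendsto {x : ℝ} (hx : 0 < x) :
    Tendsto (fun n : ℕ => sB n + ∑ k ∈ Finset.range (n+1), gB (x + k)) atTop (𝓝 (muB x)) := by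
  have h1 := Real.BohrMollerup.tendsto_log_gamma hx
  have h2 : Tendsto (fun n : ℕ => (n:ℝ) * log (1 + (x+1)/n)) atTop (𝓝 (x+1)) :=
    (Real.tendsto_mul_log_one_add_div_atTop (x+1)).comp tendsto_natCast_atTop_atTop
  have h3 : Tendsto (fun n : ℕ => log (1 + (x+1)/n)) atTop (𝓝 0) := by
    have h4 : Tendsto (fun n : ℕ => 1 + (x+1)/(n:ℝ)) atTop (𝓝 (1 + 0)) :=
      tendsto_const_nhds.add (tendsto_const_div_atTop_nhds_zero_nat (x+1))
    have := (Real.continuousAt_log (x := 1 + 0) (by norm_num)).tendsto.comp h4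
    simpa [Function.comp_def] using this
  have h5 := ((h1.sub_const ((x-1/2) * log x)).add_const x).add
    ((h2.add (h3.const_mul (x+1/2))).sub_const (x+1))
  have e : log (Gamma x) - (x-1/2) * log x + x + (x + 1 + (x+1/2)*0 - (x+1)) = muB x := by
    rw [muB]; ring
  rw [e] at h5
  refine h5.congr' ?_
  filter_upwards [eventually_gt_atTop 0] with n hn
  have hn' : (0:ℝ) < n := by exact_mod_cast hn
  have e2 : log (1 + (x+1)/n) = log (x + n + 1) - log n := by
    rw [← log_div (by positivity) hn'.ne']
    congr 1
    field_simp
    ring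
  rw [sum_gB, e2, sB, Real.BohrMollerup.logGammaSeq]
  push_cast
  rw [← add_assoc]
  ring

lemma mu_anti {x y : ℝ} (hx : 0 < x) (hxy : x ≤ y) : muB y ≤ muB x := by
  have hy : 0 < y := hx.trans_le hxy
  refine le_of_tendsto_of_tendsto' (mu_tendsto hy) (mu_tendsto hx) fun n => ?_
  gcongr with k _
  exact gB_anti.antitoneOn (by show 0 < x + k; positivity) (by show 0 < y + k; positivity) (by linarith)

lemma mu_convex : ConvexOn ℝ (Ioi 0) muB := by
  refine ⟨convex_Ioi 0, fun x hx y hy a b ha hb hab => ?_⟩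
  have hx' : 0 < x := hx
  have hy' : 0 < y := hy
  have hz : 0 < a • x + b • y := (convex_Ioi 0) hx hy ha hb hab
  refine le_of_tendsto_of_tendsto' (mu_tendsto hz)
    (((mu_tendsto hx').const_smul a).add ((mu_tendsto hy').const_smul b)) fun n => ?_
  simp only [smul_eq_mul, mul_add, Finset.mul_sum]
  have : ∑ k ∈ Finset.range (n+1), gB (a * x + b * y + k) ≤
      ∑ k ∈ Finset.range (n+1), (a * gB (x + k) + b * gB (y+k)) := by
    refine Finset.sum_le_sum fun k _ => ?_
    have h := gB_convex.2 (show x + k ∈ Ioi (0:ℝ) by show 0 < x + k; positivity)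
      (show y + k ∈ Ioi (0:ℝ) by show 0 < y + k; positivity) ha hb hab
    simp only [smul_eq_mul] at h
    have e : a * (x + k) + b * (y + k) = a * x + b * y + k := by
      linear_combination (k:ℝ) * hab
    rwa [e] at h
  rw [Finset.sum_add_distrib] at this
  have e : sB n = a * sB n + b * sB n := by linear_combination (-sB n) * hab
  linarith

lemma mu_sub_mono {x y : ℝ} (hx : 0 < x) (hxy : x ≤ y) :
    muB x - (1/12) * x⁻¹ ≤ muB y - (1/12) * y⁻¹ := by
  have hy : 0 < y := hx.trans_le hxy
  have key : ∀ z : ℝ, 0 < z → Tendsto (fun n : ℕ => sB n + ∑ k ∈ Finset.range (n+1),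
      (gB (z + k) - (1/12) * ((z+k)⁻¹ - (z+k+1)⁻¹))) atTop (𝓝 (muB z - (1/12) * z⁻¹)) := by
    intro z hz
    have h1 : Tendsto (fun n : ℕ => (z + ((n+1 : ℕ):ℝ))⁻¹) atTop (𝓝 0) :=
      tendsto_inv_atTop_zero.comp (tendsto_atTop_add_const_left _ _
        (tendsto_natCast_atTop_atTop.comp (tendsto_add_atTop_nat 1)))
    have h2 := (mu_tendsto hz).sub ((tendsto_const_nhds (x := z⁻¹)).sub h1 |>.const_mul (1/12))
    rw [sub_zero] at h2
    refine h2.congr fun n => ?_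
    have : ∑ k ∈ Finset.range (n+1), ((z+k)⁻¹ - (z+k+1)⁻¹) = z⁻¹ - (z + ((n+1:ℕ):ℝ))⁻¹ := by
      have := Finset.sum_range_sub' (fun k : ℕ => (z + (k:ℝ))⁻¹) (n+1)
      simpa [add_assoc] using this
    rw [Finset.sum_sub_distrib, ← Finset.mul_sum, this]
    ring
  refine le_of_tendsto_of_tendsto' (key x hx) (key y hy) fun n => ?_
  refine add_le_add le_rfl ?_
  refine Finset.sum_le_sum fun k _ => ?_
  exact rB_mono (by show 0 < x + k; positivity) (by show 0 < y + k; positivity) (by linarith)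

lemma mu_step {x : ℝ} (hx : 0 < x) : muB x = muB (x+1) + gB x := by
  rw [muB, muB, gB, Gamma_add_one hx.ne', log_mul hx.ne' (Gamma_pos_of_pos hx).ne']
  ring

lemma mu_one : muB 1 = 1 := by simp [muB]

lemma mu_lt {x : ℝ} (hx : 1 < x) : muB x < 1 := by
  have h0 : (0:ℝ) < x := by linarith
  rw [← mu_one, mu_step h0, mu_step one_pos]
  have h1 : muB (x+1) ≤ muB (1+1) := mu_anti (by norm_num) (by linarith)
  have h2 : gB x < gB 1 := gB_anti (by simp) h0 hx
  linarith

lemma xi_lower : (0.5642:ℝ) < eulerMascheroniConstant := by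
  refine lt_trans ?_ (eulerMascheroniSeq_lt_eulerMascheroniConstant 63)
  have h : log ((63:ℕ) + 1) = 6 * log 2 := by
    rw [show (((63:ℕ):ℝ)+1) = 2^6 by norm_num, log_pow]; norm_num
  rw [eulerMascheroniSeq, h]
  have h2 : (4.7231:ℝ) < ((harmonic 63 : ℚ) : ℝ) := by
    have : (4.7231:ℚ) < harmonic 63 := by
      rw [harmonic]; norm_num [Finset.sum_range_succ]
    have h3 : (((4.7231:ℚ)):ℝ) < ((harmonic 63 : ℚ) : ℝ) := by exact_mod_cast this
    norm_num at h3 ⊢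
    try exact h3
  linarith [log_two_lt_d9]

lemma xi_upper : eulerMascheroniConstant < (0.5857:ℝ) := by
  refine lt_trans (eulerMascheroniConstant_lt_eulerMascheroniSeq' 64) ?_
  have h : log ((64:ℕ):ℝ) = 6 * log 2 := by
    rw [show (((64:ℕ):ℝ)) = 2^6 by norm_num, log_pow]; norm_num
  rw [eulerMascheroniSeq', if_neg (by norm_num), h]
  have h2 : ((harmonic 64 : ℚ) : ℝ) < (4.744:ℝ) := by
    have : harmonic 64 < (4.744:ℚ) := by
      rw [harmonic]; norm_num [Finset.sum_range_succ]
    have h3 : ((harmonic 64 : ℚ) : ℝ) < (((4.744:ℚ)):ℝ) := by exact_mod_cast this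
    norm_num at h3 ⊢
    try exact h3
  linarith [log_two_gt_d9]

local notation "ξ" => eulerMascheroniConstant

noncomputable def VB (x : ℝ) : ℝ := muB x + (ξ - 1/2) * log x - 1

lemma VB_one : VB 1 = 0 := by simp [VB, mu_one]

lemma VB_hasDeriv_one : HasDerivAt VB 0 1 := by
  have h1 := Real.hasDerivAt_Gamma_one.log (by simp)
  have h2 := ((hasDerivAt_id (1:ℝ)).sub_const (1/2)).mul (Real.hasDerivAt_log (x := 1) (by norm_num))
  have h3 := (((h1.sub h2).add (hasDerivAt_id (1:ℝ))).add
    ((Real.hasDerivAt_log (x := 1) (by norm_num)).const_mul (ξ - 1/2))).sub_const 1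
  refine h3.congr_deriv ?_
  simp
  ring

lemma K_convex : ConvexOn ℝ (Icc 1 1.3)
    (fun x => gB x + (ξ - 1/2) * log x - (1/1000) * (x-1)^2) := by
  have hd : ∀ y : ℝ, 0 < y → HasDerivAt (fun x => gB x + (ξ - 1/2) * log x - (1/1000) * (x-1)^2)
      (DB y + (ξ - 1/2) * y⁻¹ - (1/500) * (y-1)) y := by
    intro y hy
    have := ((gB_hasDeriv hy).add ((Real.hasDerivAt_log hy.ne').const_mul (ξ - 1/2))).sub
      ((((hasDerivAt_id y).sub_const 1).pow 2).const_mul (1/1000))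
    refine this.congr_deriv ?_
    simp
    ring
  have hd2 : ∀ y : ℝ, 0 < y → HasDerivAt (fun y => DB y + (ξ - 1/2) * y⁻¹ - (1/500) * (y-1))
      (1/(2*y^2*(y+1)^2) + (ξ - 1/2) * (-(y^2)⁻¹) - (1/500)) y := by
    intro y hy
    have := ((DB_hasDeriv hy).add ((hasDerivAt_inv hy.ne').const_mul (ξ - 1/2))).sub
      (((hasDerivAt_id y).sub_const 1).const_mul (1/500))
    refine this.congr_deriv ?_
    simp
  refine convexOn_of_hasDerivWithinAt2_nonneg (convex_Icc _ _)
    (fun y hy => (hd y (by linarith [hy.1])).continuousAt.continuousWithinAt)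
    (f' := fun y => DB y + (ξ - 1/2) * y⁻¹ - (1/500) * (y-1))
    (f'' := fun y => 1/(2*y^2*(y+1)^2) + (ξ - 1/2) * (-(y^2)⁻¹) - (1/500)) ?_ ?_ ?_ <;>
    rw [interior_Icc]
  · exact fun y hy => (hd y (by linarith [hy.1])).hasDerivWithinAt
  · exact fun y hy => (hd2 y (by linarith [hy.1])).hasDerivWithinAt
  · rintro y ⟨h1, h2⟩
    have hy : 0 < y := by linarith
    have e : 1/(2*y^2*(y+1)^2) + (ξ - 1/2) * (-(y^2)⁻¹) - (1/500) =
      (1/(2*(y+1)^2) - (ξ - 1/2) - y^2/500) / y^2 := by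
      field_simp
      ring
    show 0 ≤ 1/(2*y^2*(y+1)^2) + (ξ - 1/2) * (-(y^2)⁻¹) - (1/500)
    rw [e]
    refine div_nonneg ?_ (by positivity)
    have h3 : 1/(2*(1.3+1)^2) ≤ 1/(2*(y+1)^2) := by gcongr
    have h4 : y^2 ≤ 1.3^2 := by gcongr
    have := xi_upper
    norm_num at h3 h4 this ⊢
    linarith

lemma VB_pos_small {x : ℝ} (h1 : 1 < x) (h2 : x ≤ 1.3) : 0 < VB x := by
  have hc : ConvexOn ℝ (Icc 1 1.3) (fun x => VB x - (1/1000) * (x-1)^2) := by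
    have ha : ConvexOn ℝ (Icc 1 1.3) (fun x => muB (x+1)) := by
      have := (mu_convex.translate_left 1).subset (s := Icc 1 1.3) ?_ (convex_Icc _ _)
      · exact this
      · intro z hz
        show 0 < 1 + z
        linarith [hz.1]
    refine ((ha.add K_convex).add_const (-1)).congr ?_
    intro z hz
    simp only [Pi.add_apply, VB]
    rw [mu_step (by linarith [hz.1] : 0 < z)]
    ring
  have hd : HasDerivAt (fun x => VB x - (1/1000) * (x-1)^2) 0 1 := by
    have := VB_hasDeriv_one.sub ((((hasDerivAt_id (1:ℝ)).sub_const 1).pow 2).const_mul (1/1000))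
    refine this.congr_deriv ?_
    simp
  have := hc.le_slope_of_hasDerivAt (by norm_num) ⟨h1.le, h2⟩ h1 hd
  rw [slope_def_field, VB_one, le_div_iff₀ (by linarith)] at this
  have : 0 < (x-1)^2 := by have : 0 < x - 1 := by linarith
                           positivity
  norm_num at *
  linarith

lemma VB_mono {x y : ℝ} (hx : 1.3 ≤ x) (hxy : x ≤ y) : VB x ≤ VB y := by
  have h0 : (0:ℝ) < x := by norm_num at hx; linarith
  have h1 := mu_sub_mono h0 hxy
  have h2 : MonotoneOn (fun z => (ξ - 1/2) * log z + (1/12) * z⁻¹) (Ici 1.3) := by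
    have hd : ∀ z : ℝ, 0 < z → HasDerivAt (fun z => (ξ - 1/2) * log z + (1/12) * z⁻¹)
        ((ξ - 1/2) * z⁻¹ + (1/12) * (-(z^2)⁻¹)) z := fun z hz =>
      ((Real.hasDerivAt_log hz.ne').const_mul _).add ((hasDerivAt_inv hz.ne').const_mul _)
    have hp : ∀ z : ℝ, z ∈ Ici (1.3:ℝ) → 0 < z := by
      intro z hz
      have : (1.3:ℝ) ≤ z := hz
      norm_num at this; linarith
    refine monotoneOn_of_hasDerivWithinAt_nonneg (convex_Ici _)
      (fun y hy => (hd y (hp y hy)).continuousAt.continuousWithinAt)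
      (f' := fun z => (ξ - 1/2) * z⁻¹ + (1/12) * (-(z^2)⁻¹)) ?_ ?_
    · exact fun y hy => (hd y (hp y (interior_subset hy))).hasDerivWithinAt
    · intro z hz
      have hz1 : (1.3:ℝ) ≤ z := interior_subset hz
      have hz0 := hp z hz1
      have e : (ξ - 1/2) * z⁻¹ + (1/12) * (-(z^2)⁻¹) = ((ξ - 1/2) * z - 1/12) / z^2 := by
        field_simp
        ring
      show 0 ≤ (ξ - 1/2) * z⁻¹ + (1/12) * (-(z^2)⁻¹)
      rw [e]
      refine div_nonneg ?_ (by positivity)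
      have := xi_lower
      norm_num at this hz1
      nlinarith
  have h3 := h2 hx (show (1.3:ℝ) ≤ y from hx.trans hxy) hxy
  simp only [VB] at h3 ⊢
  linarith

lemma VB_pos {x : ℝ} (h1 : 1 < x) : 0 < VB x := by
  rcases le_total x 1.3 with h | h
  · exact VB_pos_small h1 h
  · exact (VB_pos_small (by norm_num) le_rfl).trans_le (VB_mono le_rfl h)

lemma main_ineq (x δ : ℝ) (hx : 1 < x) (hxd : 1 < x + δ) :
      Real.Gamma (x + δ) / Real.Gamma x <
        Real.exp (-δ) * (1 + δ / x) ^ (x + δ - 1 / 2) *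
          x ^ (Real.eulerMascheroniConstant + δ - 1 / 2) := by
  have hx0 : 0 < x := by linarith
  have hd0 : 0 < x + δ := by linarith
  have e : 1 + δ / x = (x + δ) / x := by field_simp
  have hp : 0 < (x + δ) / x := by positivity
  have hG1 := Gamma_pos_of_pos hx0
  have hG2 := Gamma_pos_of_pos hd0
  rw [e, ← Real.log_lt_log_iff (by positivity) (by positivity), log_div hG2.ne' hG1.ne',
    log_mul (by positivity) (by positivity), log_mul (by positivity) (by positivity),
    log_exp, log_rpow hp, log_rpow hx0, log_div hd0.ne' hx0.ne']
  have h1 := mu_lt hxd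
  have h2 := VB_pos hx
  simp only [VB, muB] at h1 h2
  nlinarith

theorem stmt8 :
    (∀ x δ : ℝ, 1 < x → 1 < x + δ →
      Real.Gamma (x + δ) / Real.Gamma x <
        Real.exp (-δ) * (1 + δ / x) ^ (x + δ - 1 / 2) *
          x ^ (Real.eulerMascheroniConstant + δ - 1 / 2)) ∧
    ∀ δ : ℝ, (fun x : ℝ => Real.Gamma (x + δ) / Real.Gamma x) =O[atTop]
      fun x : ℝ => x ^ (Real.eulerMascheroniConstant + δ - 1 / 2) := by
  refine ⟨main_ineq, fun δ => ?_⟩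
  have h0 : Tendsto (fun x : ℝ => 1 + δ / x) atTop (𝓝 (1 + 0)) :=
    tendsto_const_nhds.add (tendsto_const_nhds.div_atTop tendsto_id)
  rw [add_zero] at h0
  have h1 := Real.tendsto_one_add_div_rpow_exp δ
  have h2 : Tendsto (fun x : ℝ => (1 + δ / x) ^ (δ - 1/2)) atTop (𝓝 (1 ^ (δ - 1/2))) :=
    h0.rpow_const (Or.inl one_ne_zero)
  have h3 := ((h1.mul h2).const_mul (exp (-δ))).isBigO_one ℝ
  have h4 := h3.mul (isBigO_refl (fun x : ℝ => x ^ (Real.eulerMascheroniConstant + δ - 1 / 2)) atTop)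
  simp only [one_mul] at h4
  refine IsBigO.trans (IsBigO.of_bound 1 ?_) h4
  filter_upwards [eventually_gt_atTop 1, eventually_gt_atTop (1 - δ)] with x hx hxd
  have hx0 : 0 < x := by linarith
  have hd0 : 0 < x + δ := by linarith
  have e : 1 + δ / x = (x + δ) / x := by field_simp
  have hp : 0 < 1 + δ / x := by rw [e]; positivity
  have h := main_ineq x δ hx (by linarith)
  have hG1 := Gamma_pos_of_pos hx0
  have hG2 := Gamma_pos_of_pos hd0
  rw [← Real.rpow_add hp, show x + (δ - 1/2) = x + δ - 1/2 by ring, one_mul,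
    Real.norm_of_nonneg (by positivity), Real.norm_of_nonneg (by positivity)]
  exact h.le
end
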